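/- Let d ≥ 2 and 2(d+1)/(d−1) ≤ q ≤ ∞. Then there is a constant C such that for all j ≥ 0 and all f ∈ L^2(ℝ^d), ‖𝒜_j f‖_{L^q(L^2)} ≤ C 2^{−jd/q} ‖f‖_{L^2(ℝ^d)}. -/

import Mathlib

open MeasureTheory Metric Set
open scoped ENNReal NNReal FourierTransform

noncomputable section

/-- Euclidean `d`-space. -/
abbrev Euc (d : ℕ) : Type := EuclideanSpace ℝ (Fin d)

/-- The normalized surface measure `σ` on the unit sphere `S^{d-1} ⊆ ℝ^d`. -/
def sphereMeasure (d : ℕ) : Measure (Euc d) :=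
  (((volume : Measure (Euc d)).toSphere Set.univ)⁻¹ : ℝ≥0∞) •
    ((volume : Measure (Euc d)).toSphere.map Subtype.val)

/-- The spherical average `A_t f(x) = ∫_{S^{d-1}} f(x - t y) dσ(y)`. -/
def sphAvg {d : ℕ} (f : Euc d → ℂ) (t : ℝ) (x : Euc d) : ℂ :=
  ∫ y, f (x - t • y) ∂(sphereMeasure d)

/-- The dyadic symbols `β_j` built from the bump `β₀`:
`β_j(s) = β₀(2^{-j} s) - β₀(2^{1-j} s)` for `j ≥ 1`. -/
def betaJ (β₀ : ℝ → ℝ) : ℕ → ℝ → ℝ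
  | 0 => β₀
  | (j + 1) => fun s => β₀ ((2 : ℝ) ^ (-(j + 1 : ℤ)) * s) - β₀ ((2 : ℝ) ^ (-(j : ℤ)) * s)

/-- The frequency localization `L_j` with symbol `β_j(|ξ|)`. -/
def freqLoc (d : ℕ) (β₀ : ℝ → ℝ) (j : ℕ) (f : Euc d → ℂ) : Euc d → ℂ :=
  𝓕⁻ (fun ξ => (betaJ β₀ j ‖ξ‖ : ℂ) * 𝓕 f ξ)

/-- `χ` is an admissible time cutoff: smooth, `χ = 1` on a neighborhood of `[1,2]`,
supported in `[1/2,4]`. -/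
def IsCutoff (χ : ℝ → ℝ) : Prop :=
  ContDiff ℝ (⊤ : ℕ∞) χ ∧ (∃ U : Set ℝ, IsOpen U ∧ Set.Icc 1 2 ⊆ U ∧ Set.EqOn χ 1 U) ∧
    Function.support χ ⊆ Set.Icc (1 / 2 : ℝ) 4

/-- `β₀` is an admissible frequency bump: smooth, `β₀(s) = 1` for `|s| < 1/2` and
`β₀(s) = 0` for `|s| > 1`. -/
def IsBump (β₀ : ℝ → ℝ) : Prop :=
  ContDiff ℝ (⊤ : ℕ∞) β₀ ∧ (∀ s : ℝ, |s| < 1 / 2 → β₀ s = 1) ∧ ∀ s : ℝ, 1 < |s| → β₀ s = 0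

/-- The frequency-localized operator `𝒜_j f(x,t) = χ(t) A_t L_j f(x)`. -/
def Aj (d : ℕ) (χ β₀ : ℝ → ℝ) (j : ℕ) (f : Euc d → ℂ) (x : Euc d) (t : ℝ) : ℂ :=
  (χ t : ℂ) * sphAvg (freqLoc d β₀ j f) t x

/-- `L^q` norm (with respect to `μ`) of an `ℝ≥0∞`-valued function, `1 ≤ q ≤ ∞`. -/
def lqNorm {α : Type*} [MeasurableSpace α] (q : ℝ≥0∞) (g : α → ℝ≥0∞)
    (μ : Measure α) : ℝ≥0∞ :=
  if q = ∞ then essSup g μ else (∫⁻ x, g x ^ q.toReal ∂μ) ^ (1 / q.toReal)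

/-- The mixed norm `‖F‖_{L^q(L^r)}` of `F : ℝ^d × ℝ → ℂ`. -/
def mixedNorm (d : ℕ) (q r : ℝ≥0∞) (F : Euc d → ℝ → ℂ) : ℝ≥0∞ :=
  lqNorm q (fun x => lqNorm r (fun t => (‖F x t‖₊ : ℝ≥0∞)) volume) volume

set_option linter.all false

/-- total mass of the sphere -/
def sphC (d : ℕ) : ℝ≥0∞ := (volume : Measure (Euc d)).toSphere Set.univ

lemma sphC_ne_top (d : ℕ) : sphC d ≠ ∞ := measure_ne_top _ _

lemma sphC_ne_zero (d : ℕ) (hd : 2 ≤ d) : sphC d ≠ 0 := by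
  haveI : Nonempty (Fin d) := ⟨⟨0, by omega⟩⟩
  haveI : Nontrivial (Euc d) := inferInstance
  unfold sphC
  exact fun h => Measure.toSphere_ne_zero (volume : Measure (Euc d)) (Measure.measure_univ_eq_zero.1 h)

lemma sphereMeasure_prob (d : ℕ) (hd : 2 ≤ d) : IsProbabilityMeasure (sphereMeasure d) := by
  constructor
  unfold sphereMeasure
  rw [Measure.smul_apply, Measure.map_apply measurable_subtype_coe MeasurableSet.univ]
  simp only [preimage_univ, smul_eq_mul]
  exact ENNReal.inv_mul_cancel (sphC_ne_zero d hd) (sphC_ne_top d)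

lemma sphereMeasure_norm (d : ℕ) : ∀ᵐ ω ∂(sphereMeasure d), ‖ω‖ = 1 := by
  unfold sphereMeasure
  refine Measure.ae_smul_measure ?_ _
  rw [ae_map_iff measurable_subtype_coe.aemeasurable
    (measurableSet_eq_fun measurable_norm measurable_const)]
  exact Filter.Eventually.of_forall fun x => by simpa using x.2

lemma polar_lintegral (d : ℕ) (hd : 2 ≤ d) (g : Euc d → ℝ≥0∞) (hg : Measurable g) :
    ∫⁻ ξ, g ξ = sphC d * ∫⁻ ρ in Ioi (0:ℝ), ENNReal.ofReal (ρ ^ (d-1)) *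
      ∫⁻ ω, g (ρ • ω) ∂(sphereMeasure d) := by
  haveI : Nonempty (Fin d) := ⟨⟨0, by omega⟩⟩
  have key : ∀ ρ : ℝ, sphC d * ∫⁻ ω, g (ρ • ω) ∂(sphereMeasure d) =
      ∫⁻ ω : sphere (0 : Euc d) 1, g (ρ • ω.1) ∂(volume : Measure (Euc d)).toSphere := by
    intro ρ
    unfold sphereMeasure
    rw [lintegral_smul_measure, lintegral_map (by fun_prop) measurable_subtype_coe, smul_eq_mul,
      ← mul_assoc]
    change sphC d * (sphC d)⁻¹ * _ = _
    rw [ENNReal.mul_inv_cancel (sphC_ne_zero d hd) (sphC_ne_top d), one_mul]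
  have hfin : Module.finrank ℝ (Euc d) = d := by simp
  calc ∫⁻ ξ, g ξ = ∫⁻ x : ({(0)}ᶜ : Set (Euc d)), g x.1 ∂((volume : Measure (Euc d)).comap (↑)) := by
        rw [lintegral_subtype_comap (measurableSet_singleton _).compl fun x ↦ g x,
          restrict_compl_singleton]
    _ = ∫⁻ x : sphere (0 : Euc d) 1 × Ioi (0:ℝ), g (x.2.1 • x.1.1)
          ∂((volume : Measure (Euc d)).toSphere.prod (.volumeIoiPow (Module.finrank ℝ (Euc d) - 1))) := by
        rw [← (Measure.measurePreserving_homeomorphUnitSphereProd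
          (volume : Measure (Euc d))).lintegral_comp (by fun_prop)]
        refine lintegral_congr fun x => ?_
        congr 1
        have := congrArg Subtype.val ((homeomorphUnitSphereProd (Euc d)).symm_apply_apply x)
        conv_lhs => rw [← this]
        rfl
    _ = ∫⁻ ρ : Ioi (0:ℝ), ∫⁻ ω : sphere (0 : Euc d) 1, g (ρ.1 • ω.1)
          ∂(volume : Measure (Euc d)).toSphere ∂(.volumeIoiPow (d - 1)) := by
        rw [hfin, lintegral_prod_symm' _ (by fun_prop)]
    _ = _ := by
        simp_rw [← key]
        rw [Measure.volumeIoiPow, lintegral_withDensity_eq_lintegral_mul _ (by fun_prop)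
          ?_]
        · simp only [Pi.mul_apply]
          rw [lintegral_subtype_comap measurableSet_Ioi fun a : ℝ ↦ ENNReal.ofReal (a ^ (d - 1)) *
            (sphC d * ∫⁻ ω, g (a • ω) ∂(sphereMeasure d)), ← lintegral_const_mul' _ _ (sphC_ne_top d)]
          refine lintegral_congr fun x => by ring
        · haveI := sphereMeasure_prob d hd
          have : Measurable fun a : ℝ => ∫⁻ ω, g (a • ω) ∂(sphereMeasure d) :=
            Measurable.lintegral_prod_right' (f := fun z : ℝ × Euc d => g (z.1 • z.2)) (by fun_prop)
          fun_prop

/-- radial measure -/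
def radM (d : ℕ) : Measure ℝ :=
  (volume.restrict (Ioi (0:ℝ))).withDensity fun ρ => sphC d * ENNReal.ofReal (ρ ^ (d-1))

instance (d : ℕ) : SFinite (radM d) := by unfold radM; infer_instance

lemma polar_map (d : ℕ) (hd : 2 ≤ d) :
    Measure.map (fun z : ℝ × Euc d => z.1 • z.2) ((radM d).prod (sphereMeasure d)) = volume := by
  haveI := sphereMeasure_prob d hd
  refine Measure.ext_of_lintegral _ fun g hg => ?_
  rw [lintegral_map hg (by fun_prop), lintegral_prod _ (by fun_prop), radM,
    lintegral_withDensity_eq_lintegral_mul _ (by fun_prop)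
      (Measurable.lintegral_prod_right' (f := fun z : ℝ × Euc d => g (z.1 • z.2)) (by fun_prop)),
    polar_lintegral d hd g hg, ← lintegral_const_mul' _ _ (sphC_ne_top d)]
  simp only [Pi.mul_apply, mul_assoc]

lemma polar_integral (d : ℕ) (hd : 2 ≤ d) (g : Euc d → ℂ) (hg : Integrable g) :
    ∫ ξ, g ξ = ∫ ρ in Ioi (0:ℝ), (((sphC d).toReal * ρ ^ (d-1) : ℝ) : ℂ) *
      ∫ ω, g (ρ • ω) ∂(sphereMeasure d) := by
  haveI := sphereMeasure_prob d hd
  have h1 := hg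
  rw [← polar_map d hd] at h1 ⊢
  rw [integral_map (by fun_prop) h1.1, integral_prod]
  · rw [radM, integral_withDensity_eq_integral_toReal_smul (by fun_prop)]
    · refine setIntegral_congr_fun measurableSet_Ioi fun ρ hρ => ?_
      simp only [ENNReal.toReal_mul, Complex.real_smul]
      rw [ENNReal.toReal_ofReal (pow_nonneg (le_of_lt hρ) _)]
    · exact Filter.Eventually.of_forall fun x => ENNReal.mul_lt_top (sphC_ne_top d).lt_top
        ENNReal.ofReal_lt_top
  · exact (integrable_map_measure h1.1 (by fun_prop)).1 h1

/-- integrating homogeneous degree 0 functions over a shell -/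
lemma shell_lintegral (d : ℕ) (hd : 2 ≤ d) (g : Euc d → ℝ≥0∞) (hg : Measurable g) :
    ∫⁻ ξ in {ξ : Euc d | 1 < ‖ξ‖ ∧ ‖ξ‖ < 2}, g (‖ξ‖⁻¹ • ξ) =
     (sphC d * ∫⁻ ρ in Ioo (1:ℝ) 2, ENNReal.ofReal (ρ ^ (d-1))) * ∫⁻ ω, g ω ∂(sphereMeasure d) := by
  have hS : MeasurableSet {ξ : Euc d | 1 < ‖ξ‖ ∧ ‖ξ‖ < 2} := by
    apply MeasurableSet.inter
    · exact measurableSet_lt measurable_const measurable_norm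
    · exact measurableSet_lt measurable_norm measurable_const
  rw [← lintegral_indicator hS, polar_lintegral d hd _ (Measurable.indicator (by fun_prop) hS)]
  rw [mul_assoc]
  congr 1
  rw [← lintegral_mul_const _ (by fun_prop)]
  have : Ioo (1:ℝ) 2 ⊆ Ioi 0 := fun x hx => lt_trans one_pos hx.1
  rw [← lintegral_indicator measurableSet_Ioo, ← lintegral_indicator measurableSet_Ioi]
  refine lintegral_congr fun ρ => ?_
  by_cases hρ0 : ρ ∈ Ioi (0:ℝ)
  · rw [indicator_of_mem hρ0]
    have hρ : 0 < ρ := hρ0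
    have e1 : ∫⁻ ω, {ξ : Euc d | 1 < ‖ξ‖ ∧ ‖ξ‖ < 2}.indicator (fun ξ => g (‖ξ‖⁻¹ • ξ)) (ρ • ω)
        ∂(sphereMeasure d) = ∫⁻ ω, (Ioo (1:ℝ) 2).indicator (fun _ => g ω) ρ ∂(sphereMeasure d) := by
      refine lintegral_congr_ae ?_
      filter_upwards [sphereMeasure_norm d] with ω hω
      have hn : ‖ρ • ω‖ = ρ := by rw [norm_smul, hω, mul_one, Real.norm_of_nonneg hρ.le]
      simp only [indicator, mem_setOf_eq, hn, mem_Ioo, smul_smul]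
      rw [inv_mul_cancel₀ hρ.ne', one_smul]
    rw [e1]
    by_cases h : ρ ∈ Ioo (1:ℝ) 2
    · simp [indicator_of_mem h]
    · simp [indicator_of_notMem h]
  · rw [indicator_of_notMem hρ0, indicator_of_notMem fun h => hρ0 (this h)]

lemma shell_const (d : ℕ) (hd : 2 ≤ d) :
    (sphC d * ∫⁻ ρ in Ioo (1:ℝ) 2, ENNReal.ofReal (ρ ^ (d-1))) ≠ 0 ∧
    (sphC d * ∫⁻ ρ in Ioo (1:ℝ) 2, ENNReal.ofReal (ρ ^ (d-1))) ≠ ∞ := by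
  constructor
  · refine mul_ne_zero (sphC_ne_zero d hd) ?_
    have : (1:ℝ≥0∞) ≤ ∫⁻ ρ in Ioo (1:ℝ) 2, ENNReal.ofReal (ρ ^ (d-1)) := by
      calc (1:ℝ≥0∞) = ∫⁻ ρ in Ioo (1:ℝ) 2, 1 := by
            simp; norm_num
        _ ≤ _ := by
          refine setLIntegral_mono' measurableSet_Ioo fun ρ hρ => ?_
          rw [← ENNReal.ofReal_one]
          exact ENNReal.ofReal_le_ofReal (one_le_pow₀ hρ.1.le)
    intro h
    rw [h] at this
    simp at this
  · refine ENNReal.mul_ne_top (sphC_ne_top d) ?_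
    refine ne_top_of_le_ne_top (b := ∫⁻ ρ in Ioo (1:ℝ) 2, ENNReal.ofReal (2 ^ (d-1))) ?_ ?_
    · simp; finiteness
    · refine setLIntegral_mono' measurableSet_Ioo fun ρ hρ => ENNReal.ofReal_le_ofReal ?_
      exact pow_le_pow_left₀ (by linarith [hρ.1]) hρ.2.le _

lemma sphereMeasure_rot (d : ℕ) (hd : 2 ≤ d) (R : Euc d ≃ₗᵢ[ℝ] Euc d) :
    (sphereMeasure d).map R = sphereMeasure d := by
  refine Measure.ext_of_lintegral _ fun g hg => ?_
  have hc := shell_const d hd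
  have hR : Measurable R := R.continuous.measurable
  rw [lintegral_map hg hR]
  rw [← ENNReal.mul_right_inj hc.1 hc.2, ← shell_lintegral d hd g hg,
    ← shell_lintegral d hd (fun ω => g (R ω)) (by fun_prop)]
  have := (R.measurePreserving).setLIntegral_comp_preimage_emb
    R.toHomeomorph.measurableEmbedding (fun ξ => g (‖ξ‖⁻¹ • ξ)) {ξ : Euc d | 1 < ‖ξ‖ ∧ ‖ξ‖ < 2}
  rw [← this]
  simp


lemma coord_le_one {n : ℕ} (i : Fin n) : ∀ᵐ ω ∂(sphereMeasure n), |ω i| ≤ 1 := by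
  filter_upwards [sphereMeasure_norm n] with ω h
  rw [← h]
  exact PiLp.norm_apply_le ω i

lemma hasDerivAt_int_cos {X : Type*} [MeasurableSpace X] (μ : Measure X) [IsProbabilityMeasure μ]
    (P α β : X → ℝ) (hP : Measurable P) (hα : Measurable α) (hβ : Measurable β)
    (hP1 : ∀ᵐ x ∂μ, |P x| ≤ 1) (hβ1 : ∀ᵐ x ∂μ, |β x| ≤ 1) (ε : ℝ) :
    HasDerivAt (fun ε => ∫ x, P x * Real.cos (α x + ε * β x) ∂μ)
      (-∫ x, P x * β x * Real.sin (α x + ε * β x) ∂μ) ε := by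
  rw [← integral_neg]
  refine (hasDerivAt_integral_of_dominated_loc_of_deriv_le (s := univ) (bound := fun _ => 1)
    (F := fun ε x => P x * Real.cos (α x + ε * β x))
    (F' := fun ε x => -(P x * β x * Real.sin (α x + ε * β x)))
    Filter.univ_mem (Filter.Eventually.of_forall fun _ => by fun_prop) ?_ (by fun_prop) ?_
    (integrable_const _) ?_).2
  · refine (integrable_const (1:ℝ)).mono' (by fun_prop) ?_
    filter_upwards [hP1] with x h
    rw [norm_mul]
    exact mul_le_one₀ h (norm_nonneg _) (Real.abs_cos_le_one _)
  · filter_upwards [hP1, hβ1] with x h1 h2 ε _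
    rw [norm_neg, norm_mul, norm_mul]
    exact mul_le_one₀ (mul_le_one₀ h1 (norm_nonneg _) h2) (norm_nonneg _) (Real.abs_sin_le_one _)
  · refine Filter.Eventually.of_forall fun x ε _ => ?_
    have h : HasDerivAt (fun ε : ℝ => α x + ε * β x) (β x) ε := by
      simpa using ((hasDerivAt_id ε).mul_const (β x)).const_add (α x)
    exact (h.cos.const_mul (P x)).congr_deriv (by ring)

lemma hasDerivAt_int_sin {X : Type*} [MeasurableSpace X] (μ : Measure X) [IsProbabilityMeasure μ]
    (P α β : X → ℝ) (hP : Measurable P) (hα : Measurable α) (hβ : Measurable β)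
    (hP1 : ∀ᵐ x ∂μ, |P x| ≤ 1) (hβ1 : ∀ᵐ x ∂μ, |β x| ≤ 1) (ε : ℝ) :
    HasDerivAt (fun ε => ∫ x, P x * Real.sin (α x + ε * β x) ∂μ)
      (∫ x, P x * β x * Real.cos (α x + ε * β x) ∂μ) ε := by
  have := hasDerivAt_int_cos μ P (fun x => α x - Real.pi / 2) β hP (by fun_prop) hβ hP1 hβ1 ε
  have e1 : ∀ x ε, α x - Real.pi / 2 + ε * β x = (α x + ε * β x) - Real.pi / 2 := fun _ _ => by ring
  simpa only [e1, Real.cos_sub_pi_div_two, Real.sin_sub_pi_div_two, mul_neg, integral_neg, neg_neg]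
    using this


def sM (n : ℕ) (r : ℝ) : ℝ := ∫ ω, Real.cos (r * ω 0) ∂(sphereMeasure (n+1))
def sM1 (n : ℕ) (r : ℝ) : ℝ := -∫ ω, ω 0 * Real.sin (r * ω 0) ∂(sphereMeasure (n+1))
def sM2 (n : ℕ) (r : ℝ) : ℝ := -∫ ω, ω 0 * ω 0 * Real.cos (r * ω 0) ∂(sphereMeasure (n+1))
/-- the weighted kernels -/
def sK (n : ℕ) (i : Fin (n+1)) (x : Euc (n+1)) : ℝ :=
  ∫ ω, ω i * ω i * Real.cos (inner ℝ ω x) ∂(sphereMeasure (n+1))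


lemma sM_deriv {n : ℕ} (hn : 1 ≤ n) (r : ℝ) : HasDerivAt (sM n) (sM1 n r) r := by
  have := sphereMeasure_prob (n+1) (by omega)
  have := hasDerivAt_int_cos (sphereMeasure (n+1)) (fun _ => 1) (fun _ => 0) (fun ω => ω 0)
    (by fun_prop) (by fun_prop) (by fun_prop) (by simp) (coord_le_one 0) r
  simp only [one_mul, zero_add] at this
  exact this

lemma sM1_deriv {n : ℕ} (hn : 1 ≤ n) (r : ℝ) : HasDerivAt (sM1 n) (sM2 n r) r := by
  have := sphereMeasure_prob (n+1) (by omega)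
  have := hasDerivAt_int_sin (sphereMeasure (n+1)) (fun ω => ω 0) (fun _ => 0) (fun ω => ω 0)
    (by fun_prop) (by fun_prop) (by fun_prop) (coord_le_one 0) (coord_le_one 0) r
  simp only [zero_add] at this
  exact this.neg

lemma sM_le {n : ℕ} (hn : 1 ≤ n) (r : ℝ) : |sM n r| ≤ 1 := by
  have := sphereMeasure_prob (n+1) (by omega)
  have := norm_integral_le_of_norm_le_const (μ := sphereMeasure (n+1)) (C := 1)
    (f := fun ω => Real.cos (r * ω 0)) (Filter.Eventually.of_forall fun ω => Real.abs_cos_le_one _)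
  simpa [sM] using this

lemma sM1_le {n : ℕ} (hn : 1 ≤ n) (r : ℝ) : |sM1 n r| ≤ 1 := by
  have := sphereMeasure_prob (n+1) (by omega)
  have := norm_integral_le_of_norm_le_const (μ := sphereMeasure (n+1)) (C := 1)
    (f := fun ω => ω 0 * Real.sin (r * ω 0)) (by
      filter_upwards [coord_le_one (n := n+1) 0] with ω h
      rw [norm_mul]
      exact mul_le_one₀ h (norm_nonneg _) (Real.abs_sin_le_one _))
  simpa [sM1] using this

lemma sK_le {n : ℕ} (hn : 1 ≤ n) (i : Fin (n+1)) (x : Euc (n+1)) : |sK n i x| ≤ 1 := by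
  have := sphereMeasure_prob (n+1) (by omega)
  have := norm_integral_le_of_norm_le_const (μ := sphereMeasure (n+1)) (C := 1)
    (f := fun ω => ω i * ω i * Real.cos (inner ℝ ω x)) (by
      filter_upwards [coord_le_one (n := n+1) i] with ω h
      rw [norm_mul, norm_mul]
      exact mul_le_one₀ (mul_le_one₀ h (norm_nonneg _) h) (norm_nonneg _) (Real.abs_cos_le_one _))
  simpa [sK] using this

lemma sM_radial {n : ℕ} (hn : 1 ≤ n) (x : Euc (n+1)) :
    ∫ ω, Real.cos (inner ℝ ω x) ∂(sphereMeasure (n+1)) = sM n ‖x‖ := by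
  set v : Euc (n+1) := EuclideanSpace.single 0 ‖x‖
  have hv : ‖x‖ = ‖v‖ := by simp [v]
  set R := (ℝ ∙ (x - v))ᗮ.reflection
  have hR : R x = v := Submodule.reflection_sub hv
  have hm : Measurable R := R.continuous.measurable
  unfold sM
  conv_rhs => rw [← sphereMeasure_rot (n+1) (by omega) R]
  rw [integral_map hm.aemeasurable (by fun_prop)]
  refine integral_congr_ae (Filter.Eventually.of_forall fun ω => ?_)
  simp only
  congr 1
  rw [← R.inner_map_map ω x, hR]
  simp [v, EuclideanSpace.inner_single_right]

lemma sK_formula {n : ℕ} (hn : 1 ≤ n) (i : Fin (n+1)) (x : Euc (n+1)) (hx : x ≠ 0) :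
    sK n i x = -(sM2 n ‖x‖ * (x i / ‖x‖)^2 + sM1 n ‖x‖ * (1/‖x‖ - (x i)^2/‖x‖^3)) := by
  have := sphereMeasure_prob (n+1) (by omega)
  have hr : 0 < ‖x‖ := norm_pos_iff.2 hx
  set ρ : ℝ → ℝ := fun ε => Real.sqrt (‖x‖^2 + 2 * ε * x i + ε^2) with hρ
  have hρn : ∀ ε, ‖x + ε • EuclideanSpace.single i (1:ℝ)‖ = ρ ε := by
    intro ε
    rw [hρ]
    simp only
    rw [eq_comm, Real.sqrt_eq_iff_mul_self_eq (by
      have := sq_nonneg ‖x + ε • EuclideanSpace.single i (1:ℝ)‖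
      rw [norm_add_sq_real, norm_smul] at this
      simp [inner_smul_right, EuclideanSpace.inner_single_right] at this
      linarith) (norm_nonneg _), ← sq, norm_add_sq_real, norm_smul]
    simp [inner_smul_right, EuclideanSpace.inner_single_right]
    ring
  have hin : ∀ (ω : Euc (n+1)) ε, inner ℝ ω (x + ε • EuclideanSpace.single i (1:ℝ)) =
      inner ℝ ω x + ε * ω i := by
    intro ω ε
    rw [inner_add_right, inner_smul_right]
    simp [EuclideanSpace.inner_single_right]
  have hρ0 : ρ 0 = ‖x‖ := by rw [← hρn]; simp
  have hρd : ∀ ε, ρ ε ≠ 0 → HasDerivAt ρ ((x i + ε) / ρ ε) ε := by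
    intro ε hε
    have h1 : HasDerivAt (fun ε : ℝ => ‖x‖^2 + 2 * ε * x i + ε^2) (2 * x i + 2 * ε) ε := by
      have h := ((((hasDerivAt_id ε).const_mul 2).mul_const (x i)).const_add (‖x‖^2)).add
        (hasDerivAt_pow 2 ε)
      exact h.congr_deriv (by simp)
    have h0 : ‖x‖^2 + 2 * ε * x i + ε^2 ≠ 0 := by
      intro h
      exact hε (by rw [hρ]; simp [h])
    convert h1.sqrt h0 using 1
    change _ = _ / (2 * ρ ε)
    field_simp
  have hρc : ∀ᶠ ε in nhds (0:ℝ), ρ ε ≠ 0 := by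
    have : ContinuousAt ρ 0 := (hρd 0 (by rw [hρ0]; exact hr.ne')).continuousAt
    exact this.eventually_ne (by rw [hρ0]; exact hr.ne')
  have hg : ∀ ε, ∫ ω, 1 * Real.cos (inner ℝ ω x + ε * ω i) ∂(sphereMeasure (n+1)) = sM n (ρ ε) := by
    intro ε
    rw [← hρn, ← sM_radial hn]
    simp [hin]
  have h1 : ∀ᶠ ε in nhds (0:ℝ), -∫ ω, ω i * Real.sin (inner ℝ ω x + ε * ω i) ∂(sphereMeasure (n+1))
      = sM1 n (ρ ε) * ((x i + ε) / ρ ε) := by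
    filter_upwards [hρc] with ε hε
    have a1 := hasDerivAt_int_cos (sphereMeasure (n+1)) (fun _ => 1) (fun ω => inner ℝ ω x)
      (fun ω => ω i) (by fun_prop) (by fun_prop) (by fun_prop) (by simp) (coord_le_one i) ε
    simp only [hg] at a1
    have a2 := (sM_deriv hn (ρ ε)).comp ε (hρd ε hε)
    simpa using a1.unique a2
  have b1 := (hasDerivAt_int_sin (sphereMeasure (n+1)) (fun ω => ω i) (fun ω => inner ℝ ω x)
      (fun ω => ω i) (by fun_prop) (by fun_prop) (by fun_prop) (coord_le_one i) (coord_le_one i) 0).neg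
  have hne : ρ 0 ≠ 0 := by rw [hρ0]; exact hr.ne'
  have b2 := ((sM1_deriv hn (ρ 0)).comp 0 (hρd 0 hne)).mul
    (((hasDerivAt_id (0:ℝ)).const_add (x i)).div (hρd 0 hne) hne)
  have b3 := (b1.congr_of_eventuallyEq (Filter.EventuallyEq.symm h1)).unique b2
  simp only [zero_mul, add_zero, Function.comp, id, hρ0, Pi.div_apply] at b3
  have : sK n i x = - -sK n i x := by ring
  rw [this]
  unfold sK
  rw [b3]
  field_simp

lemma sM_ode {n : ℕ} (hn : 1 ≤ n) (r : ℝ) (hr : 0 < r) : sM2 n r = - sM n r - n / r * sM1 n r := by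
  have := sphereMeasure_prob (n+1) (by omega)
  set x : Euc (n+1) := EuclideanSpace.single 0 r
  have hxr : ‖x‖ = r := by simp [x, abs_of_pos hr]
  have hx : x ≠ 0 := by rw [← norm_pos_iff, hxr]; exact hr
  have h1 : ∑ i, sK n i x = sM n r := by
    unfold sK
    rw [← integral_finsetSum]
    · rw [← hxr, ← sM_radial hn]
      refine integral_congr_ae ?_
      filter_upwards [sphereMeasure_norm (n+1)] with ω h
      rw [← Finset.sum_mul]
      have : ∑ i, ω i * ω i = 1 := by
        have h2 := EuclideanSpace.real_norm_sq_eq ω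
        rw [h] at h2
        simp only [← sq]
        rw [← h2]; norm_num
      rw [this, one_mul]
    · intro i _
      refine (integrable_const (1:ℝ)).mono' (by fun_prop) ?_
      filter_upwards [coord_le_one (n := n+1) i] with ω h
      rw [norm_mul, norm_mul]
      exact mul_le_one₀ (mul_le_one₀ h (norm_nonneg _) h) (norm_nonneg _) (Real.abs_cos_le_one _)
  have h3 : ∑ i, (x i)^2 = r^2 := by rw [← hxr]; exact (EuclideanSpace.real_norm_sq_eq x).symm
  have h2 : ∑ i, sK n i x = -(sM2 n r + n / r * sM1 n r) := by
    simp only [sK_formula hn _ x hx, hxr]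
    rw [Finset.sum_neg_distrib, Finset.sum_add_distrib, ← Finset.mul_sum, ← Finset.mul_sum,
      Finset.sum_sub_distrib]
    simp only [div_pow]
    rw [← Finset.sum_div, ← Finset.sum_div, ← Finset.sum_div, h3]
    simp only [Finset.sum_const, Finset.card_univ, Fintype.card_fin, nsmul_eq_mul, Nat.cast_add, Nat.cast_one]
    field_simp
    ring
  linarith


lemma limit_of_deriv_bound (W W' : ℝ → ℝ) (C : ℝ) (hW : ∀ r, 1 ≤ r → HasDerivAt W (W' r) r)
    (hb : ∀ r, 1 ≤ r → |W' r| ≤ C / r^2) : ∃ L, ∀ r, 1 ≤ r → |W r - L| ≤ C / r := by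
  have hC : 0 ≤ C := by have := (abs_nonneg _).trans (hb 1 le_rfl); simpa using this
  have hd : ∀ r : ℝ, 1 ≤ r → HasDerivAt (fun r : ℝ => C / r) (-(C / r^2)) r := by
    intro r hr
    have := (hasDerivAt_inv (show r ≠ 0 by linarith)).const_mul C
    simp only [div_eq_mul_inv]
    exact this.congr_deriv (by ring)
  have mono : MonotoneOn (fun r => W r - C / r) (Ici 1) := by
    refine monotoneOn_of_deriv_nonneg (convex_Ici 1)
      (fun r hr => ((hW r hr).sub (hd r hr)).continuousAt.continuousWithinAt) ?_ ?_
    · intro r hr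
      rw [interior_Ici] at hr
      exact ((hW r hr.le).sub (hd r hr.le)).differentiableAt.differentiableWithinAt
    · intro r hr
      rw [interior_Ici] at hr
      have e := ((hW r hr.le).sub (hd r hr.le)).deriv
      change 0 ≤ deriv (W - fun r => C / r) r
      rw [e]
      have := abs_le.1 (hb r hr.le)
      linarith
  have anti : AntitoneOn (fun r => W r + C / r) (Ici 1) := by
    refine antitoneOn_of_deriv_nonpos (convex_Ici 1)
      (fun r hr => ((hW r hr).add (hd r hr)).continuousAt.continuousWithinAt) ?_ ?_
    · intro r hr
      rw [interior_Ici] at hr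
      exact ((hW r hr.le).add (hd r hr.le)).differentiableAt.differentiableWithinAt
    · intro r hr
      rw [interior_Ici] at hr
      have e := ((hW r hr.le).add (hd r hr.le)).deriv
      change deriv (W + fun r => C / r) r ≤ 0
      rw [e]
      have := abs_le.1 (hb r hr.le)
      linarith
  have key : ∀ r s, 1 ≤ r → 1 ≤ s → W s - C / s ≤ W r + C / r := by
    intro r s hr hs
    have hm : 1 ≤ max r s := le_max_of_le_left hr
    have h1 := mono hs hm (le_max_right r s)
    have h2 := anti hr hm (le_max_left r s)
    simp only at h1 h2
    have : 0 ≤ C / max r s := by positivity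
    linarith
  refine ⟨sSup ((fun r => W r - C / r) '' Ici 1), fun r hr => ?_⟩
  have hne : ((fun r => W r - C / r) '' Ici 1).Nonempty := ⟨_, 1, by simp, rfl⟩
  have hbd : BddAbove ((fun r => W r - C / r) '' Ici 1) := by
    refine ⟨W 1 + C / 1, ?_⟩
    rintro _ ⟨s, hs, rfl⟩
    exact key 1 s le_rfl hs
  have h1 : W r - C / r ≤ sSup ((fun r => W r - C / r) '' Ici 1) := le_csSup hbd ⟨r, hr, rfl⟩
  have h2 : sSup ((fun r => W r - C / r) '' Ici 1) ≤ W r + C / r := by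
    refine csSup_le hne ?_
    rintro _ ⟨s, hs, rfl⟩
    exact key r s hr hs
  rw [abs_le]
  constructor <;> linarith

lemma ode_asymp (w w1 : ℝ → ℝ) (κ : ℝ) (h1 : ∀ r, 1 ≤ r → HasDerivAt w (w1 r) r)
    (h2 : ∀ r, 1 ≤ r → HasDerivAt w1 ((-1 + κ / r^2) * w r) r) :
    ∃ A B C, (∀ r, 1 ≤ r → |w r| ≤ C ∧ |w1 r| ≤ C) ∧
      ∀ r, 1 ≤ r → |w r - (A * Real.cos r + B * Real.sin r)| ≤ C / r := by
  -- energy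
  have hd : ∀ r : ℝ, 1 ≤ r → HasDerivAt (fun r : ℝ => |κ| / r) (-(|κ| / r^2)) r := by
    intro r hr
    have := (hasDerivAt_inv (show r ≠ 0 by linarith)).const_mul |κ|
    simp only [div_eq_mul_inv]
    exact this.congr_deriv (by ring)
  have hE : ∀ r, 1 ≤ r → HasDerivAt (fun r => (w r ^ 2 + w1 r ^ 2) * Real.exp (|κ| / r))
      ((2 * w r * w1 r + 2 * w1 r * ((-1 + κ / r^2) * w r)) * Real.exp (|κ| / r) +
        (w r ^ 2 + w1 r ^ 2) * (Real.exp (|κ| / r) * (-(|κ| / r^2)))) r := by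
    intro r hr
    have := (((h1 r hr).pow 2).add ((h2 r hr).pow 2)).mul (hd r hr).exp
    exact this.congr_deriv (by simp)
  have anti : AntitoneOn (fun r => (w r ^ 2 + w1 r ^ 2) * Real.exp (|κ| / r)) (Ici 1) := by
    refine antitoneOn_of_deriv_nonpos (convex_Ici 1)
      (fun r hr => (hE r hr).continuousAt.continuousWithinAt) ?_ ?_
    · intro r hr
      rw [interior_Ici] at hr
      exact (hE r hr.le).differentiableAt.differentiableWithinAt
    · intro r hr
      rw [interior_Ici] at hr
      rw [(hE r hr.le).deriv]
      have : (2 * w r * w1 r + 2 * w1 r * ((-1 + κ / r^2) * w r)) * Real.exp (|κ| / r) +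
        (w r ^ 2 + w1 r ^ 2) * (Real.exp (|κ| / r) * (-(|κ| / r^2))) =
        -(Real.exp (|κ| / r) / r^2) * (|κ| * (w r ^ 2 + w1 r ^ 2) - κ * (2 * w r * w1 r)) := by
        have : r ≠ 0 := by have : (1:ℝ) < r := hr; linarith
        field_simp
        ring
      rw [this]
      have p : 0 ≤ Real.exp (|κ| / r) / r^2 := by positivity
      have q : 0 ≤ |κ| * (w r ^ 2 + w1 r ^ 2) - κ * (2 * w r * w1 r) := by
        have a1 : κ * (2 * w r * w1 r) ≤ |κ| * |2 * w r * w1 r| := by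
          rw [← abs_mul]; exact le_abs_self _
        have a2 : |2 * w r * w1 r| ≤ w r ^ 2 + w1 r ^ 2 := by
          rw [abs_le]; constructor <;> nlinarith [sq_nonneg (w r - w1 r), sq_nonneg (w r + w1 r)]
        nlinarith [abs_nonneg κ]
      nlinarith
  set E := (w 1 ^ 2 + w1 1 ^ 2) * Real.exp (|κ| / 1) with hEdef
  have hb : ∀ r, 1 ≤ r → w r ^ 2 + w1 r ^ 2 ≤ E := by
    intro r hr
    have := anti (show (1:ℝ) ∈ Ici 1 by simp) hr hr
    simp only at this
    refine le_trans ?_ this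
    have e1 : 1 ≤ Real.exp (|κ| / r) := Real.one_le_exp (by positivity)
    nlinarith [sq_nonneg (w r), sq_nonneg (w1 r)]
  have hC : ∀ r, 1 ≤ r → |w r| ≤ Real.sqrt E ∧ |w1 r| ≤ Real.sqrt E := by
    intro r hr
    constructor <;> refine Real.abs_le_sqrt ?_ <;> nlinarith [hb r hr, sq_nonneg (w r), sq_nonneg (w1 r)]
  have hW := limit_of_deriv_bound (fun r => w r * Real.cos r - w1 r * Real.sin r)
    (fun r => -(κ / r^2) * w r * Real.sin r) (|κ| * Real.sqrt E) ?_ ?_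
  have hV := limit_of_deriv_bound (fun r => w r * Real.sin r + w1 r * Real.cos r)
    (fun r => (κ / r^2) * w r * Real.cos r) (|κ| * Real.sqrt E) ?_ ?_
  · obtain ⟨A, hA⟩ := hW
    obtain ⟨B, hB⟩ := hV
    refine ⟨A, B, Real.sqrt E + 2 * (|κ| * Real.sqrt E), ?_, ?_⟩
    · intro r hr
      have := hC r hr
      have : 0 ≤ |κ| * Real.sqrt E := by positivity
      constructor <;> linarith [hC r hr]
    · intro r hr
      have e : w r - (A * Real.cos r + B * Real.sin r) =
        (w r * Real.cos r - w1 r * Real.sin r - A) * Real.cos r +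
        (w r * Real.sin r + w1 r * Real.cos r - B) * Real.sin r := by
        have := Real.sin_sq_add_cos_sq r
        linear_combination (- w r) * this
      rw [e]
      have h0 : 0 ≤ Real.sqrt E / r := by positivity
      calc _ ≤ _ := abs_add_le _ _
        _ ≤ |κ| * Real.sqrt E / r * 1 + |κ| * Real.sqrt E / r * 1 := by
          rw [abs_mul, abs_mul]
          gcongr
          · exact hA r hr
          · exact Real.abs_cos_le_one r
          · exact hB r hr
          · exact Real.abs_sin_le_one r
        _ ≤ _ := by rw [add_div]; linarith [show 2 * (|κ| * √E) / r = |κ| * Real.sqrt E / r * 1 + |κ| * Real.sqrt E / r * 1 by ring]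
  · intro r hr
    have := ((h1 r hr).mul (Real.hasDerivAt_sin r)).add ((h2 r hr).mul (Real.hasDerivAt_cos r))
    exact this.congr_deriv (by ring)
  · intro r hr
    rw [abs_mul, abs_mul, abs_div, abs_of_nonneg (sq_nonneg r)]
    calc _ ≤ |κ| / r^2 * Real.sqrt E * 1 := by
          gcongr
          · exact (hC r hr).1
          · exact Real.abs_cos_le_one r
      _ = _ := by ring
  · intro r hr
    have := ((h1 r hr).mul (Real.hasDerivAt_cos r)).sub ((h2 r hr).mul (Real.hasDerivAt_sin r))
    exact this.congr_deriv (by ring)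
  · intro r hr
    rw [abs_mul, abs_mul, abs_neg, abs_div, abs_of_nonneg (sq_nonneg r)]
    calc _ ≤ |κ| / r^2 * Real.sqrt E * 1 := by
          gcongr
          · exact (hC r hr).1
          · exact Real.abs_sin_le_one r
      _ = _ := by ring

lemma sM_asymp {n : ℕ} (hn : 1 ≤ n) : ∃ A B C : ℝ, 0 ≤ C ∧ (∀ r, 1 ≤ r →
      |sM n r| ≤ C * r ^ (-(n/2:ℝ)) ∧ |sM1 n r| ≤ C * r ^ (-(n/2:ℝ))) ∧
      ∀ r, 1 ≤ r → |sM n r - r ^ (-(n/2:ℝ)) * (A * Real.cos r + B * Real.sin r)|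
        ≤ C * r ^ (-(n/2:ℝ)) / r := by
  set a : ℝ := n / 2 with ha
  have ha0 : 0 ≤ a := by positivity
  have H := ode_asymp (fun r => r ^ a * sM n r)
    (fun r => r ^ a * (sM1 n r + a / r * sM n r)) (a^2 - a) ?_ ?_
  · obtain ⟨A, B, C, h1, h2⟩ := H
    have hC : 0 ≤ C := (abs_nonneg _).trans (h1 1 le_rfl).1
    refine ⟨A, B, C * (1 + a), by positivity, ?_, ?_⟩
    · intro r hr
      have hr0 : 0 < r := by linarith
      have hp : 0 < r ^ a := by positivity
      obtain ⟨b1, b2⟩ := h1 r hr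
      rw [abs_mul, abs_of_pos hp] at b1 b2
      have c1 : |sM n r| ≤ C * r ^ (-a) := by
        rw [Real.rpow_neg hr0.le, ← div_eq_mul_inv, le_div_iff₀ hp]; linarith
      have c2 : |sM1 n r + a / r * sM n r| ≤ C * r ^ (-a) := by
        rw [Real.rpow_neg hr0.le, ← div_eq_mul_inv, le_div_iff₀ hp]; linarith
      have c0 : 0 ≤ C * r ^ (-a) := by positivity
      have c3 : |a / r * sM n r| ≤ a * (C * r ^ (-a)) := by
        rw [abs_mul, abs_of_nonneg (by positivity)]
        gcongr
        exact div_le_self ha0 hr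
      constructor
      · nlinarith
      · have : |sM1 n r| ≤ |sM1 n r + a / r * sM n r| + |a / r * sM n r| := by
          have := abs_sub (sM1 n r + a / r * sM n r) (a / r * sM n r)
          rwa [add_sub_cancel_right] at this
        nlinarith
    · intro r hr
      have hr0 : 0 < r := by linarith
      have hp : 0 < r ^ a := by positivity
      have := h2 r hr
      have e : sM n r - r ^ (-a) * (A * Real.cos r + B * Real.sin r) =
        r ^ (-a) * (r ^ a * sM n r - (A * Real.cos r + B * Real.sin r)) := by
        rw [Real.rpow_neg hr0.le]; field_simp
      rw [e, abs_mul, abs_of_nonneg (by positivity)]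
      calc _ ≤ r ^ (-a) * (C / r) := by gcongr
        _ = C * r ^ (-a) / r := by ring
        _ ≤ _ := by
          gcongr
          nlinarith
  · intro r hr
    have hr0 : 0 < r := by linarith
    have := (Real.hasDerivAt_rpow_const (p := a) (Or.inl hr0.ne')).mul (sM_deriv hn r)
    refine this.congr_deriv ?_
    rw [Real.rpow_sub_one hr0.ne']
    field_simp
    ring
  · intro r hr
    have hr0 : 0 < r := by linarith
    have hinv : HasDerivAt (fun r : ℝ => a / r) (-(a / r^2)) r := by
      have := (hasDerivAt_inv hr0.ne').const_mul a
      simp only [div_eq_mul_inv]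
      exact this.congr_deriv (by ring)
    have := (Real.hasDerivAt_rpow_const (p := a) (Or.inl hr0.ne')).mul
      ((sM1_deriv hn r).add (hinv.mul (sM_deriv hn r)))
    refine this.congr_deriv ?_
    rw [Real.rpow_sub_one hr0.ne', sM_ode hn r hr0]
    have : (n:ℝ) = 2 * a := by rw [ha]; ring
    rw [this]
    simp only [Pi.add_apply, Pi.mul_apply]
    field_simp
    ring

lemma sK_decay {n : ℕ} (hn : 1 ≤ n) : ∃ C : ℝ, 0 < C ∧ ∀ (i : Fin (n+1)) (x : Euc (n+1)), x ≠ 0 →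
    |sK n i x| ≤ C * ‖x‖ ^ (-(n/2:ℝ)) := by
  obtain ⟨A, B, C, hC, h1, -⟩ := sM_asymp hn
  refine ⟨C * (n + 2) + 1, by positivity, fun i x hx => ?_⟩
  have hr : 0 < ‖x‖ := norm_pos_iff.2 hx
  set r := ‖x‖ with hrdef
  rcases le_total 1 r with h | h
  · obtain ⟨b1, b2⟩ := h1 r h
    set D := C * r ^ (-(n/2:ℝ))
    have hxi : |x i| ≤ r := PiLp.norm_apply_le x i
    have q1 : (x i / r)^2 ≤ 1 := by
      rw [div_pow, div_le_one (by positivity)]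
      exact sq_le_sq' (by linarith [neg_abs_le (x i)]) ((le_abs_self _).trans hxi)
    have q0 : 0 ≤ (x i / r)^2 := by positivity
    have q2 : 1/r - (x i)^2/r^3 = (1 - (x i / r)^2) / r := by field_simp
    have f : sK n i x = sM n r * (x i / r)^2 - sM1 n r * ((1 - (x i / r)^2) / r - n / r * (x i / r)^2) := by
      rw [sK_formula hn i x hx, ← hrdef, sM_ode hn r hr, q2]; ring
    have q3 : |(1 - (x i / r)^2) / r - n / r * (x i / r)^2| ≤ (n + 1 : ℝ) := by
      have i1 : 1 / r ≤ 1 := by rw [div_le_one hr]; exact h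
      have i0 : 0 ≤ 1 / r := by positivity
      have e : (1 - (x i / r)^2) / r - n / r * (x i / r)^2 = (1/r) * ((1 - (x i / r)^2) - n * (x i / r)^2) := by ring
      rw [e, abs_mul, abs_of_nonneg i0]
      have : |(1 - (x i / r)^2) - n * (x i / r)^2| ≤ (n + 1 : ℝ) := by
        have n0 : (0:ℝ) ≤ n := by positivity
        rw [abs_le]; constructor <;> nlinarith
      calc _ ≤ 1 * (n + 1 : ℝ) := by gcongr
        _ = _ := by ring
    rw [f]
    have D0 : 0 ≤ D := (abs_nonneg _).trans b1
    calc _ ≤ _ := abs_sub _ _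
      _ ≤ D * 1 + D * (n + 1) := by
        rw [abs_mul, abs_mul, abs_of_nonneg q0]
        gcongr
      _ ≤ _ := by
        have : 0 ≤ r ^ (-(n/2:ℝ)) := by positivity
        simp only [D]; nlinarith
  · have := sK_le hn i x
    have e : 1 ≤ r ^ (-(n/2:ℝ)) := Real.one_le_rpow_of_pos_of_le_one_of_nonpos hr h (by
      have : (0:ℝ) ≤ n/2 := by positivity
      linarith)
    have : 0 ≤ C * (n+2) := by positivity
    nlinarith


section plancherel
variable {E : Type*} [NormedAddCommGroup E] [InnerProductSpace ℝ E] [FiniteDimensional ℝ E]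
  [MeasurableSpace E] [BorelSpace E]

theorem fourier_cont (f : E → ℂ) (hf : Integrable f) : Continuous (𝓕 f) := by
  have := VectorFourier.fourierIntegral_continuous (μ := (volume : Measure E))
    (L := innerₗ E) Real.continuous_fourierChar continuous_inner hf
  exact this

open scoped SchwartzMap in
theorem plancherel_eq (f : E → ℂ) (hf : Integrable f) (hf2 : MemLp f 2 volume) :
    eLpNorm (𝓕 f) 2 volume = eLpNorm f 2 volume := by
  set F : Lp ℂ 2 (volume : Measure E) := hf2.toLp f with hF
  have key : ∀ᵐ x, 𝓕 f x = (𝓕 F : Lp ℂ 2 (volume : Measure E)) x := by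
    apply ae_eq_of_integral_contDiff_smul_eq
    · exact (fourier_cont f hf).locallyIntegrable
    · exact (Lp.memLp _).locallyIntegrable (by norm_num)
    · intro g g_smooth g_cpt
      have hg₁ : HasCompactSupport (Complex.ofRealCLM ∘ g) := g_cpt.comp_left rfl
      have hg₂ : ContDiff ℝ (⊤ : ℕ∞) (Complex.ofRealCLM ∘ g) := by
        exact Complex.ofRealCLM.contDiff.comp g_smooth
      set G : 𝓢(E, ℂ) := hg₁.toSchwartzMap hg₂ with hG
      have h1 := congrArg (fun T : 𝓢'(E, ℂ) => T G) (Lp.fourier_toTemperedDistribution_eq F)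
      simp only [TemperedDistribution.fourier_apply, Lp.toTemperedDistribution_apply] at h1
      have e1 : ∫ x, g x • (𝓕 F : Lp ℂ 2 (volume : Measure E)) x = ∫ x, G x • (𝓕 F : Lp ℂ 2 (volume : Measure E)) x := by
        congr 1
      rw [e1, ← h1]
      have e2 : ∫ x, (𝓕 G) x • F x = ∫ x, (𝓕 (G : E → ℂ)) x • f x := by
        apply integral_congr_ae
        filter_upwards [hf2.coeFn_toLp] with x hx
        rw [hx]; rfl
      rw [e2]
      have := VectorFourier.integral_fourierIntegral_smul_eq_flip (L := innerₗ E)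
         Real.continuous_fourierChar continuous_inner (G.integrable (μ := volume)) hf
      rw [flip_innerₗ] at this
      exact this.symm
  rw [eLpNorm_congr_ae key]
  have := Lp.norm_fourier_eq F
  rw [Lp.norm_def, Lp.norm_def, ENNReal.toReal_eq_toReal_iff' (Lp.eLpNorm_ne_top _) (Lp.eLpNorm_ne_top _)] at this
  rw [this, eLpNorm_congr_ae hf2.coeFn_toLp]

end plancherel


/-- drop the i-th coordinate -/
def proj {n : ℕ} (i : Fin (n+1)) (ω : Euc (n+1)) : Euc n :=
  WithLp.toLp 2 (fun j => ω (i.succAbove j))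

/-- insert the i-th coordinate -/
def insE {n : ℕ} (i : Fin (n+1)) : ℝ × Euc n ≃ᵐ Euc (n+1) :=
  ((MeasurableEquiv.refl ℝ).prodCongr (MeasurableEquiv.toLp 2 (Fin n → ℝ)).symm).trans
    ((MeasurableEquiv.piFinSuccAbove (fun _ => ℝ) i).symm.trans
      (MeasurableEquiv.toLp 2 (Fin (n+1) → ℝ)))

lemma insE_mp {n : ℕ} (i : Fin (n+1)) : MeasurePreserving (insE i) volume volume := by
  have h1 : MeasurePreserving ((MeasurableEquiv.refl ℝ).prodCongr (MeasurableEquiv.toLp 2 (Fin n → ℝ)).symm)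
      (volume.prod volume) (volume.prod volume) :=
    (MeasurePreserving.id _).prod (PiLp.volume_preserving_ofLp (Fin n))
  have h2 := (volume_preserving_piFinSuccAbove (fun _ : Fin (n+1) => ℝ) i).symm
  have h3 := PiLp.volume_preserving_toLp (Fin (n+1))
  exact h3.comp (h2.comp h1)

@[simp] lemma insE_self {n : ℕ} (i : Fin (n+1)) (p : ℝ × Euc n) : insE i p i = p.1 := by
  simp [insE]
  rfl

@[simp] lemma insE_succAbove {n : ℕ} (i : Fin (n+1)) (p : ℝ × Euc n) (j : Fin n) :
    insE i p (i.succAbove j) = p.2 j := by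
  simp [insE]
  rfl

@[simp] lemma proj_insE {n : ℕ} (i : Fin (n+1)) (p : ℝ × Euc n) : proj i (insE i p) = p.2 := by
  ext j; simp [proj]

lemma insE_inner {n : ℕ} (i : Fin (n+1)) (p : ℝ × Euc n) (ω : Euc (n+1)) :
    inner ℝ (insE i p) ω = p.1 * ω i + inner ℝ p.2 (proj i ω) := by
  simp only [PiLp.inner_apply, Fin.sum_univ_succAbove _ i]
  simp [proj, mul_comm]

lemma insE_norm_sq {n : ℕ} (i : Fin (n+1)) (p : ℝ × Euc n) :
    ‖insE i p‖^2 = p.1^2 + ‖p.2‖^2 := by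
  rw [← real_inner_self_eq_norm_sq, insE_inner, proj_insE, insE_self, real_inner_self_eq_norm_sq]
  ring

lemma insE_norm {n : ℕ} (i : Fin (n+1)) (p : ℝ × Euc n) :
    ‖insE i p‖ = √(p.1^2 + ‖p.2‖^2) := by
  rw [← insE_norm_sq i, Real.sqrt_sq (norm_nonneg _)]

lemma proj_cont {n : ℕ} (i : Fin (n+1)) : Continuous (proj i) := by
  unfold proj; fun_prop

lemma proj_meas {n : ℕ} (i : Fin (n+1)) : Measurable (proj i) := (proj_cont i).measurable

lemma proj_smul {n : ℕ} (i : Fin (n+1)) (c : ℝ) (ω : Euc (n+1)) : proj i (c • ω) = c • proj i ω := by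
  ext j; simp [proj]

lemma cov_half (b : ℝ) (S : Set ℝ) (hS : MeasurableSet S) (h0 : ∀ s ∈ S, s ≠ 0)
    (hinj : InjOn (fun s => √(s^2+b^2)) S) (g : ℝ → ℝ≥0∞) :
    ∫⁻ s in S, ENNReal.ofReal (|s| / √(s^2+b^2)) * g (√(s^2+b^2)) ≤ ∫⁻ τ, g τ := by
  have := lintegral_image_eq_lintegral_abs_deriv_mul (f := fun s => √(s^2+b^2))
    (f' := fun s => s / √(s^2+b^2)) hS ?_ hinj g
  · have h2 : ∫⁻ s in S, ENNReal.ofReal (|s| / √(s^2+b^2)) * g (√(s^2+b^2)) =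
      ∫⁻ s in S, ENNReal.ofReal (|s / √(s^2+b^2)|) * g (√(s^2+b^2)) := by
      refine lintegral_congr fun s => ?_
      rw [abs_div, abs_of_nonneg (Real.sqrt_nonneg (s^2+b^2))]
    rw [h2, ← this]
    exact setLIntegral_le_lintegral _ _
  · intro s hs
    have hs0 := h0 s hs
    have hp : 0 < s^2+b^2 := by positivity
    have h3 : HasDerivAt (fun s : ℝ => s^2+b^2) (2*s) s := by
      have := (hasDerivAt_pow 2 s).add_const (b^2)
      exact this.congr_deriv (by norm_num)
    have := h3.sqrt hp.ne'
    refine (this.congr_deriv ?_).hasDerivWithinAt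
    field_simp

lemma cov_full (b : ℝ) (g : ℝ → ℝ≥0∞) :
    ∫⁻ s, ENNReal.ofReal (|s| / √(s^2+b^2)) * g (√(s^2+b^2)) ≤ 2 * ∫⁻ τ, g τ := by
  rw [← lintegral_add_compl _ (measurableSet_Iio (a := (0:ℝ)))]
  have hc : (Iio (0:ℝ))ᶜ = Ici 0 := by ext; simp
  rw [hc, setLIntegral_congr Ioi_ae_eq_Ici.symm, two_mul]
  have key : ∀ s t : ℝ, √(s^2+b^2) = √(t^2+b^2) → s^2 = t^2 := by
    intro s t h
    have := (Real.sqrt_inj (by positivity) (by positivity)).1 h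
    linarith
  refine add_le_add (cov_half b _ measurableSet_Iio (fun s hs => ne_of_lt hs) ?_ g)
    (cov_half b _ measurableSet_Ioi (fun s hs => ne_of_gt hs) ?_ g)
  · intro s hs t ht h
    have := key s t h
    have hs' : s < 0 := hs
    have ht' : t < 0 := ht
    nlinarith
  · intro s hs t ht h
    have := key s t h
    have hs' : 0 < s := hs
    have ht' : 0 < t := ht
    nlinarith

lemma lintegral_scale {n : ℕ} (G : Euc n → ℝ≥0∞) (hG : Measurable G) (τ : ℝ) (hτ : 0 < τ) :
    ∫⁻ y, G (τ⁻¹ • y) = ENNReal.ofReal (τ^n) * ∫⁻ y, G y := by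
  have h := Measure.map_addHaar_smul (volume : Measure (Euc n)) (inv_ne_zero hτ.ne')
  have h1 : ∫⁻ y, G (τ⁻¹ • y) = ∫⁻ y, G y ∂(Measure.map (τ⁻¹ • ·) (volume : Measure (Euc n))) := by
    rw [lintegral_map hG (by fun_prop)]
  rw [h1, h, lintegral_smul_measure]
  simp
  rw [abs_of_nonneg hτ.le, ENNReal.ofReal_pow hτ.le]

lemma slice_bound {n : ℕ} (hn : 1 ≤ n) : ∃ C : ℝ≥0∞, C ≠ ∞ ∧ ∀ (i : Fin (n+1)) (G : Euc n → ℝ≥0∞),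
    Measurable G → ∫⁻ ω, ENNReal.ofReal |ω i| * G (proj i ω) ∂(sphereMeasure (n+1)) ≤ C * ∫⁻ y, G y := by
  obtain ⟨hc0, hct⟩ := shell_const (n+1) (by omega)
  have hsh := shell_lintegral (n+1) (by omega)
  set c := (sphC (n+1) * ∫⁻ ρ in Ioo (1:ℝ) 2, ENNReal.ofReal (ρ ^ (n+1-1)))
  refine ⟨c⁻¹ * (2 * ENNReal.ofReal (2^n)), by finiteness, fun i G hG => ?_⟩
  have hpm := proj_meas i
  have hgm : Measurable fun ω : Euc (n+1) => ENNReal.ofReal |ω i| * G (proj i ω) := by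
    have : Measurable fun ω : Euc (n+1) => ω i := by fun_prop
    exact (this.abs.ennreal_ofReal).mul (hG.comp hpm)
  have h1 := hsh _ hgm
  have hS : MeasurableSet {ξ : Euc (n+1) | 1 < ‖ξ‖ ∧ ‖ξ‖ < 2} := by
    apply MeasurableSet.inter
    · exact measurableSet_lt measurable_const measurable_norm
    · exact measurableSet_lt measurable_norm measurable_const
  have h2 : ∫⁻ ξ in {ξ : Euc (n+1) | 1 < ‖ξ‖ ∧ ‖ξ‖ < 2},
      ENNReal.ofReal |(‖ξ‖⁻¹ • ξ) i| * G (proj i (‖ξ‖⁻¹ • ξ)) ≤ (2 * ENNReal.ofReal (2^n)) * ∫⁻ y, G y := by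
    rw [← lintegral_indicator hS, ← (insE_mp i).lintegral_comp_emb (insE i).measurableEmbedding]
    rw [Measure.volume_eq_prod, lintegral_prod_symm]
    · calc _ ≤ ∫⁻ y : Euc n, 2 * ∫⁻ τ, (Ioo (1:ℝ) 2).indicator (fun τ => G (τ⁻¹ • y)) τ := by
            refine lintegral_mono fun y => ?_
            refine le_trans (lintegral_mono fun s => ?_) (cov_full ‖y‖ _)
            set r := √(s^2+‖y‖^2) with hr
            have hr' : ‖insE i (s, y)‖ = r := insE_norm i (s, y)
            simp only [indicator, mem_setOf_eq, hr', mem_Ioo]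
            split_ifs with h
            · rw [proj_smul, proj_insE]
              gcongr
              simp only [PiLp.smul_apply, insE_self, smul_eq_mul, abs_mul]
              rw [abs_of_nonneg (by positivity)]
              apply le_of_eq; field_simp
            · simp
        _ = 2 * ∫⁻ τ, ∫⁻ y : Euc n, (Ioo (1:ℝ) 2).indicator (fun τ => G (τ⁻¹ • y)) τ := by
            rw [lintegral_const_mul', lintegral_lintegral_swap]
            · apply Measurable.aemeasurable
              have : (Function.uncurry fun (y : Euc n) (τ : ℝ) =>
                (Ioo (1:ℝ) 2).indicator (fun τ => G (τ⁻¹ • y)) τ) =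
                (Prod.snd ⁻¹' (Ioo (1:ℝ) 2)).indicator (fun p : Euc n × ℝ => G (p.2⁻¹ • p.1)) := by
                ext ⟨y, τ⟩; rfl
              rw [this]
              refine Measurable.indicator ?_ (measurable_snd measurableSet_Ioo)
              exact hG.comp (by fun_prop)
            · simp
        _ ≤ 2 * ∫⁻ τ, (Ioo (1:ℝ) 2).indicator (fun τ => ENNReal.ofReal (2^n) * ∫⁻ y, G y) τ := by
            gcongr with τ
            by_cases h : τ ∈ Ioo (1:ℝ) 2
            · simp only [indicator_of_mem h]
              have h0 : 0 < τ := by linarith [h.1]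
              rw [lintegral_scale G hG τ h0]
              gcongr
              exact h.2.le
            · simp [indicator_of_notMem h]
        _ = _ := by
            rw [lintegral_indicator measurableSet_Ioo]
            simp
            norm_num
            ring
    · apply Measurable.aemeasurable
      refine Measurable.comp (Measurable.indicator ?_ hS) (insE i).measurable
      exact hgm.comp (by fun_prop)
  rw [h1] at h2
  calc _ = c⁻¹ * (c * ∫⁻ ω, ENNReal.ofReal |ω i| * G (proj i ω) ∂(sphereMeasure (n+1))) := by
        rw [← mul_assoc, ENNReal.inv_mul_cancel hc0 hct, one_mul]
    _ ≤ c⁻¹ * ((2 * ENNReal.ofReal (2^n)) * ∫⁻ y, G y) := by gcongr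
    _ = _ := by ring


lemma lintegral_abs_eq (g : ℝ → ℝ≥0∞) :
    ∫⁻ r, g |r| = 2 * ∫⁻ r in Ioi (0:ℝ), g r := by
  rw [← lintegral_add_compl _ (measurableSet_Iio (a := (0:ℝ)))]
  have hc : (Iio (0:ℝ))ᶜ = Ici 0 := by ext; simp
  rw [hc, setLIntegral_congr Ioi_ae_eq_Ici.symm, two_mul]
  have h1 : ∫⁻ r in Ioi (0:ℝ), g |r| = ∫⁻ r in Ioi (0:ℝ), g r :=
    setLIntegral_congr_fun measurableSet_Ioi fun r hr => by
      rw [abs_of_pos (show (0:ℝ) < r from hr)]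
  have h2 : ∫⁻ r in Iio (0:ℝ), g |r| = ∫⁻ r in Ioi (0:ℝ), g |r| := by
    rw [← lintegral_indicator measurableSet_Iio, ← lintegral_indicator measurableSet_Ioi,
      ← lintegral_neg_eq_self]
    refine lintegral_congr fun r => ?_
    simp [indicator]
  rw [h2, h1]

lemma kern_near (α R t : ℝ) (hα : α < 1) (hR : 0 < R) :
    ∫⁻ s in {s | |t - s| ≤ R}, ENNReal.ofReal (|t-s| ^ (-α)) = ENNReal.ofReal (2 / (1-α) * R ^ (1-α)) := by
  have hm : MeasurableSet {s : ℝ | |t - s| ≤ R} :=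
    measurableSet_le (by fun_prop) measurable_const
  rw [← lintegral_indicator hm]
  have e : ∀ s, {s : ℝ | |t - s| ≤ R}.indicator (fun s => ENNReal.ofReal (|t-s| ^ (-α))) s =
    (fun r => (Iic R).indicator (fun r => ENNReal.ofReal (r ^ (-α))) |r|) (t - s) := by
    intro s; simp [indicator]
  simp_rw [e]
  rw [lintegral_sub_left_eq_self (fun r => (Iic R).indicator (fun r => ENNReal.ofReal (r ^ (-α))) |r|) t,
    lintegral_abs_eq, setLIntegral_indicator measurableSet_Iic]
  have : Iic R ∩ Ioi 0 = Ioc 0 R := by ext; simp [and_comm]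
  rw [this, ← ofReal_integral_eq_lintegral_ofReal, ← intervalIntegral.integral_of_le hR.le,
    integral_rpow (Or.inl (by linarith)), Real.zero_rpow (by linarith)]
  · rw [show (2:ℝ≥0∞) = ENNReal.ofReal 2 by simp, ← ENNReal.ofReal_mul (by norm_num)]
    rw [show -α + 1 = 1 - α by ring]
    congr 1; ring
  · exact (intervalIntegrable_iff_integrableOn_Ioc_of_le hR.le).1
      (intervalIntegral.intervalIntegrable_rpow' (by linarith))
  · refine (ae_restrict_mem measurableSet_Ioc).mono fun r hr => ?_
    exact Real.rpow_nonneg hr.1.le _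

lemma kern_far (R t : ℝ) (hR : 0 < R) :
    ∫⁻ s in {s | R < |t - s|}, ENNReal.ofReal (|t-s| ^ (-2:ℝ)) = ENNReal.ofReal (2 / R) := by
  have hm : MeasurableSet {s : ℝ | R < |t - s|} :=
    measurableSet_lt measurable_const (by fun_prop)
  rw [← lintegral_indicator hm]
  have e : ∀ s, {s : ℝ | R < |t - s|}.indicator (fun s => ENNReal.ofReal (|t-s| ^ (-2:ℝ))) s =
    (fun r => (Ioi R).indicator (fun r => ENNReal.ofReal (r ^ (-2:ℝ))) |r|) (t - s) := by
    intro s; simp [indicator]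
  simp_rw [e]
  rw [lintegral_sub_left_eq_self (fun r => (Ioi R).indicator (fun r => ENNReal.ofReal (r ^ (-2:ℝ))) |r|) t,
    lintegral_abs_eq, setLIntegral_indicator measurableSet_Ioi]
  have : Ioi R ∩ Ioi 0 = Ioi R := by
    rw [Ioi_inter_Ioi, sup_eq_left.2 hR.le]
  rw [this, ← ofReal_integral_eq_lintegral_ofReal, integral_Ioi_rpow_of_lt (by norm_num) hR]
  · rw [show (2:ℝ≥0∞) = ENNReal.ofReal 2 by simp, ← ENNReal.ofReal_mul (by norm_num)]
    congr 1
    rw [show (-2:ℝ)+1 = -1 by norm_num, Real.rpow_neg_one]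
    field_simp
  · exact integrableOn_Ioi_rpow_of_lt (by norm_num) hR
  · refine (ae_restrict_mem measurableSet_Ioi).mono fun r hr => ?_
    exact Real.rpow_nonneg (hR.trans hr).le _

lemma hls_inner (p : ℝ) (hp1 : 1 < p) (hp2 : p < 2) (u : ℝ → ℝ≥0∞) (hu : Measurable u)
    (N a t : ℝ) (hN : 0 < N) (ha : 0 < a) (hNu : ∫⁻ s, u s ^ p = ENNReal.ofReal (N ^ p)) :
    ∫⁻ s in {s | u s ≤ ENNReal.ofReal a}, u s * ENNReal.ofReal (|t-s| ^ (-(2-2/p))) ≤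
      ENNReal.ofReal ((2 / (1-(2-2/p)) + 2) * (a ^ (p-1) * N ^ (2-p))) := by
  set α := 2 - 2/p with hα
  have hp0 : 0 < p := by linarith
  have hα1 : α < 1 := by
    have : 1 < 2/p := by rw [lt_div_iff₀ hp0]; linarith
    linarith
  set R := (N/a)^p with hR
  have hR0 : 0 < R := by positivity
  have hm1 : MeasurableSet {s | u s ≤ ENNReal.ofReal a} := measurableSet_le hu measurable_const
  have hm : MeasurableSet {s : ℝ | |t - s| ≤ R} :=
    measurableSet_le (by fun_prop) measurable_const
  have hk : Measurable fun s : ℝ => ENNReal.ofReal (|t-s| ^ (-α)) := by fun_prop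
  set q := p / (p-1) with hq
  have hpq : p.HolderConjugate q := by
    rw [hq]; exact Real.HolderConjugate.conjExponent hp1
  rw [← lintegral_inter_add_diff _ _ hm]
  have e1 : (1 - α) * p = 2 - p := by rw [hα]; field_simp; ring
  have e2 : α * q = 2 := by
    have : p - 1 ≠ 0 := by linarith
    rw [hα, hq]; field_simp;
  have h1 : ∫⁻ s in {s | u s ≤ ENNReal.ofReal a} ∩ {s : ℝ | |t - s| ≤ R},
      u s * ENNReal.ofReal (|t-s| ^ (-α)) ≤ ENNReal.ofReal (2/(1-α) * (a ^ (p-1) * N ^ (2-p))) := by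
    calc _ ≤ ∫⁻ s in {s | u s ≤ ENNReal.ofReal a} ∩ {s : ℝ | |t - s| ≤ R},
          ENNReal.ofReal a * ENNReal.ofReal (|t-s| ^ (-α)) := by
          refine setLIntegral_mono' (hm1.inter hm) fun s hs => ?_
          gcongr
          exact hs.1
      _ ≤ ∫⁻ s in {s : ℝ | |t - s| ≤ R},
          ENNReal.ofReal a * ENNReal.ofReal (|t-s| ^ (-α)) := lintegral_mono_set inter_subset_right
      _ = ENNReal.ofReal (a * (2 / (1-α) * R ^ (1-α))) := by
          rw [lintegral_const_mul _ hk, kern_near α R t hα1 hR0, ENNReal.ofReal_mul ha.le]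
      _ = _ := by
          congr 1
          rw [hR, ← Real.rpow_mul (by positivity), mul_comm p, e1, Real.div_rpow hN.le ha.le]
          have : a = a^(p-1) * a^(2-p) := by rw [← Real.rpow_add ha]; norm_num
          have h4 : 0 < a^(2-p) := by positivity
          have h5 : a^(p-1) = a / a^(2-p) := by field_simp; exact this.symm
          rw [h5]; ring
  have h2 : ∫⁻ s in {s | u s ≤ ENNReal.ofReal a} \ {s : ℝ | |t - s| ≤ R},
      u s * ENNReal.ofReal (|t-s| ^ (-α)) ≤ ENNReal.ofReal (2 * (a ^ (p-1) * N ^ (2-p))) := by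
    calc _ ≤ ∫⁻ s in {s : ℝ | R < |t - s|}, u s * ENNReal.ofReal (|t-s| ^ (-α)) := by
          refine lintegral_mono_set fun s hs => ?_
          simpa using hs.2
      _ ≤ (∫⁻ s in {s : ℝ | R < |t - s|}, u s ^ p) ^ (1/p) *
          (∫⁻ s in {s : ℝ | R < |t - s|}, ENNReal.ofReal (|t-s| ^ (-α)) ^ q) ^ (1/q) :=
          ENNReal.lintegral_mul_le_Lp_mul_Lq _ hpq hu.aemeasurable hk.aemeasurable
      _ ≤ (ENNReal.ofReal (N^p)) ^ (1/p) * (ENNReal.ofReal (2/R)) ^ (1/q) := by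
          have hq0 := hpq.symm.pos
          gcongr
          · rw [← hNu]; exact setLIntegral_le_lintegral _ _
          · rw [← kern_far R t hR0]
            refine lintegral_mono fun s => ?_
            rw [ENNReal.ofReal_rpow_of_nonneg (by positivity) hq0.le, ← Real.rpow_mul (abs_nonneg _)]
            rw [neg_mul, e2]
      _ = ENNReal.ofReal (N * (2/R)^(1/q)) := by
          rw [ENNReal.ofReal_rpow_of_nonneg (by positivity) (by positivity),
            ENNReal.ofReal_rpow_of_nonneg (by positivity) (by have := hpq.symm.pos; positivity),
            ← ENNReal.ofReal_mul (by positivity), ← Real.rpow_mul hN.le, mul_one_div_cancel hp0.ne',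
            Real.rpow_one]
      _ ≤ _ := by
          apply ENNReal.ofReal_le_ofReal
          have e3 : p * (1/q) = p - 1 := by rw [hq]; field_simp
          rw [Real.div_rpow (by norm_num) hR0.le, hR, ← Real.rpow_mul (by positivity), e3,
            Real.div_rpow hN.le ha.le]
          have h6 : (2:ℝ)^(1/q) ≤ 2 := by
            conv_rhs => rw [← Real.rpow_one 2]
            apply Real.rpow_le_rpow_of_exponent_le (by norm_num)
            rw [div_le_one hpq.symm.pos]; exact hpq.symm.lt.le
          have h5 : N^(2-p) = N / N^(p-1) := by
            have : N^(2-p) * N^(p-1) = N := by rw [← Real.rpow_add hN]; norm_num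
            field_simp; exact this
          rw [h5]
          calc N * (2 ^ (1 / q) / (N ^ (p - 1) / a ^ (p - 1))) =
              2^(1/q) * (a ^ (p - 1) * (N / N ^ (p - 1))) := by field_simp
            _ ≤ _ := by gcongr
  refine (add_le_add h1 h2).trans_eq ?_
  rw [← ENNReal.ofReal_add]
  · congr 1; ring
  · have : 0 < 1 - α := by linarith
    positivity
  · positivity

lemma hls (p : ℝ) (hp1 : 1 < p) (hp2 : p < 2) : ∃ C : ℝ≥0∞, C ≠ ∞ ∧ ∀ u : ℝ → ℝ≥0∞, Measurable u →
    ∫⁻ t, ∫⁻ s, u t * u s * ENNReal.ofReal (|t-s| ^ (-(2-2/p))) ≤ C * (∫⁻ s, u s ^ p) ^ (2/p) := by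
  have hp0 : 0 < p := by linarith
  set α := 2 - 2/p with hα
  have hα1 : α < 1 := by
    have : 1 < 2/p := by rw [lt_div_iff₀ hp0]; linarith
    linarith
  set K := 2 / (1-α) + 2 with hK
  have hK0 : 0 < K := by
    have : 0 < 1 - α := by linarith
    positivity
  refine ⟨ENNReal.ofReal (2 * K), by finiteness, fun u hu => ?_⟩
  rcases eq_or_ne (∫⁻ s, u s ^ p) ∞ with htop | htop
  · rw [htop, ENNReal.top_rpow_of_pos (by positivity), ENNReal.mul_top]
    · exact le_top
    · simp; positivity
  rcases eq_or_ne (∫⁻ s, u s ^ p) 0 with h0 | h0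
  · have : ∀ᵐ s, u s = 0 := by
      rw [lintegral_eq_zero_iff (by fun_prop)] at h0
      filter_upwards [h0] with s hs
      simpa [hp0, hp0.le, hp0.not_gt] using hs
    have e : ∫⁻ t, ∫⁻ s, u t * u s * ENNReal.ofReal (|t-s| ^ (-α)) = 0 := by
      rw [lintegral_eq_zero_iff' ]
      · filter_upwards [this] with t ht
        simp [ht]
      · apply Measurable.aemeasurable
        apply Measurable.lintegral_prod_right'
          (f := fun x : ℝ × ℝ => u x.1 * u x.2 * ENNReal.ofReal (|x.1-x.2| ^ (-α)))
        fun_prop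
    rw [e]; exact zero_le
  set N := (∫⁻ s, u s ^ p).toReal ^ (1/p) with hN
  have hNp : N ^ p = (∫⁻ s, u s ^ p).toReal := by
    rw [hN, ← Real.rpow_mul (by positivity), one_div_mul_cancel hp0.ne', Real.rpow_one]
  have hN0 : 0 < N := by
    have := ENNReal.toReal_pos h0 htop
    positivity
  have hNu : ∫⁻ s, u s ^ p = ENNReal.ofReal (N ^ p) := by
    rw [hNp, ENNReal.ofReal_toReal htop]
  have hFm : Measurable (fun x : ℝ × ℝ => u x.1 * u x.2 * ENNReal.ofReal (|x.1-x.2| ^ (-α))) := by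
    fun_prop
  have hS : MeasurableSet {x : ℝ × ℝ | u x.2 ≤ u x.1} := measurableSet_le (by fun_prop) (by fun_prop)
  set H : ℝ × ℝ → ℝ≥0∞ := {x : ℝ × ℝ | u x.2 ≤ u x.1}.indicator
    (fun x : ℝ × ℝ => u x.1 * u x.2 * ENNReal.ofReal (|x.1-x.2| ^ (-α))) with hH
  have hHm : Measurable H := hFm.indicator hS
  have hhalf : ∫⁻ t, ∫⁻ s, H (t, s) ≤ ENNReal.ofReal (K * N^2) := by
    have fin : ∀ᵐ t, u t ^ p < ∞ := ae_lt_top (by fun_prop) htop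
    calc _ ≤ ∫⁻ t, ENNReal.ofReal (K * N ^ (2-p)) * u t ^ p := by
          refine lintegral_mono_ae ?_
          filter_upwards [fin] with t ht
          have htt : u t ≠ ∞ := by
            intro h; rw [h, ENNReal.top_rpow_of_pos hp0] at ht; exact lt_irrefl _ ht
          rcases eq_or_ne (u t) 0 with h | h
          · simp [hH, indicator, h]
          set a := (u t).toReal with ha
          have ha0 : 0 < a := ENNReal.toReal_pos h htt
          have hua : u t = ENNReal.ofReal a := by rw [ha, ENNReal.ofReal_toReal htt]
          have := hls_inner p hp1 hp2 u hu N a t hN0 ha0 hNu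
          have hm1 : MeasurableSet {s | u s ≤ ENNReal.ofReal a} := measurableSet_le hu measurable_const
          calc ∫⁻ s, H (t, s) = ENNReal.ofReal a * ∫⁻ s in {s | u s ≤ ENNReal.ofReal a}, u s * ENNReal.ofReal (|t-s| ^ (-α)) := by
                rw [← lintegral_indicator hm1, ← lintegral_const_mul' _ _ (by simp)]
                refine lintegral_congr fun s => ?_
                simp only [hH, indicator, mem_setOf_eq, hua]
                split_ifs
                · ring
                · simp
            _ ≤ ENNReal.ofReal a * ENNReal.ofReal (K * (a ^ (p-1) * N ^ (2-p))) := by gcongr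
            _ = _ := by
                rw [hua, ENNReal.ofReal_rpow_of_pos ha0, ← ENNReal.ofReal_mul ha0.le,
                  ← ENNReal.ofReal_mul (by positivity)]
                congr 1
                have : a ^ p = a * a^(p-1) := by
                  rw [Real.rpow_sub_one ha0.ne']; field_simp
                rw [this]; ring
      _ = ENNReal.ofReal (K * N ^ (2-p)) * ENNReal.ofReal (N ^ p) := by
          rw [lintegral_const_mul _ (by fun_prop), hNu]
      _ = _ := by
          rw [← ENNReal.ofReal_mul (by positivity), mul_assoc, ← Real.rpow_add hN0]
          norm_num
  calc _ ≤ ∫⁻ t, ∫⁻ s, (H (t, s) + H (s, t)) := by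
        refine lintegral_mono fun t => lintegral_mono fun s => ?_
        simp only [hH, indicator, mem_setOf_eq]
        rcases le_total (u s) (u t) with h | h
        · rw [if_pos h]; exact le_self_add
        · rw [if_pos h, abs_sub_comm s t, mul_comm (u s)]; exact le_add_self
    _ = (∫⁻ t, ∫⁻ s, H (t, s)) + ∫⁻ t, ∫⁻ s, H (s, t) := by
        rw [← lintegral_add_left (by exact hHm.lintegral_prod_right')]
        refine lintegral_congr fun t => ?_
        rw [lintegral_add_left (by fun_prop)]
    _ = (∫⁻ t, ∫⁻ s, H (t, s)) + ∫⁻ t, ∫⁻ s, H (t, s) := by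
        congr 1
        rw [lintegral_lintegral_swap]
        exact (hHm.comp measurable_swap).aemeasurable
    _ ≤ ENNReal.ofReal (K * N^2) + ENNReal.ofReal (K * N^2) := add_le_add hhalf hhalf
    _ = _ := by
        rw [hNu, ENNReal.ofReal_rpow_of_pos (by positivity), ← Real.rpow_mul hN0.le,
          mul_div_cancel₀ _ hp0.ne', ← ENNReal.ofReal_mul (by positivity), ← ENNReal.ofReal_add (by positivity) (by positivity)]
        congr 1
        rw [Real.rpow_two]; ring


/-- bounded measurable functions with bounded support -/
structure Dcl {m : ℕ} (u : Euc m → ℂ) : Prop where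
  meas : Measurable u
  bdd : ∃ K : ℝ, ∀ x, ‖u x‖ ≤ K
  supp : ∃ R : ℝ, ∀ x, R < ‖x‖ → u x = 0

lemma Dcl.lint {m : ℕ} {u : Euc m → ℂ} (h : Dcl u) (p : ℝ) (hp : 0 < p) : ∫⁻ x, ‖u x‖ₑ ^ p < ∞ := by
  obtain ⟨K, hK⟩ := h.bdd
  obtain ⟨R, hR⟩ := h.supp
  calc ∫⁻ x, ‖u x‖ₑ ^ p ≤ ∫⁻ x, (closedBall (0 : Euc m) R).indicator (fun _ => (ENNReal.ofReal K)^p) x := by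
        refine lintegral_mono fun x => ?_
        by_cases hx : x ∈ closedBall (0 : Euc m) R
        · rw [indicator_of_mem hx]
          gcongr
          rw [← ofReal_norm]
          exact ENNReal.ofReal_le_ofReal (hK x)
        · have : R < ‖x‖ := by simpa using hx
          simp [hR x this, hp]
    _ < ∞ := by
        rw [lintegral_indicator measurableSet_closedBall]
        simp only [lintegral_const, Measure.restrict_apply_univ]
        refine ENNReal.mul_lt_top ?_ measure_closedBall_lt_top
        exact ENNReal.rpow_lt_top_of_nonneg hp.le (by simp)

lemma Dcl.memLp {m : ℕ} {u : Euc m → ℂ} (h : Dcl u) (p : ℝ) (hp : 0 < p) :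
    MemLp u (ENNReal.ofReal p) volume := by
  refine ⟨h.meas.aestronglyMeasurable, ?_⟩
  rw [eLpNorm_eq_lintegral_rpow_enorm_toReal (by simpa using hp) (by simp)]
  rw [ENNReal.toReal_ofReal hp.le]
  exact ENNReal.rpow_lt_top_of_nonneg (by positivity) (h.lint p hp).ne

lemma Dcl.integrable {m : ℕ} {u : Euc m → ℂ} (h : Dcl u) : Integrable u := by
  have := h.memLp 1 one_pos
  rw [ENNReal.ofReal_one] at this
  exact memLp_one_iff_integrable.1 this

lemma Dcl.memLp2 {m : ℕ} {u : Euc m → ℂ} (h : Dcl u) : MemLp u 2 volume := by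
  have := h.memLp 2 two_pos
  simpa using this

lemma Dcl.indicator {m : ℕ} {u : Euc m → ℂ} (h : Dcl u) (S : Set (Euc m)) (hS : MeasurableSet S) :
    Dcl (S.indicator u) := by
  obtain ⟨K, hK⟩ := h.bdd
  obtain ⟨R, hR⟩ := h.supp
  refine ⟨h.meas.indicator hS, ⟨K, fun x => ?_⟩, ⟨R, fun x hx => ?_⟩⟩
  · exact (norm_indicator_le_norm_self u x).trans (hK x)
  · by_cases hxs : x ∈ S
    · rw [indicator_of_mem hxs, hR x hx]
    · rw [indicator_of_notMem hxs]

lemma duality {m : ℕ} (q p : ℝ) (hpq : q.HolderConjugate p) (G : Euc m → ℂ) (hG : Measurable G)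
    (hb : ∃ K : ℝ, ∀ x, ‖G x‖ ≤ K) (M : ℝ≥0∞)
    (h : ∀ u : Euc m → ℂ, Dcl u → ‖∫ x, u x * G x‖ₑ ≤ M * (∫⁻ x, ‖u x‖ₑ ^ p) ^ (1/p)) :
    ∫⁻ x, ‖G x‖ₑ ^ q ≤ M ^ q := by
  obtain ⟨K, hK⟩ := hb
  have hK0 : 0 ≤ K := (norm_nonneg _).trans (hK 0)
  have hq0 := hpq.pos
  have hp0 := hpq.symm.pos
  have hq1 : 0 < q - 1 := by linarith [hpq.lt]
  have key : ∀ R : ℕ, ∫⁻ x in closedBall (0 : Euc m) R, ‖G x‖ₑ ^ q ≤ M ^ q := by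
    intro R
    set u : Euc m → ℂ := (closedBall (0 : Euc m) R).indicator
      (fun x => ((‖G x‖ ^ (q-1) : ℝ) : ℂ) * (starRingEnd ℂ (G x) / (‖G x‖ : ℂ))) with hu
    have hun : ∀ x ∈ closedBall (0 : Euc m) R, ‖u x‖ = ‖G x‖ ^ (q-1) := by
      intro x hx
      rw [hu, indicator_of_mem hx, norm_mul, norm_div, RCLike.norm_conj, Complex.norm_real, Complex.norm_real]
      rw [Real.norm_of_nonneg (by positivity), norm_norm]
      rcases eq_or_ne (‖G x‖) 0 with h0 | h0
      · rw [h0, Real.zero_rpow hq1.ne']; simp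
      · rw [div_self h0, mul_one]
    have huD : Dcl u := by
      refine ⟨?_, ⟨K ^ (q-1), fun x => ?_⟩, ⟨R, fun x hx => ?_⟩⟩
      · refine Measurable.indicator ?_ measurableSet_closedBall
        refine Measurable.mul (by fun_prop) (Measurable.div ?_ (by fun_prop))
        exact Complex.continuous_conj.measurable.comp hG
      · by_cases hx : x ∈ closedBall (0 : Euc m) R
        · rw [hun x hx]
          exact Real.rpow_le_rpow (norm_nonneg _) (hK x) hq1.le
        · rw [hu, indicator_of_notMem hx]; simp; positivity
      · rw [hu, indicator_of_notMem]; simpa using hx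
    set I := ∫⁻ x in closedBall (0 : Euc m) R, ‖G x‖ₑ ^ q with hI
    have e1 : ∫⁻ x, ‖u x‖ₑ ^ p = I := by
      rw [hI, ← lintegral_indicator measurableSet_closedBall]
      refine lintegral_congr fun x => ?_
      by_cases hx : x ∈ closedBall (0 : Euc m) R
      · rw [indicator_of_mem hx, ← ofReal_norm, ← ofReal_norm, hun x hx,
          ENNReal.ofReal_rpow_of_nonneg (by positivity) hp0.le,
          ENNReal.ofReal_rpow_of_nonneg (by positivity) hq0.le, ← Real.rpow_mul (norm_nonneg _)]
        rw [hpq.sub_one_mul_conj]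
      · simp [hu, indicator_of_notMem hx, hp0]
    have hIfin : I ≠ ∞ := by rw [← e1]; exact (huD.lint p hp0).ne
    have e2 : ‖∫ x, u x * G x‖ₑ = I := by
      have e3 : ∀ x, u x * G x = (((closedBall (0 : Euc m) R).indicator (fun x => ‖G x‖ ^ q) x : ℝ) : ℂ) := by
        intro x
        by_cases hx : x ∈ closedBall (0 : Euc m) R
        · rw [hu, indicator_of_mem hx, indicator_of_mem hx]
          have : (starRingEnd ℂ) (G x) * G x = ((‖G x‖^2 : ℝ) : ℂ) := by
            rw [mul_comm, Complex.mul_conj, Complex.normSq_eq_norm_sq]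
          rcases eq_or_ne (‖G x‖) 0 with h0 | h0
          · rw [h0, Real.zero_rpow hq0.ne', Real.zero_rpow hq1.ne']; simp
          · calc _ = ((‖G x‖ ^ (q-1) : ℝ) : ℂ) * ((starRingEnd ℂ) (G x) * G x / (‖G x‖ : ℂ)) := by ring
              _ = ((‖G x‖ ^ (q-1) * (‖G x‖^2 / ‖G x‖) : ℝ) : ℂ) := by rw [this]; push_cast; ring
              _ = _ := by
                congr 1
                rw [Real.rpow_sub_one h0]; field_simp
        · simp [hu, indicator_of_notMem hx]
      simp_rw [e3]
      rw [integral_complex_ofReal, ← ofReal_norm, Complex.norm_real]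
      have hnn : ∀ x, 0 ≤ (closedBall (0 : Euc m) R).indicator (fun x => ‖G x‖ ^ q) x :=
        fun x => indicator_nonneg (fun y _ => by positivity) x
      rw [Real.norm_of_nonneg (integral_nonneg hnn), ofReal_integral_eq_lintegral_ofReal]
      · rw [hI, ← lintegral_indicator measurableSet_closedBall]
        refine lintegral_congr fun x => ?_
        by_cases hx : x ∈ closedBall (0 : Euc m) R
        · rw [indicator_of_mem hx, indicator_of_mem hx, ← ofReal_norm,
            ENNReal.ofReal_rpow_of_nonneg (by positivity) hq0.le]
        · simp [indicator_of_notMem hx]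
      · rw [integrable_indicator_iff measurableSet_closedBall]
        refine Measure.integrableOn_of_bounded (M := K^q) measure_closedBall_lt_top.ne ?_ ?_
        · exact (hG.norm.pow_const q).aestronglyMeasurable
        · refine Filter.Eventually.of_forall fun x => ?_
          rw [Real.norm_of_nonneg (by positivity)]
          exact Real.rpow_le_rpow (norm_nonneg _) (hK x) hq0.le
      · exact Filter.Eventually.of_forall hnn
    have := h u huD
    rw [e1, e2] at this
    rcases eq_or_ne I 0 with h0 | h0
    · rw [h0]; exact zero_le
    have h7 : I ^ (1/q) ≤ M := by
      have hs : I = I ^ (1/q) * I ^ (1/p) := by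
        rw [← ENNReal.rpow_add _ _ h0 hIfin, one_div, one_div, hpq.inv_add_inv_eq_one, ENNReal.rpow_one]
      have hne : I ^ (1/p) ≠ 0 := by simp [h0, hIfin]
      have hnt : I ^ (1/p) ≠ ∞ := ENNReal.rpow_ne_top_of_nonneg (by positivity) hIfin
      rw [hs] at this
      have h9 : I ^ (1/p) = (I ^ (1/q) * I ^ (1/p)) ^ (1/p) := by rw [← hs]
      rw [← h9] at this
      exact (ENNReal.mul_le_mul_iff_left hne hnt).1 this
    calc I = (I ^ (1/q)) ^ q := by rw [← ENNReal.rpow_mul, one_div_mul_cancel hq0.ne', ENNReal.rpow_one]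
      _ ≤ _ := by gcongr
  have hun : ⋃ R : ℕ, closedBall (0 : Euc m) R = univ := iUnion_closedBall_nat 0
  rw [← setLIntegral_univ, ← hun, setLIntegral_iUnion_of_directed]
  · exact iSup_le key
  · refine Monotone.directed_le fun a b hab => ?_
    exact closedBall_subset_closedBall (by exact_mod_cast hab)

lemma lint_pow_near (β R : ℝ) (hβ : -1 < β) (hR : 0 < R) :
    ∫⁻ a in Ioc 0 R, ENNReal.ofReal (a ^ β) = ENNReal.ofReal (R ^ (β+1) / (β+1)) := by
  rw [← ofReal_integral_eq_lintegral_ofReal, ← intervalIntegral.integral_of_le hR.le,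
    integral_rpow (Or.inl hβ), Real.zero_rpow (by linarith), sub_zero]
  · exact (intervalIntegrable_iff_integrableOn_Ioc_of_le hR.le).1
      (intervalIntegral.intervalIntegrable_rpow' hβ)
  · refine (ae_restrict_mem measurableSet_Ioc).mono fun r hr => ?_
    exact Real.rpow_nonneg hr.1.le _

lemma marcin {m : ℕ} (q p : ℝ) (hpq : q.HolderConjugate p) (hq2 : 2 < q)
    (T : (Euc m → ℂ) → (Euc m → ℂ))
    (hadd : ∀ u v, Dcl u → Dcl v → ∀ x, T (u + v) x = T u x + T v x)
    (hm : ∀ u, Dcl u → Measurable (T u))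
    (A2 : ℝ≥0∞) (B : ℝ) (hB : 0 < B)
    (h2 : ∀ u, Dcl u → ∫⁻ x, ‖T u x‖ₑ ^ (2:ℝ) ≤ A2 * ∫⁻ x, ‖u x‖ₑ ^ (2:ℝ))
    (h1 : ∀ u, Dcl u → ∀ x, ‖T u x‖ₑ ≤ ENNReal.ofReal B * ∫⁻ x, ‖u x‖ₑ)
    (u : Euc m → ℂ) (hu : Dcl u) :
    ∫⁻ x, ‖T u x‖ₑ ^ q ≤ ENNReal.ofReal (2 ^ q * q / (q-2)) * (A2 * ENNReal.ofReal (B ^ (q-2)) *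
      (∫⁻ x, ‖u x‖ₑ ^ p) ^ (q-1)) := by
  have hq0 := hpq.pos
  have hp0 := hpq.symm.pos
  have hp1 : 0 < p - 1 := by linarith [hpq.symm.lt]
  have hPfin := (hu.lint p hp0).ne
  rcases eq_or_ne (∫⁻ x, ‖u x‖ₑ ^ p) 0 with h0 | h0
  · have hu0 : ∀ᵐ x, u x = 0 := by
      rw [lintegral_eq_zero_iff (by have := hu.meas; fun_prop)] at h0
      filter_upwards [h0] with s hs
      simpa [hp0, hp0.le, hp0.not_gt] using hs
    have h3 := h2 u hu
    have h4 : ∫⁻ x, ‖u x‖ₑ ^ (2:ℝ) = 0 := by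
      rw [lintegral_eq_zero_iff (by have := hu.meas; fun_prop)]
      filter_upwards [hu0] with x hx
      simp [hx]
    rw [h4, mul_zero] at h3
    have h5 : ∀ᵐ x, ‖T u x‖ₑ ^ (2:ℝ) = 0 := by
      have := nonpos_iff_eq_zero.1 h3
      rw [lintegral_eq_zero_iff (by have := hm u hu; fun_prop)] at this
      exact this
    have h6 : ∫⁻ x, ‖T u x‖ₑ ^ q = 0 := by
      rw [lintegral_eq_zero_iff (by have := hm u hu; fun_prop)]
      filter_upwards [h5] with x hx
      have : T u x = 0 := by simpa using hx
      simp [this, hq0]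
    rw [h6]; exact zero_le
  set P := (∫⁻ x, ‖u x‖ₑ ^ p).toReal with hP
  have hP0 : 0 < P := ENNReal.toReal_pos h0 hPfin
  have hPe : ∫⁻ x, ‖u x‖ₑ ^ p = ENNReal.ofReal P := (ENNReal.ofReal_toReal hPfin).symm
  have hTm := hm u hu
  -- weak type
  have weak : ∀ a : ℝ, 0 < a → volume {x | a < ‖T u x‖ / 2} ≤
      ENNReal.ofReal (a ^ (-2:ℝ)) * (A2 * ∫⁻ x in {x | a * ‖u x‖^(p-1) ≤ B * P}, ‖u x‖ₑ ^ (2:ℝ)) := by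
    intro a ha
    set S := {x | a * ‖u x‖^(p-1) ≤ B * P} with hS
    have hSm : MeasurableSet S := measurableSet_le (by have := hu.meas; fun_prop) measurable_const
    have hlo := hu.indicator S hSm
    have hhi := hu.indicator Sᶜ hSm.compl
    have hsum : u = S.indicator u + Sᶜ.indicator u := (indicator_self_add_compl S u).symm
    have hhib : ∀ x, ‖T (Sᶜ.indicator u) x‖ₑ ≤ ENNReal.ofReal a := by
      intro x
      refine (h1 _ hhi x).trans ?_
      calc _ ≤ ENNReal.ofReal B * ∫⁻ x, ENNReal.ofReal (a / (B*P)) * ‖u x‖ₑ ^ p := by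
            gcongr with y
            by_cases hy : y ∈ Sᶜ
            · rw [indicator_of_mem hy]
              have hy' : B * P < a * ‖u y‖^(p-1) := by simpa [hS] using hy
              have hu0 : 0 < ‖u y‖ := by
                by_contra hcon
                have : ‖u y‖ = 0 := le_antisymm (not_lt.1 hcon) (norm_nonneg _)
                rw [this, Real.zero_rpow hp1.ne', mul_zero] at hy'
                have : 0 < B * P := by positivity
                linarith
              rw [← ofReal_norm, ENNReal.ofReal_rpow_of_nonneg (by positivity) hp0.le,
                ← ENNReal.ofReal_mul (by positivity)]
              apply ENNReal.ofReal_le_ofReal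
              rw [div_mul_eq_mul_div, le_div_iff₀ (by positivity)]
              have : ‖u y‖ ^ p = ‖u y‖ * ‖u y‖^(p-1) := by
                rw [Real.rpow_sub_one hu0.ne']; field_simp
              rw [this]
              nlinarith
            · simp [indicator_of_notMem hy]
        _ = ENNReal.ofReal a := by
            rw [lintegral_const_mul _ (by have := hu.meas; fun_prop), hPe,
              ← ENNReal.ofReal_mul (by positivity), ← ENNReal.ofReal_mul (by positivity)]
            congr 1; field_simp
    have hsub : {x | a < ‖T u x‖ / 2} ⊆ {x | ENNReal.ofReal (a^(2:ℝ)) ≤ ‖T (S.indicator u) x‖ₑ ^ (2:ℝ)} := by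
      intro x hx
      have hx' : a < ‖T u x‖ / 2 := hx
      have e := hadd _ _ hlo hhi x
      rw [← hsum] at e
      have h3 : ‖T (Sᶜ.indicator u) x‖ ≤ a := by
        have := hhib x
        rw [← ofReal_norm] at this
        exact (ENNReal.ofReal_le_ofReal_iff ha.le).1 this
      have h4 := norm_add_le (T (S.indicator u) x) (T (Sᶜ.indicator u) x)
      rw [← e] at h4
      have h5 : a ≤ ‖T (S.indicator u) x‖ := by linarith
      rw [mem_setOf_eq, ← ENNReal.ofReal_rpow_of_pos ha, ← ofReal_norm]
      gcongr
    have h6 := mul_meas_ge_le_lintegral (μ := volume)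
      (show Measurable fun x => ‖T (S.indicator u) x‖ₑ ^ (2:ℝ) by have := hm _ hlo; fun_prop)
      (ENNReal.ofReal (a^(2:ℝ)))
    have h7 := h6.trans (h2 _ hlo)
    have h8 : ∫⁻ x, ‖S.indicator u x‖ₑ ^ (2:ℝ) = ∫⁻ x in S, ‖u x‖ₑ ^ (2:ℝ) := by
      rw [← lintegral_indicator hSm]
      refine lintegral_congr fun x => ?_
      by_cases hx : x ∈ S
      · simp [indicator_of_mem hx]
      · simp [indicator_of_notMem hx]
    rw [h8] at h7
    calc volume {x | a < ‖T u x‖ / 2} ≤ volume {x | ENNReal.ofReal (a^(2:ℝ)) ≤ ‖T (S.indicator u) x‖ₑ ^ (2:ℝ)} :=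
          measure_mono hsub
      _ = ENNReal.ofReal (a^(-2:ℝ)) * (ENNReal.ofReal (a^(2:ℝ)) * volume {x | ENNReal.ofReal (a^(2:ℝ)) ≤ ‖T (S.indicator u) x‖ₑ ^ (2:ℝ)}) := by
          rw [← mul_assoc, ← ENNReal.ofReal_mul (by positivity), ← Real.rpow_add ha]
          norm_num
      _ ≤ _ := by gcongr
  -- layer cake
  have lc := lintegral_rpow_eq_lintegral_meas_lt_mul volume (f := fun x => ‖T u x‖ / 2)
    (Filter.Eventually.of_forall fun x => by positivity) (by fun_prop) hq0
  have e0 : ∫⁻ x, ‖T u x‖ₑ ^ q = ENNReal.ofReal (2^q) * ∫⁻ x, ENNReal.ofReal ((‖T u x‖ / 2)^q) := by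
    rw [← lintegral_const_mul _ (by fun_prop)]
    refine lintegral_congr fun x => ?_
    rw [← ENNReal.ofReal_mul (by positivity), ← ofReal_norm, ENNReal.ofReal_rpow_of_nonneg (by positivity) hq0.le,
      Real.div_rpow (by positivity) (by norm_num)]
    congr 1; field_simp
  have hum := hu.meas
  have e1 : ∫⁻ t in Ioi 0, volume {x | t < ‖T u x‖ / 2} * ENNReal.ofReal (t ^ (q-1)) ≤
      A2 * (ENNReal.ofReal ((B*P) ^ (q-2) / (q-2)) * ENNReal.ofReal P) := by
    have hjoint : MeasurableSet {z : ℝ × Euc m | z.1 * ‖u z.2‖^(p-1) ≤ B * P} :=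
      measurableSet_le (by fun_prop) measurable_const
    calc _ ≤ ∫⁻ t in Ioi (0:ℝ), A2 * ∫⁻ x, ENNReal.ofReal (t^(q-3)) *
            {z : ℝ × Euc m | z.1 * ‖u z.2‖^(p-1) ≤ B * P}.indicator (fun z => ‖u z.2‖ₑ ^ (2:ℝ)) (t, x) := by
          refine setLIntegral_mono' measurableSet_Ioi fun t ht => ?_
          have ht0 : 0 < t := ht
          have := weak t ht0
          have hSm : MeasurableSet {x | t * ‖u x‖^(p-1) ≤ B * P} :=
            measurableSet_le (by fun_prop) measurable_const
          calc _ ≤ (ENNReal.ofReal (t ^ (-2:ℝ)) * (A2 * ∫⁻ x in {x | t * ‖u x‖^(p-1) ≤ B * P}, ‖u x‖ₑ ^ (2:ℝ))) * ENNReal.ofReal (t ^ (q-1)) := by gcongr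
            _ = A2 * ((ENNReal.ofReal (t ^ (-2:ℝ)) * ENNReal.ofReal (t ^ (q-1))) * ∫⁻ x in {x | t * ‖u x‖^(p-1) ≤ B * P}, ‖u x‖ₑ ^ (2:ℝ)) := by ring
            _ = _ := by
              rw [← ENNReal.ofReal_mul (by positivity), ← Real.rpow_add ht0, lintegral_const_mul' _ _ (by simp),
                ← lintegral_indicator hSm]
              rw [show (-2:ℝ) + (q-1) = q - 3 by ring]
              rfl
      _ = A2 * ∫⁻ x, ∫⁻ t in Ioi (0:ℝ), ENNReal.ofReal (t^(q-3)) *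
            {z : ℝ × Euc m | z.1 * ‖u z.2‖^(p-1) ≤ B * P}.indicator (fun z => ‖u z.2‖ₑ ^ (2:ℝ)) (t, x) := by
          have hmm : Measurable (fun z : ℝ × Euc m => ENNReal.ofReal (z.1^(q-3)) *
            {z : ℝ × Euc m | z.1 * ‖u z.2‖^(p-1) ≤ B * P}.indicator (fun z => ‖u z.2‖ₑ ^ (2:ℝ)) z) := by
            refine Measurable.mul (by fun_prop) (Measurable.indicator (by fun_prop) hjoint)
          rw [lintegral_const_mul _ (by exact hmm.lintegral_prod_right'), lintegral_lintegral_swap]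
          exact hmm.aemeasurable
      _ ≤ A2 * ∫⁻ x, ENNReal.ofReal ((B*P) ^ (q-2) / (q-2)) * ‖u x‖ₑ ^ p := by
          gcongr with x
          rcases eq_or_ne (‖u x‖) 0 with hx0 | hx0
          · have : u x = 0 := norm_eq_zero.1 hx0
            simp [indicator, this]
          have hx : 0 < ‖u x‖ := lt_of_le_of_ne (norm_nonneg _) hx0.symm
          set R := B * P / ‖u x‖^(p-1) with hR
          have hR0 : 0 < R := by positivity
          have e5 : ∫⁻ t in Ioi (0:ℝ), ENNReal.ofReal (t^(q-3)) *
            {z : ℝ × Euc m | z.1 * ‖u z.2‖^(p-1) ≤ B * P}.indicator (fun z => ‖u z.2‖ₑ ^ (2:ℝ)) (t, x) =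
            ∫⁻ t in Ioc (0:ℝ) R, ENNReal.ofReal (t^(q-3)) * ‖u x‖ₑ ^ (2:ℝ) := by
            rw [← lintegral_indicator measurableSet_Ioi, ← lintegral_indicator measurableSet_Ioc]
            refine lintegral_congr fun t => ?_
            simp only [indicator, mem_Ioi, mem_Ioc, mem_setOf_eq]
            have hiff : t ≤ R ↔ t * ‖u x‖ ^ (p - 1) ≤ B * P := by
              rw [hR, le_div_iff₀ (by positivity)]
            simp only [hiff]
            by_cases h1 : 0 < t <;> by_cases h2 : t * ‖u x‖ ^ (p - 1) ≤ B * P <;> simp [h1, h2]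
          rw [e5, lintegral_mul_const _ (by fun_prop), lint_pow_near _ _ (by linarith) hR0,
            ← ofReal_norm, ENNReal.ofReal_rpow_of_nonneg (by positivity) (by norm_num),
            ENNReal.ofReal_rpow_of_nonneg (by positivity) hp0.le, ← ENNReal.ofReal_mul (by have : 0 < q - 3 + 1 := by linarith
                                                                                           positivity),
            ← ENNReal.ofReal_mul (by have : 0 < q - 2 := by linarith
                                     positivity)]
          apply le_of_eq; congr 1
          rw [show q - 3 + 1 = q - 2 by ring, hR, Real.div_rpow (by positivity) (by positivity),
            ← Real.rpow_mul hx.le]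
          have e6 : (p-1)*(q-2) + p = 2 := by
            have := hpq.mul_eq_add
            nlinarith
          have e7 : ‖u x‖ ^ (2:ℝ) = ‖u x‖ ^ ((p-1)*(q-2)) * ‖u x‖ ^ p := by
            rw [← Real.rpow_add hx, e6]
          rw [e7];
          have : 0 < ‖u x‖ ^ ((p-1)*(q-2)) := by positivity
          field_simp
      _ = _ := by
          rw [lintegral_const_mul _ (by fun_prop), hPe]
  rw [e0, lc]
  calc _ ≤ ENNReal.ofReal (2^q) * (ENNReal.ofReal q * (A2 * (ENNReal.ofReal ((B*P) ^ (q-2) / (q-2)) * ENNReal.ofReal P))) := by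
        gcongr
    _ = _ := by
        have hq2' : 0 < q - 2 := by linarith
        rw [hPe, ENNReal.ofReal_rpow_of_pos hP0]
        have : ∀ a b c d e f g : ℝ, 0 ≤ a → 0 ≤ b → 0 ≤ c → 0 ≤ d → 0 ≤ e → 0 ≤ f → 0 ≤ g → a * b * c * d = e * f * g →
          ENNReal.ofReal a * (ENNReal.ofReal b * (A2 * (ENNReal.ofReal c * ENNReal.ofReal d))) =
          ENNReal.ofReal e * (A2 * ENNReal.ofReal f * ENNReal.ofReal g) := by
          intro a b c d e f g ha hb hc hd he hf hg h
          calc _ = A2 * (ENNReal.ofReal a * ENNReal.ofReal b * ENNReal.ofReal c * ENNReal.ofReal d) := by ring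
            _ = A2 * (ENNReal.ofReal e * ENNReal.ofReal f * ENNReal.ofReal g) := by
              rw [← ENNReal.ofReal_mul ha, ← ENNReal.ofReal_mul (by positivity), ← ENNReal.ofReal_mul (by positivity), h,
                ← ENNReal.ofReal_mul he, ← ENNReal.ofReal_mul (by positivity)]
            _ = _ := by ring
        apply this <;> try positivity
        have e9 : P ^ (q-1) = P^(q-2) * P := by
          rw [← Real.rpow_add_one hP0.ne']; congr 1; ring
        rw [e9, Real.mul_rpow hB.le hP0.le]
        field_simp


/-- `e(x) = exp(2 π i x)` -/
def ee (x : ℝ) : ℂ := Complex.exp ((2 * Real.pi * x : ℝ) * Complex.I)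

lemma ee_norm (x : ℝ) : ‖ee x‖ = 1 := Complex.norm_exp_ofReal_mul_I _
lemma ee_add (x y : ℝ) : ee (x + y) = ee x * ee y := by
  unfold ee; rw [← Complex.exp_add]; congr 1; push_cast; ring
lemma ee_conj (x : ℝ) : (starRingEnd ℂ) (ee x) = ee (-x) := by
  unfold ee
  rw [← Complex.exp_conj]; congr 1
  rw [map_mul, Complex.conj_I, Complex.conj_ofReal]; push_cast; ring
lemma ee_cont : Continuous ee := by unfold ee; fun_prop
lemma ee_cos_sin (x : ℝ) : ee x = ((Real.cos (2 * Real.pi * x) : ℝ) : ℂ) + ((Real.sin (2 * Real.pi * x) : ℝ) : ℂ) * Complex.I := by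
  unfold ee; rw [Complex.exp_mul_I]; push_cast; rfl

/-- Fourier integral -/
def ft {m : ℕ} (u : Euc m → ℂ) (y : Euc m) : ℂ := ∫ x, u x * ee (-(inner ℝ x y))

lemma ft_eq {m : ℕ} (u : Euc m → ℂ) : 𝓕 u = ft u := by
  funext y
  rw [Real.fourier_eq', ft]
  congr 1; funext x
  rw [smul_eq_mul, mul_comm, ee]
  congr 3; push_cast; ring

lemma ft_le {m : ℕ} (u : Euc m → ℂ) (y : Euc m) : ‖ft u y‖ ≤ ∫ x, ‖u x‖ := by
  refine (norm_integral_le_integral_norm _).trans (le_of_eq ?_)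
  congr 1; funext x; rw [norm_mul, ee_norm, mul_one]

lemma even_sphere {n : ℕ} (hn : 1 ≤ n) (w : Euc (n+1) → ℝ) (hw : Measurable w) (W : ℝ)
    (hW : ∀ᵐ ω ∂sphereMeasure (n+1), |w ω| ≤ W) (hev : ∀ ω, w (-ω) = w ω) (z : Euc (n+1)) :
    ∫ ω, (w ω : ℂ) * ee (inner ℝ ω z) ∂sphereMeasure (n+1)
      = ((∫ ω, w ω * Real.cos (inner ℝ ω ((2 * Real.pi) • z)) ∂sphereMeasure (n+1) : ℝ) : ℂ) := by
  haveI := sphereMeasure_prob (n+1) (by omega)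
  have hint : ∀ g : ℝ → ℝ, Continuous g → (∀ x, |g x| ≤ 1) → Integrable (fun ω => w ω * g (inner ℝ ω ((2 * Real.pi) • z))) (sphereMeasure (n+1)) := by
    intro g hg h1
    refine Integrable.of_bound (C := W) ?_ ?_
    · have : Continuous fun ω : Euc (n+1) => g (inner ℝ ω ((2 * Real.pi) • z)) := by fun_prop
      exact (hw.mul this.measurable).aestronglyMeasurable
    · filter_upwards [hW] with ω hω
      rw [Real.norm_eq_abs, abs_mul]
      have := h1 (inner ℝ ω ((2 * Real.pi) • z))
      have := abs_nonneg (w ω)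
      nlinarith
  have hsin : ∫ ω, w ω * Real.sin (inner ℝ ω ((2 * Real.pi) • z)) ∂sphereMeasure (n+1) = 0 := by
    have h := sphereMeasure_rot (n+1) (by omega) (LinearIsometryEquiv.neg ℝ)
    have h2 : ∫ ω, w ω * Real.sin (inner ℝ ω ((2 * Real.pi) • z)) ∂sphereMeasure (n+1)
       = ∫ ω, w ω * Real.sin (inner ℝ ω ((2 * Real.pi) • z)) ∂((sphereMeasure (n+1)).map (LinearIsometryEquiv.neg ℝ)) := by
      rw [h]
    rw [integral_map] at h2
    · have h3 : ∀ ω : Euc (n+1), w (LinearIsometryEquiv.neg ℝ ω) * Real.sin (inner ℝ (LinearIsometryEquiv.neg ℝ ω) ((2 * Real.pi) • z))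
          = - (w ω * Real.sin (inner ℝ ω ((2 * Real.pi) • z))) := by
        intro ω
        simp only [LinearIsometryEquiv.coe_neg, hev, inner_neg_left, Real.sin_neg]; ring
      simp only [h3] at h2
      rw [integral_neg] at h2
      linarith
    · exact (LinearIsometryEquiv.continuous _).aemeasurable
    · have : Continuous fun ω : Euc (n+1) => Real.sin (inner ℝ ω ((2 * Real.pi) • z)) := by fun_prop
      exact (hw.mul this.measurable).aestronglyMeasurable
  have key : ∀ ω : Euc (n+1), (w ω : ℂ) * ee (inner ℝ ω z) = ((w ω * Real.cos (inner ℝ ω ((2 * Real.pi) • z)) : ℝ) : ℂ)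
      + ((w ω * Real.sin (inner ℝ ω ((2 * Real.pi) • z)) : ℝ) : ℂ) * Complex.I := by
    intro ω
    rw [ee_cos_sin, inner_smul_right]; push_cast; ring
  simp only [key]
  rw [integral_add, integral_mul_const, integral_complex_ofReal, integral_complex_ofReal, hsin]
  · simp
  · exact (hint _ Real.continuous_cos Real.abs_cos_le_one).ofReal
  · exact ((hint _ Real.continuous_sin Real.abs_sin_le_one).ofReal).mul_const _

lemma sq_sphere_le {n : ℕ} (hn : 1 ≤ n) (i : Fin (n+1)) : ∀ᵐ ω ∂sphereMeasure (n+1), |ω i * ω i| ≤ 1 := by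
  filter_upwards [coord_le_one (n := n+1) i] with ω h
  rw [abs_mul]; exact mul_le_one₀ h (abs_nonneg _) h

lemma sK_ee {n : ℕ} (hn : 1 ≤ n) (i : Fin (n+1)) (z : Euc (n+1)) :
    ∫ ω, ((ω i * ω i : ℝ) : ℂ) * ee (inner ℝ ω z) ∂sphereMeasure (n+1) = ((sK n i ((2 * Real.pi) • z) : ℝ) : ℂ) := by
  rw [even_sphere hn (fun ω => ω i * ω i) (by fun_prop) 1 (sq_sphere_le hn i) (by intro ω; simp)]
  rfl

lemma sM_ee {n : ℕ} (hn : 1 ≤ n) (z : Euc (n+1)) :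
    ∫ ω, ee (inner ℝ ω z) ∂sphereMeasure (n+1) = ((sM n (2 * Real.pi * ‖z‖) : ℝ) : ℂ) := by
  have := even_sphere hn (fun ω => 1) (by fun_prop) 1 (by simp) (by intro ω; simp) z
  simp only [Complex.ofReal_one, one_mul] at this
  rw [this, sM_radial hn, norm_smul, Real.norm_of_nonneg (by positivity)]

lemma fub3 {X Y Ω : Type*} [MeasurableSpace X] [MeasurableSpace Y] [MeasurableSpace Ω]
    (μ : Measure X) (ν : Measure Y) (σ : Measure Ω) [SFinite μ] [SFinite ν] [IsFiniteMeasure σ]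
    (A : X → Ω → ℂ) (B : Y → Ω → ℂ) (w : Ω → ℂ) (hA : Measurable (fun p : X × Ω => A p.1 p.2))
    (hB : Measurable (fun p : Y × Ω => B p.1 p.2)) (hw : Measurable w) (W : ℝ) (hW : ∀ᵐ ω ∂σ, ‖w ω‖ ≤ W)
    (U : X → ℝ) (V : Y → ℝ) (hU : Integrable U μ) (hV : Integrable V ν)
    (hAU : ∀ x ω, ‖A x ω‖ ≤ U x) (hBV : ∀ y ω, ‖B y ω‖ ≤ V y) :
    ∫ ω, w ω * (∫ x, A x ω ∂μ) * (∫ y, B y ω ∂ν) ∂σ = ∫ y, ∫ x, ∫ ω, w ω * A x ω * B y ω ∂σ ∂μ ∂ν := by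
  have hAi : Measurable fun ω => ∫ x, A x ω ∂μ := by
    exact (StronglyMeasurable.integral_prod_left hA.stronglyMeasurable).measurable
  have hAb : ∀ ω, ‖∫ x, A x ω ∂μ‖ ≤ ∫ x, U x ∂μ := fun ω =>
    norm_integral_le_of_norm_le hU (Filter.Eventually.of_forall fun x => hAU x ω)
  have e1 : ∀ ω, w ω * (∫ x, A x ω ∂μ) * (∫ y, B y ω ∂ν) = ∫ y, w ω * (∫ x, A x ω ∂μ) * B y ω ∂ν := by
    intro ω; rw [integral_const_mul]
  simp only [e1]
  rw [integral_integral_swap]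
  · congr 1; funext y
    have e2 : ∀ ω, w ω * (∫ x, A x ω ∂μ) * B y ω = ∫ x, w ω * A x ω * B y ω ∂μ := by
      intro ω; rw [integral_mul_const, integral_const_mul]
    simp only [e2]
    rw [integral_integral_swap]
    have hd : Integrable (fun p : Ω × X => W * U p.2 * V y) (σ.prod μ) := by
      have := (Integrable.mul_prod (integrable_const W (μ := σ)) hU).mul_const (V y)
      exact this
    refine hd.mono' ?_ ?_
    · refine Measurable.aestronglyMeasurable ?_
      refine ((hw.comp measurable_fst).mul (hA.comp measurable_swap)).mul ?_
      exact hB.comp (measurable_const.prodMk measurable_fst)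
    · have := (Measure.quasiMeasurePreserving_fst (μ := σ) (ν := μ)).ae hW
      filter_upwards [this] with p hp
      simp only [Function.uncurry, norm_mul]
      gcongr
      · exact mul_nonneg ((norm_nonneg _).trans hp) ((norm_nonneg _).trans (hAU p.2 p.1))
      · exact (norm_nonneg _).trans hp
      · exact hAU _ _
      · exact hBV _ _
  · have hd : Integrable (fun p : Ω × Y => W * (∫ x, U x ∂μ) * V p.2) (σ.prod ν) := by
      have := (Integrable.mul_prod (integrable_const (W * (∫ x, U x ∂μ)) (μ := σ)) hV)
      exact this
    refine hd.mono' ?_ ?_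
    · refine Measurable.aestronglyMeasurable ?_
      exact ((hw.mul hAi).comp measurable_fst).mul (hB.comp measurable_swap)
    · have := (Measure.quasiMeasurePreserving_fst (μ := σ) (ν := ν)).ae hW
      filter_upwards [this] with p hp
      simp only [Function.uncurry, norm_mul]
      gcongr
      · exact mul_nonneg ((norm_nonneg _).trans hp) ((norm_nonneg _).trans (hAb p.1))
      · exact (norm_nonneg _).trans hp
      · exact hAb _
      · exact hBV _ _


/-- the Stein-Tomas exponent -/
def q0 (n : ℕ) : ℝ := 2 * ((n:ℝ) + 2) / n
/-- its conjugate -/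
def p0 (n : ℕ) : ℝ := 2 * ((n:ℝ) + 2) / (n + 4)

lemma q0_gt {n : ℕ} (hn : 1 ≤ n) : 2 < q0 n := by
  have : (1:ℝ) ≤ n := by exact_mod_cast hn
  unfold q0; rw [lt_div_iff₀ (by linarith)]; linarith
lemma p0_gt {n : ℕ} (hn : 1 ≤ n) : 1 < p0 n := by
  have : (1:ℝ) ≤ n := by exact_mod_cast hn
  unfold p0; rw [lt_div_iff₀ (by linarith)]; linarith
lemma p0_lt {n : ℕ} (hn : 1 ≤ n) : p0 n < 2 := by
  have : (1:ℝ) ≤ n := by exact_mod_cast hn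
  unfold p0; rw [div_lt_iff₀ (by linarith)]; linarith
lemma qp0 {n : ℕ} (hn : 1 ≤ n) : (q0 n).HolderConjugate (p0 n) := by
  have : (1:ℝ) ≤ n := by exact_mod_cast hn
  rw [Real.holderConjugate_iff]
  refine ⟨by linarith [q0_gt hn], ?_⟩
  unfold q0 p0; field_simp; ring

lemma ft_cont {m : ℕ} {u : Euc m → ℂ} (hu : Integrable u) : Continuous (ft u) := by
  rw [← ft_eq]; exact fourier_cont u hu

lemma ft_planch {m : ℕ} {u : Euc m → ℂ} (hu : Dcl u) :
    ∫⁻ y, ‖ft u y‖ₑ ^ (2:ℝ) = ∫⁻ y, ‖u y‖ₑ ^ (2:ℝ) := by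
  have h := plancherel_eq u hu.integrable hu.memLp2
  rw [ft_eq, eLpNorm_eq_lintegral_rpow_enorm_toReal (by simp) (by simp),
    eLpNorm_eq_lintegral_rpow_enorm_toReal (by simp) (by simp)] at h
  simp only [ENNReal.toReal_ofNat] at h
  exact ENNReal.rpow_left_injective (x := (1/2:ℝ)) (by norm_num) h

lemma sK_meas {n : ℕ} (hn : 1 ≤ n) (i : Fin (n+1)) : Measurable (sK n i) := by
  haveI := sphereMeasure_prob (n+1) (by omega)
  have : Continuous fun p : Euc (n+1) × Euc (n+1) => p.2 i * p.2 i * Real.cos (inner ℝ p.2 p.1) := by fun_prop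
  exact (StronglyMeasurable.integral_prod_right' (ν := sphereMeasure (n+1)) this.measurable.stronglyMeasurable).measurable

/-- the slice operator -/
def TT {n : ℕ} (i : Fin (n+1)) (s : ℝ) (u : Euc n → ℂ) (y : Euc n) : ℂ :=
  ∫ x, u x * ((sK n i ((2 * Real.pi) • insE i (s, y - x)) : ℝ) : ℂ)

lemma TT_ker_meas {n : ℕ} (hn : 1 ≤ n) (i : Fin (n+1)) (s : ℝ) :
    Measurable fun p : Euc n × Euc n => ((sK n i ((2 * Real.pi) • insE i (s, p.1 - p.2)) : ℝ) : ℂ) := by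
  have h1 : Measurable fun p : Euc n × Euc n => (2 * Real.pi) • insE i (s, p.1 - p.2) := by
    have : Measurable fun p : Euc n × Euc n => insE i (s, p.1 - p.2) :=
      (insE i).measurable.comp (measurable_const.prodMk (measurable_fst.sub measurable_snd))
    exact (measurable_const_smul (2 * Real.pi)).comp this
  exact Complex.measurable_ofReal.comp ((sK_meas hn i).comp h1)

lemma TT_meas {n : ℕ} (hn : 1 ≤ n) (i : Fin (n+1)) (s : ℝ) (u : Euc n → ℂ) (hu : Measurable u) :
    Measurable (TT i s u) := by
  exact (StronglyMeasurable.integral_prod_right' (ν := (volume : Measure (Euc n)))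
    ((hu.comp measurable_snd).mul (TT_ker_meas hn i s)).stronglyMeasurable).measurable

lemma TT_int {n : ℕ} (hn : 1 ≤ n) (i : Fin (n+1)) (s : ℝ) (u : Euc n → ℂ) (hu : Integrable u) (hm : Measurable u) (y : Euc n) :
    Integrable fun x => u x * ((sK n i ((2 * Real.pi) • insE i (s, y - x)) : ℝ) : ℂ) := by
  refine hu.norm.mono' ?_ (Filter.Eventually.of_forall fun x => ?_)
  · exact (hm.mul ((TT_ker_meas hn i s).comp (measurable_const.prodMk measurable_id))).aestronglyMeasurable
  · rw [norm_mul, Complex.norm_real]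
    exact mul_le_of_le_one_right (norm_nonneg _) (sK_le hn i _)

lemma TT_bilin {n : ℕ} (hn : 1 ≤ n) (i : Fin (n+1)) (s : ℝ) (u v : Euc n → ℂ) (hu : Dcl u) (hv : Dcl v) :
    ∫ ω, (((ω i * ω i : ℝ) : ℂ) * ee (s * ω i)) * ft u (proj i ω) * ft v (-(proj i ω)) ∂sphereMeasure (n+1)
      = ∫ y, v y * TT i s u y := by
  haveI := sphereMeasure_prob (n+1) (by omega)
  have hpc := proj_cont i
  have hec := ee_cont
  have H := fub3 volume volume (sphereMeasure (n+1)) (fun (x : Euc n) ω => u x * ee (-(inner ℝ x (proj i ω))))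
    (fun (y : Euc n) ω => v y * ee (-(inner ℝ y (-(proj i ω))))) (fun ω => ((ω i * ω i : ℝ) : ℂ) * ee (s * ω i))
    ?_ ?_ ?_ 1 ?_ (fun x => ‖u x‖) (fun y => ‖v y‖) hu.integrable.norm hv.integrable.norm ?_ ?_
  · unfold ft
    rw [H]
    congr 1; funext y
    rw [TT, ← integral_const_mul]
    congr 1; funext x
    rw [← sK_ee hn, ← integral_const_mul, ← integral_const_mul]
    congr 1; funext ω
    rw [real_inner_comm (insE i (s, y - x)) ω, insE_inner]
    have : s * ω i + inner ℝ (y - x) (proj i ω) = s * ω i + (-(inner ℝ x (proj i ω)) + -(inner ℝ y (-(proj i ω)))) := by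
      rw [inner_sub_left, inner_neg_right]; ring
    simp only [this, ee_add]; ring
  · have : Continuous fun p : Euc n × Euc (n+1) => ee (-(inner ℝ p.1 (proj i p.2))) := by fun_prop
    exact (hu.meas.comp measurable_fst).mul this.measurable
  · have : Continuous fun p : Euc n × Euc (n+1) => ee (-(inner ℝ p.1 (-(proj i p.2)))) := by fun_prop
    exact (hv.meas.comp measurable_fst).mul this.measurable
  · have : Continuous fun ω : Euc (n+1) => ((ω i * ω i : ℝ) : ℂ) * ee (s * ω i) := by fun_prop
    exact this.measurable
  · filter_upwards [sq_sphere_le hn i] with ω hω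
    rw [norm_mul, ee_norm, mul_one, Complex.norm_real]; exact hω
  · intro x ω; rw [norm_mul, ee_norm, mul_one]
  · intro x ω; rw [norm_mul, ee_norm, mul_one]

lemma TT_L2 {n : ℕ} (hn : 1 ≤ n) : ∃ C : ℝ≥0∞, C ≠ ∞ ∧ ∀ (i : Fin (n+1)) s u, Dcl u →
    ∫⁻ x, ‖TT i s u x‖ₑ ^ (2:ℝ) ≤ C * ∫⁻ x, ‖u x‖ₑ ^ (2:ℝ) := by
  haveI := sphereMeasure_prob (n+1) (by omega)
  obtain ⟨C, hC, hsl⟩ := slice_bound hn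
  refine ⟨C ^ (2:ℝ), by finiteness, fun i s u hu => ?_⟩
  have H := duality 2 2 (by rw [Real.holderConjugate_iff]; norm_num) (TT i s u) (TT_meas hn i s u hu.meas)
    ⟨∫ x, ‖u x‖, fun y => ?_⟩ (C * (∫⁻ x, ‖u x‖ₑ ^ (2:ℝ)) ^ (1/2:ℝ)) ?_
  · refine H.trans (le_of_eq ?_)
    rw [ENNReal.mul_rpow_of_nonneg _ _ (by norm_num), ← ENNReal.rpow_mul]; norm_num
  · refine norm_integral_le_of_norm_le hu.integrable.norm (Filter.Eventually.of_forall fun x => ?_)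
    rw [norm_mul, Complex.norm_real]
    exact mul_le_of_le_one_right (norm_nonneg _) (sK_le hn i _)
  · intro v hv
    rw [← TT_bilin hn i s u v hu hv]
    have m1 := (ft_cont hu.integrable).measurable
    have m2 := ((ft_cont hv.integrable).comp continuous_neg).measurable
    calc _ ≤ ∫⁻ ω, ‖(((ω i * ω i : ℝ) : ℂ) * ee (s * ω i)) * ft u (proj i ω) * ft v (-(proj i ω))‖ₑ ∂sphereMeasure (n+1) :=
          enorm_integral_le_lintegral_enorm _
      _ ≤ ∫⁻ ω, ENNReal.ofReal |ω i| * ((fun y => ‖ft u y‖ₑ * ‖ft v (-y)‖ₑ) (proj i ω)) ∂sphereMeasure (n+1) := by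
          refine lintegral_mono_ae ?_
          filter_upwards [coord_le_one (n := n+1) i] with ω h
          simp only [enorm_mul, mul_assoc]
          rw [← ofReal_norm (ee _), ee_norm, ENNReal.ofReal_one, one_mul, ← ofReal_norm, Complex.norm_real]
          gcongr
          rw [norm_mul, Real.norm_eq_abs]
          exact mul_le_of_le_one_left (abs_nonneg _) h
      _ ≤ C * ∫⁻ y, ‖ft u y‖ₑ * ‖ft v (-y)‖ₑ := hsl i _ (m1.enorm.mul m2.enorm)
      _ ≤ C * ((∫⁻ y, ‖ft u y‖ₑ ^ (2:ℝ)) ^ (1/2:ℝ) * (∫⁻ y, ‖ft v (-y)‖ₑ ^ (2:ℝ)) ^ (1/2:ℝ)) := by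
          gcongr
          exact ENNReal.lintegral_mul_le_Lp_mul_Lq volume (by rw [Real.holderConjugate_iff]; norm_num)
            m1.enorm.aemeasurable m2.enorm.aemeasurable
      _ = _ := by
          rw [ft_planch hu, lintegral_neg_eq_self (fun y => ‖ft v y‖ₑ ^ (2:ℝ)), ft_planch hv, mul_assoc]

lemma TT_bound {n : ℕ} (hn : 1 ≤ n) : ∃ C : ℝ≥0∞, C ≠ ∞ ∧ ∀ (i : Fin (n+1)) s u v, s ≠ 0 → Dcl u → Dcl v →
    ‖∫ y, v y * TT i s u y‖ₑ ≤ C * ENNReal.ofReal (|s| ^ (-(2 - 2/p0 n))) *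
      ((∫⁻ x, ‖u x‖ₑ ^ p0 n) ^ (1/p0 n) * (∫⁻ x, ‖v x‖ₑ ^ p0 n) ^ (1/p0 n)) := by
  obtain ⟨A2, hA2, h2⟩ := TT_L2 hn
  obtain ⟨D, hD, hdec⟩ := sK_decay hn
  have hqp := qp0 hn
  have hq2 := q0_gt hn
  have hn1 : (1:ℝ) ≤ n := by exact_mod_cast hn
  set q := q0 n with hqd
  set p := p0 n with hpd
  have hq0 := hqp.pos
  have hp0 := hqp.symm.pos
  refine ⟨(ENNReal.ofReal (2 ^ q * q / (q-2)) * A2 * ENNReal.ofReal (D ^ (q-2))) ^ (1/q),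
    ENNReal.rpow_ne_top_of_nonneg (by positivity) (by finiteness), fun i s u v hs hu hv => ?_⟩
  have hs0 : 0 < |s| := abs_pos.2 hs
  have H := marcin q p hqp hq2 (TT i s) ?_ (fun u hu => TT_meas hn i s u hu.meas) A2 (D * |s| ^ (-(n/2:ℝ)))
    (by positivity) (h2 i s) ?_ u hu
  · calc _ ≤ ∫⁻ y, ‖v y * TT i s u y‖ₑ := enorm_integral_le_lintegral_enorm _
      _ = ∫⁻ y, ((fun y => ‖v y‖ₑ) * (fun y => ‖TT i s u y‖ₑ)) y := by simp only [enorm_mul, Pi.mul_apply]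
      _ ≤ (∫⁻ y, ‖v y‖ₑ ^ p) ^ (1/p) * (∫⁻ y, ‖TT i s u y‖ₑ ^ q) ^ (1/q) :=
          ENNReal.lintegral_mul_le_Lp_mul_Lq volume hqp.symm hv.meas.enorm.aemeasurable (TT_meas hn i s u hu.meas).enorm.aemeasurable
      _ ≤ (∫⁻ y, ‖v y‖ₑ ^ p) ^ (1/p) * (ENNReal.ofReal (2 ^ q * q / (q-2)) * (A2 * ENNReal.ofReal ((D * |s| ^ (-(n/2:ℝ))) ^ (q-2)) *
            (∫⁻ x, ‖u x‖ₑ ^ p) ^ (q-1))) ^ (1/q) := by gcongr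
      _ = _ := by
          have e1 : (D * |s| ^ (-(n/2:ℝ))) ^ (q-2) = D ^ (q-2) * (|s| ^ (-(2 - 2/p)))^q := by
            rw [Real.mul_rpow hD.le (by positivity), ← Real.rpow_mul hs0.le, ← Real.rpow_mul hs0.le]
            congr 2
            rw [hqd, hpd, q0, p0]; field_simp; ring
          rw [e1, ENNReal.ofReal_mul (by positivity), ← ENNReal.ofReal_rpow_of_nonneg (x := |s| ^ (-(2 - 2/p))) (by positivity) hq0.le]
          have e2 : (q - 1) * (1/q) = 1/p := by
            have := hqp.inv_add_inv_eq_one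
            field_simp at this ⊢; nlinarith
          have e3 : ∀ a b c d U : ℝ≥0∞, (a * (b * (c * d) * U)) = (a * b * c) * d * U := by intros; ring
          rw [e3, ENNReal.mul_rpow_of_nonneg _ _ (by positivity), ENNReal.mul_rpow_of_nonneg _ _ (by positivity), ← ENNReal.rpow_mul, ← ENNReal.rpow_mul, e2, mul_one_div_cancel hq0.ne', ENNReal.rpow_one]
          ring
  · intro u v hu hv x
    unfold TT
    rw [← integral_add (TT_int hn i s u hu.integrable hu.meas x) (TT_int hn i s v hv.integrable hv.meas x)]
    congr 1; funext y; simp only [Pi.add_apply]; ring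
  · intro u hu x
    unfold TT
    refine (enorm_integral_le_lintegral_enorm _).trans ?_
    rw [← lintegral_const_mul _ hu.meas.enorm]
    refine lintegral_mono fun y => ?_
    rw [enorm_mul, mul_comm]
    gcongr
    rw [← ofReal_norm, Complex.norm_real]
    refine ENNReal.ofReal_le_ofReal ?_
    have hnorm : |s| ≤ ‖(2 * Real.pi) • insE i (s, x - y)‖ := by
      rw [norm_smul, Real.norm_of_nonneg (by positivity), insE_norm]
      have : |s| ≤ √(s^2 + ‖x-y‖^2) := Real.abs_le_sqrt (by nlinarith [norm_nonneg (x-y)])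
      have h3 := Real.pi_gt_three
      nlinarith
    refine (hdec i _ (norm_pos_iff.1 (hs0.trans_le hnorm))).trans ?_
    gcongr D * ?_
    exact Real.rpow_le_rpow_of_nonpos hs0 hnorm (by linarith)


lemma Dcl.slice {n : ℕ} {φ : Euc (n+1) → ℂ} (h : Dcl φ) (i : Fin (n+1)) (s : ℝ) : Dcl (fun x => φ (insE i (s, x))) := by
  obtain ⟨K, hK⟩ := h.bdd
  obtain ⟨R, hR⟩ := h.supp
  refine ⟨h.meas.comp ((insE i).measurable.comp (measurable_const.prodMk measurable_id)), ⟨K, fun x => hK _⟩, ⟨R, fun x hx => hR _ (hx.trans_le ?_)⟩⟩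
  rw [insE_norm]
  exact Real.le_sqrt_of_sq_le (by nlinarith [sq_nonneg s])

lemma Dcl.conj {n : ℕ} {φ : Euc n → ℂ} (h : Dcl φ) : Dcl (fun x => (starRingEnd ℂ) (φ x)) := by
  obtain ⟨K, hK⟩ := h.bdd
  obtain ⟨R, hR⟩ := h.supp
  refine ⟨Complex.continuous_conj.measurable.comp h.meas, ⟨K, fun x => by rw [RCLike.norm_conj]; exact hK _⟩, ⟨R, fun x hx => by simp [hR x hx]⟩⟩

lemma ft_conj {n : ℕ} (u : Euc n → ℂ) (y : Euc n) : (starRingEnd ℂ) (ft u y) = ft (fun x => (starRingEnd ℂ) (u x)) (-y) := by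
  unfold ft
  rw [← integral_conj]
  congr 1; funext x
  rw [map_mul, ee_conj, inner_neg_right]

lemma ft_slice {n : ℕ} {φ : Euc (n+1) → ℂ} (h : Dcl φ) (i : Fin (n+1)) (ω : Euc (n+1)) :
    ft φ ω = ∫ s, ee (-(s * ω i)) * ft (fun x => φ (insE i (s, x))) (proj i ω) := by
  have hint : Integrable (fun z => φ z * ee (-(inner ℝ z ω))) := by
    refine h.integrable.norm.mono' ?_ (Filter.Eventually.of_forall fun x => ?_)
    · have hec := ee_cont
      have : Continuous fun z => ee (-(inner ℝ z ω)) := by fun_prop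
      exact (h.meas.mul this.measurable).aestronglyMeasurable
    · rw [norm_mul, ee_norm, mul_one]
  have hint2 : Integrable (fun z : ℝ × Euc n => φ (insE i z) * ee (-(inner ℝ (insE i z) ω))) :=
    ((insE_mp i).integrable_comp_emb (insE i).measurableEmbedding).2 hint
  unfold ft
  rw [← (insE_mp i).integral_comp (insE i).measurableEmbedding]
  rw [Measure.volume_eq_prod, integral_prod _ hint2]
  congr 1; funext s
  rw [← integral_const_mul]
  congr 1; funext x
  rw [insE_inner, neg_add, ee_add]; ring

lemma restr {n : ℕ} (hn : 1 ≤ n) : ∃ C : ℝ≥0∞, C ≠ ∞ ∧ ∀ (i : Fin (n+1)) (φ : Euc (n+1) → ℂ), Dcl φ →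
    ∫⁻ ω, ENNReal.ofReal (ω i * ω i) * ‖ft φ ω‖ₑ ^ (2:ℝ) ∂sphereMeasure (n+1) ≤ C * (∫⁻ x, ‖φ x‖ₑ ^ p0 n) ^ (2 / p0 n) := by
  haveI := sphereMeasure_prob (n+1) (by omega)
  obtain ⟨C1, hC1, hTT⟩ := TT_bound hn
  obtain ⟨C2, hC2, hh⟩ := hls (p0 n) (p0_gt hn) (p0_lt hn)
  have hp0 : 0 < p0 n := by linarith [p0_gt hn]
  refine ⟨C1 * C2, by finiteness, fun i φ hφ => ?_⟩
  set p := p0 n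
  have hpc := proj_cont i
  have hec := ee_cont
  set φs : ℝ → Euc n → ℂ := fun s x => φ (insE i (s, x)) with hφs
  have hint2 : Integrable (fun z : ℝ × Euc n => φ (insE i z)) := ((insE_mp i).integrable_comp_emb (insE i).measurableEmbedding).2 hφ.integrable
  set A : ℝ → Euc (n+1) → ℂ := fun s ω => ee (-(s * ω i)) * ft (φs s) (proj i ω) with hA
  have hAm : Measurable (fun q : ℝ × Euc (n+1) => A q.1 q.2) := by
    have h1 : Continuous fun q : ℝ × Euc (n+1) => ee (-(q.1 * q.2 i)) := by fun_prop
    have h2 : Measurable fun q : ℝ × Euc (n+1) => ft (φs q.1) (proj i q.2) := by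
      have hm : Measurable fun r : (ℝ × Euc (n+1)) × Euc n => φ (insE i (r.1.1, r.2)) * ee (-(inner ℝ r.2 (proj i r.1.2))) := by
        refine Measurable.mul ?_ ?_
        · exact hφ.meas.comp ((insE i).measurable.comp ((measurable_fst.comp measurable_fst).prodMk measurable_snd))
        · have : Continuous fun r : (ℝ × Euc (n+1)) × Euc n => ee (-(inner ℝ r.2 (proj i r.1.2))) := by fun_prop
          exact this.measurable
      exact (StronglyMeasurable.integral_prod_right' (ν := (volume : Measure (Euc n))) hm.stronglyMeasurable).measurable
    exact h1.measurable.mul h2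
  have hAU : ∀ s ω, ‖A s ω‖ ≤ ∫ x, ‖φs s x‖ := by
    intro s ω
    rw [hA]; simp only [norm_mul, ee_norm, one_mul]; exact ft_le _ _
  have hU : Integrable (fun s => ∫ x, ‖φs s x‖) := hint2.norm.integral_prod_left
  have H := fub3 volume volume (sphereMeasure (n+1)) A (fun t ω => (starRingEnd ℂ) (A t ω)) (fun ω => ((ω i * ω i : ℝ) : ℂ))
    hAm (Complex.continuous_conj.measurable.comp hAm) (by
      have : Continuous fun ω : Euc (n+1) => ((ω i * ω i : ℝ) : ℂ) := by fun_prop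
      exact this.measurable) 1 (by
      filter_upwards [sq_sphere_le hn i] with ω hω
      rw [Complex.norm_real]; exact hω) _ _ hU hU hAU (fun t ω => by rw [RCLike.norm_conj]; exact hAU t ω)
  have e1 : ∀ t s, ∫ ω, ((ω i * ω i : ℝ) : ℂ) * A s ω * (starRingEnd ℂ) (A t ω) ∂sphereMeasure (n+1)
      = ∫ y, (starRingEnd ℂ) (φs t y) * TT i (t - s) (φs s) y := by
    intro t s
    rw [← TT_bilin hn i (t-s) _ _ (hφ.slice i s) (hφ.slice i t).conj]
    congr 1; funext ω
    rw [hA]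
    simp only [map_mul, ee_conj, ft_conj]
    rw [show (t - s) * ω i = -(s * ω i) + -(-(t * ω i)) by ring, ee_add]; ring
  have e2 : ∀ ω, ∫ s, A s ω = ft φ ω := fun ω => (ft_slice hφ i ω).symm
  simp only [integral_conj, e1, e2] at H
  have hfc : Continuous (ft φ) := ft_cont hφ.integrable
  have e3 : ∫⁻ ω, ENNReal.ofReal (ω i * ω i) * ‖ft φ ω‖ₑ ^ (2:ℝ) ∂sphereMeasure (n+1)
      = ‖∫ ω, ((ω i * ω i : ℝ) : ℂ) * ft φ ω * (starRingEnd ℂ) (ft φ ω) ∂sphereMeasure (n+1)‖ₑ := by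
    have e4 : ∀ ω : Euc (n+1), ((ω i * ω i : ℝ) : ℂ) * ft φ ω * (starRingEnd ℂ) (ft φ ω) = ((ω i * ω i * ‖ft φ ω‖^2 : ℝ) : ℂ) := by
      intro ω
      rw [mul_assoc, Complex.mul_conj, Complex.normSq_eq_norm_sq]; push_cast; ring
    simp only [e4]
    have hnn : ∀ ω : Euc (n+1), 0 ≤ ω i * ω i * ‖ft φ ω‖^2 := fun ω => mul_nonneg (mul_self_nonneg _) (by positivity)
    rw [integral_complex_ofReal, ← ofReal_norm, Complex.norm_real, Real.norm_of_nonneg (integral_nonneg hnn),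
      ofReal_integral_eq_lintegral_ofReal _ (Filter.Eventually.of_forall hnn)]
    · congr 1; funext ω
      rw [ENNReal.ofReal_mul (mul_self_nonneg _), ENNReal.ofReal_pow (norm_nonneg _), ofReal_norm]
      norm_num
    · have hc : Continuous fun ω : Euc (n+1) => ω i * ω i * ‖ft φ ω‖^2 := by fun_prop
      refine Integrable.of_bound (C := 1 * (∫ x, ‖φ x‖)^2) hc.measurable.aestronglyMeasurable ?_
      filter_upwards [sq_sphere_le hn i] with ω hω
      rw [norm_mul, norm_pow, norm_norm]
      gcongr
      · exact hω
      · exact ft_le _ _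
  rw [e3, H]
  set N : ℝ → ℝ≥0∞ := fun s => (∫⁻ x, ‖φs s x‖ₑ ^ p) ^ (1/p) with hN
  have hm0 : Measurable fun q : ℝ × Euc n => ‖φ (insE i q)‖ₑ ^ p := (hφ.meas.comp (insE i).measurable).enorm.pow_const p
  have hNm : Measurable N := hm0.lintegral_prod_right'.pow_const _
  calc _ ≤ ∫⁻ t, ‖∫ s, ∫ y, (starRingEnd ℂ) (φs t y) * TT i (t - s) (φs s) y‖ₑ := enorm_integral_le_lintegral_enorm _
    _ ≤ ∫⁻ t, ∫⁻ s, ‖∫ y, (starRingEnd ℂ) (φs t y) * TT i (t - s) (φs s) y‖ₑ := by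
        gcongr with t; exact enorm_integral_le_lintegral_enorm _
    _ ≤ ∫⁻ t, ∫⁻ s, C1 * (N t * N s * ENNReal.ofReal (|t-s| ^ (-(2-2/p)))) := by
        refine lintegral_mono fun t => lintegral_mono_ae ?_
        have : ∀ᵐ s : ℝ, s ≠ t := by simp [ae_iff]
        filter_upwards [this] with s hs
        refine (hTT i (t-s) _ _ (sub_ne_zero.2 hs.symm) (hφ.slice i s) (hφ.slice i t).conj).trans (le_of_eq ?_)
        have : ∀ x, ‖(starRingEnd ℂ) (φs t x)‖ₑ = ‖φs t x‖ₑ := fun x => by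
          rw [← ofReal_norm, RCLike.norm_conj, ofReal_norm]
        simp only [hN]
        rw [show (∫⁻ x, ‖(starRingEnd ℂ) (φ (insE i (t, x)))‖ₑ ^ p) = ∫⁻ x, ‖φs t x‖ₑ ^ p from by
          congr 1; funext x; rw [← this x]]
        ring
    _ = C1 * ∫⁻ t, ∫⁻ s, N t * N s * ENNReal.ofReal (|t-s| ^ (-(2-2/p))) := by
        have : ∀ t, ∫⁻ s, C1 * (N t * N s * ENNReal.ofReal (|t-s| ^ (-(2-2/p)))) = C1 * ∫⁻ s, (N t * N s * ENNReal.ofReal (|t-s| ^ (-(2-2/p)))) :=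
          fun t => lintegral_const_mul' _ _ hC1
        simp only [this]
        exact lintegral_const_mul' _ _ hC1
    _ ≤ C1 * (C2 * (∫⁻ s, N s ^ p) ^ (2/p)) := by gcongr; exact hh N hNm
    _ = _ := by
        have : ∫⁻ s, N s ^ p = ∫⁻ x, ‖φ x‖ₑ ^ p := by
          rw [← (insE_mp i).lintegral_comp (hφ.meas.enorm.pow_const p), Measure.volume_eq_prod, lintegral_prod _ hm0.aemeasurable]
          congr 1; funext s
          rw [hN]; simp only
          rw [← ENNReal.rpow_mul, one_div_mul_cancel hp0.ne', ENNReal.rpow_one]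
        rw [this, mul_assoc]


/-- extension operator -/
def extn {n : ℕ} (g : Euc (n+1) → ℂ) (x : Euc (n+1)) : ℂ := ∫ ω, g ω * ee (inner ℝ ω x) ∂sphereMeasure (n+1)

lemma extn_meas {n : ℕ} (hn : 1 ≤ n) (g : Euc (n+1) → ℂ) (hg : Measurable g) : Measurable (extn g) := by
  haveI := sphereMeasure_prob (n+1) (by omega)
  have hec := ee_cont
  have h2 : Continuous fun p : Euc (n+1) × Euc (n+1) => ee (inner ℝ p.2 p.1) := by fun_prop
  exact (StronglyMeasurable.integral_prod_right' (ν := sphereMeasure (n+1))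
    ((hg.comp measurable_snd).mul h2.measurable).stronglyMeasurable).measurable

lemma extn_int {n : ℕ} (hn : 1 ≤ n) (g : Euc (n+1) → ℂ) (hg : Measurable g) (K : ℝ) (hK : ∀ᵐ ω ∂sphereMeasure (n+1), ‖g ω‖ ≤ K)
    (x : Euc (n+1)) : Integrable (fun ω => g ω * ee (inner ℝ ω x)) (sphereMeasure (n+1)) := by
  haveI := sphereMeasure_prob (n+1) (by omega)
  have hec := ee_cont
  have h2 : Continuous fun p : Euc (n+1) => ee (inner ℝ p x) := by fun_prop
  refine Integrable.of_bound (C := K) (hg.mul h2.measurable).aestronglyMeasurable ?_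
  filter_upwards [hK] with ω h
  rw [norm_mul, ee_norm, mul_one]; exact h

lemma extn_le {n : ℕ} (hn : 1 ≤ n) (g : Euc (n+1) → ℂ) (K : ℝ) (hK : ∀ᵐ ω ∂sphereMeasure (n+1), ‖g ω‖ ≤ K)
    (x : Euc (n+1)) : ‖extn g x‖ ≤ K := by
  haveI := sphereMeasure_prob (n+1) (by omega)
  have := norm_integral_le_of_norm_le_const (μ := sphereMeasure (n+1)) (C := K)
    (f := fun ω => g ω * ee (inner ℝ ω x)) (by
      filter_upwards [hK] with ω h
      rw [norm_mul, ee_norm, mul_one]; exact h)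
  simp only [probReal_univ, mul_one] at this
  exact this

lemma hold2 : (2:ℝ).HolderConjugate 2 := by rw [Real.holderConjugate_iff]; norm_num

lemma extn_L2 {n : ℕ} (hn : 1 ≤ n) (g : Euc (n+1) → ℂ) (hg : Measurable g) (x : Euc (n+1)) :
    ‖extn g x‖ₑ ≤ (∫⁻ ω, ‖g ω‖ₑ ^ (2:ℝ) ∂sphereMeasure (n+1)) ^ (1/2:ℝ) := by
  haveI := sphereMeasure_prob (n+1) (by omega)
  refine (enorm_integral_le_lintegral_enorm _).trans ?_
  have := ENNReal.lintegral_mul_le_Lp_mul_Lq (sphereMeasure (n+1)) hold2 hg.enorm.aemeasurable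
    (measurable_const (a := (1:ℝ≥0∞))).aemeasurable
  simp only [Pi.mul_apply, mul_one, ENNReal.one_rpow, lintegral_one, measure_univ] at this
  refine le_trans (le_of_eq ?_) this
  congr 1; funext ω
  rw [enorm_mul, ← ofReal_norm (ee _), ee_norm]; simp

lemma extn_i {n : ℕ} (hn : 1 ≤ n) : ∃ C : ℝ≥0∞, C ≠ ∞ ∧ ∀ (i : Fin (n+1)) (g : Euc (n+1) → ℂ), Measurable g →
    (∃ K : ℝ, ∀ ω, ‖g ω‖ ≤ K) →
    ∫⁻ x, ‖extn (fun ω => ((ω i * ω i : ℝ) : ℂ) * g ω) x‖ₑ ^ q0 n ≤ C * (∫⁻ ω, ‖g ω‖ₑ ^ (2:ℝ) ∂sphereMeasure (n+1)) ^ (q0 n / 2) := by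
  haveI := sphereMeasure_prob (n+1) (by omega)
  obtain ⟨C, hC, hres⟩ := restr hn
  have hqp := qp0 hn
  have hq0 := hqp.pos
  have hp0 := hqp.symm.pos
  have hec := ee_cont
  refine ⟨(C ^ (1/2:ℝ)) ^ (q0 n), ENNReal.rpow_ne_top_of_nonneg hq0.le (ENNReal.rpow_ne_top_of_nonneg (by norm_num) hC), fun i g hg ⟨K, hK⟩ => ?_⟩
  have hwm : Measurable fun ω : Euc (n+1) => ((ω i * ω i : ℝ) : ℂ) := by
    have : Continuous fun ω : Euc (n+1) => ((ω i * ω i : ℝ) : ℂ) := by fun_prop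
    exact this.measurable
  have hb : ∀ᵐ ω ∂sphereMeasure (n+1), ‖((ω i * ω i : ℝ) : ℂ) * g ω‖ ≤ K := by
    filter_upwards [sq_sphere_le hn i] with ω h
    rw [norm_mul, Complex.norm_real]
    exact (mul_le_of_le_one_left (norm_nonneg _) h).trans (hK ω)
  have hm2 := hwm.mul hg
  have H := duality (q0 n) (p0 n) hqp (extn (fun ω => ((ω i * ω i : ℝ) : ℂ) * g ω)) (extn_meas hn _ hm2)
    ⟨K, fun x => extn_le hn _ K hb x⟩
    ((∫⁻ ω, ‖g ω‖ₑ ^ (2:ℝ) ∂sphereMeasure (n+1)) ^ (1/2:ℝ) * C ^ (1/2:ℝ)) ?_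
  · refine H.trans (le_of_eq ?_)
    rw [ENNReal.mul_rpow_of_nonneg _ _ hq0.le, ← ENNReal.rpow_mul (∫⁻ ω, ‖g ω‖ₑ ^ (2:ℝ) ∂sphereMeasure (n+1)), mul_comm]
    congr 2; ring
  · intro φ hφ
    have hfc := ft_cont hφ.conj.integrable
    have e1 : ∫ x, φ x * extn (fun ω => ((ω i * ω i : ℝ) : ℂ) * g ω) x =
        ∫ ω, ((ω i * ω i : ℝ) : ℂ) * g ω * (starRingEnd ℂ) (ft (fun x => (starRingEnd ℂ) (φ x)) ω) ∂sphereMeasure (n+1) := by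
      unfold extn
      simp only [← integral_const_mul]
      rw [integral_integral_swap]
      · congr 1; funext ω
        rw [ft_conj]
        simp only [ft, Complex.conj_conj]
        rw [← integral_const_mul]
        congr 1; funext x
        rw [inner_neg_right, neg_neg, real_inner_comm]; ring
      · have hd := Integrable.mul_prod hφ.integrable.norm (integrable_const K (μ := sphereMeasure (n+1)))
        refine hd.mono' ?_ ?_
        · have : Continuous fun p : Euc (n+1) × Euc (n+1) => ee (inner ℝ p.2 p.1) := by fun_prop
          exact ((hφ.meas.comp measurable_fst).mul ((hm2.comp measurable_snd).mul this.measurable)).aestronglyMeasurable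
        · have := (Measure.quasiMeasurePreserving_snd (μ := (volume : Measure (Euc (n+1)))) (ν := sphereMeasure (n+1))).ae hb
          filter_upwards [this] with q hq
          simp only [Function.uncurry]
          rw [norm_mul, norm_mul _ (ee _), ee_norm, mul_one]
          gcongr
    rw [e1]
    calc _ ≤ ∫⁻ ω, ‖((ω i * ω i : ℝ) : ℂ) * g ω * (starRingEnd ℂ) (ft (fun x => (starRingEnd ℂ) (φ x)) ω)‖ₑ ∂sphereMeasure (n+1) :=
          enorm_integral_le_lintegral_enorm _
      _ = ∫⁻ ω, ((fun ω => ‖g ω‖ₑ) * (fun ω : Euc (n+1) => ENNReal.ofReal (ω i * ω i) * ‖ft (fun x => (starRingEnd ℂ) (φ x)) ω‖ₑ)) ω ∂sphereMeasure (n+1) := by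
          congr 1; funext ω
          rw [enorm_mul, enorm_mul, ← ofReal_norm ((ω i * ω i : ℝ) : ℂ), Complex.norm_real, Real.norm_of_nonneg (mul_self_nonneg _),
            ← ofReal_norm ((starRingEnd ℂ) _), RCLike.norm_conj, ofReal_norm]
          simp only [Pi.mul_apply]; ring
      _ ≤ (∫⁻ ω, ‖g ω‖ₑ ^ (2:ℝ) ∂sphereMeasure (n+1)) ^ (1/2:ℝ) * (∫⁻ ω, (ENNReal.ofReal (ω i * ω i) * ‖ft (fun x => (starRingEnd ℂ) (φ x)) ω‖ₑ) ^ (2:ℝ) ∂sphereMeasure (n+1)) ^ (1/2:ℝ) := by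
          refine ENNReal.lintegral_mul_le_Lp_mul_Lq _ hold2 hg.enorm.aemeasurable ?_
          refine (Measurable.mul ?_ hfc.measurable.enorm).aemeasurable
          have : Continuous fun ω : Euc (n+1) => (ω i * ω i : ℝ) := by fun_prop
          exact this.measurable.ennreal_ofReal
      _ ≤ (∫⁻ ω, ‖g ω‖ₑ ^ (2:ℝ) ∂sphereMeasure (n+1)) ^ (1/2:ℝ) * (∫⁻ ω, (ENNReal.ofReal (ω i * ω i) * ‖ft (fun x => (starRingEnd ℂ) (φ x)) ω‖ₑ ^ (2:ℝ)) ∂sphereMeasure (n+1)) ^ (1/2:ℝ) := by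
          refine mul_le_mul_right (ENNReal.rpow_le_rpow ?_ (by norm_num)) _
          refine lintegral_mono_ae ?_
          filter_upwards [sq_sphere_le hn i] with ω h
          rw [ENNReal.mul_rpow_of_nonneg _ _ (by norm_num)]
          gcongr
          rw [abs_of_nonneg (mul_self_nonneg _)] at h
          rw [ENNReal.rpow_two, sq]
          exact mul_le_of_le_one_left' (by simpa using h)
      _ ≤ (∫⁻ ω, ‖g ω‖ₑ ^ (2:ℝ) ∂sphereMeasure (n+1)) ^ (1/2:ℝ) * (C * (∫⁻ x, ‖(starRingEnd ℂ) (φ x)‖ₑ ^ p0 n) ^ (2 / p0 n)) ^ (1/2:ℝ) := by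
          gcongr; exact hres i _ hφ.conj
      _ = _ := by
          rw [ENNReal.mul_rpow_of_nonneg _ _ (by norm_num), ← ENNReal.rpow_mul, mul_assoc]
          have : ∀ x, ‖(starRingEnd ℂ) (φ x)‖ₑ = ‖φ x‖ₑ := fun x => by
            rw [← ofReal_norm, RCLike.norm_conj, ofReal_norm]
          simp only [this]
          congr 3; ring

lemma extn_sum {n : ℕ} (hn : 1 ≤ n) (g : Euc (n+1) → ℂ) (hg : Measurable g) (hK : ∃ K : ℝ, ∀ ω, ‖g ω‖ ≤ K) (x : Euc (n+1)) :
    extn g x = ∑ i, extn (fun ω => ((ω i * ω i : ℝ) : ℂ) * g ω) x := by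
  haveI := sphereMeasure_prob (n+1) (by omega)
  obtain ⟨K, hK⟩ := hK
  unfold extn
  rw [← integral_finset_sum]
  · refine integral_congr_ae ?_
    filter_upwards [sphereMeasure_norm (n+1)] with ω h
    rw [← Finset.sum_mul, ← Finset.sum_mul, ← Complex.ofReal_sum]
    have : ∑ i, ω i * ω i = 1 := by
      have := EuclideanSpace.norm_sq_eq ω
      rw [h] at this
      simp only [Real.norm_eq_abs, sq_abs] at this
      rw [← one_pow (M := ℝ) 2, this]; congr 1; funext i; ring
    rw [this]; simp
  · intro i _
    have hwm : Measurable fun ω : Euc (n+1) => ((ω i * ω i : ℝ) : ℂ) := by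
      have : Continuous fun ω : Euc (n+1) => ((ω i * ω i : ℝ) : ℂ) := by fun_prop
      exact this.measurable
    refine extn_int hn _ (hwm.mul hg) K ?_ x
    filter_upwards [sq_sphere_le hn i] with ω h
    rw [Pi.mul_apply, norm_mul, Complex.norm_real]
    exact (mul_le_of_le_one_left (norm_nonneg _) h).trans (hK ω)

lemma extn_q {n : ℕ} (hn : 1 ≤ n) : ∃ C : ℝ≥0∞, C ≠ ∞ ∧ ∀ (g : Euc (n+1) → ℂ), Measurable g →
    (∃ K : ℝ, ∀ ω, ‖g ω‖ ≤ K) →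
    ∫⁻ x, ‖extn g x‖ₑ ^ q0 n ≤ C * (∫⁻ ω, ‖g ω‖ₑ ^ (2:ℝ) ∂sphereMeasure (n+1)) ^ (q0 n / 2) := by
  obtain ⟨C, hC, h⟩ := extn_i hn
  have hq := q0_gt hn
  refine ⟨((n+1 : ℕ) : ℝ≥0∞) ^ (q0 n - 1) * ((n+1:ℕ) * C), ?_, fun g hg hK => ?_⟩
  · exact ENNReal.mul_ne_top (ENNReal.rpow_ne_top_of_nonneg (by linarith) (by simp)) (ENNReal.mul_ne_top (by simp) hC)
  have hmi : ∀ i, Measurable (extn (fun ω : Euc (n+1) => ((ω i * ω i : ℝ) : ℂ) * g ω)) := by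
    intro i
    have : Continuous fun ω : Euc (n+1) => ((ω i * ω i : ℝ) : ℂ) := by fun_prop
    exact extn_meas hn _ (this.measurable.mul hg)
  calc _ ≤ ∫⁻ x, ((n+1 : ℕ) : ℝ≥0∞) ^ (q0 n - 1) * ∑ i, ‖extn (fun ω : Euc (n+1) => ((ω i * ω i : ℝ) : ℂ) * g ω) x‖ₑ ^ q0 n := by
        refine lintegral_mono fun x => ?_
        have := ENNReal.rpow_sum_le_const_mul_sum_rpow (Finset.univ : Finset (Fin (n+1))) (fun i => ‖extn (fun ω : Euc (n+1) => ((ω i * ω i : ℝ) : ℂ) * g ω) x‖ₑ) (p := q0 n) (by linarith)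
        simp only [Finset.card_univ, Fintype.card_fin] at this
        refine le_trans ?_ this
        rw [extn_sum hn g hg hK]
        exact ENNReal.rpow_le_rpow (enorm_sum_le _ _) (by linarith)
    _ = ((n+1 : ℕ) : ℝ≥0∞) ^ (q0 n - 1) * ∑ i, ∫⁻ x, ‖extn (fun ω : Euc (n+1) => ((ω i * ω i : ℝ) : ℂ) * g ω) x‖ₑ ^ q0 n := by
        rw [lintegral_const_mul, lintegral_finset_sum]
        · intro i _; exact (hmi i).enorm.pow_const _
        · exact Finset.measurable_sum _ fun i _ => (hmi i).enorm.pow_const _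
    _ ≤ ((n+1 : ℕ) : ℝ≥0∞) ^ (q0 n - 1) * ∑ i : Fin (n+1), C * (∫⁻ ω, ‖g ω‖ₑ ^ (2:ℝ) ∂sphereMeasure (n+1)) ^ (q0 n / 2) := by
        gcongr with i; exact h i g hg hK
    _ = _ := by
        rw [Finset.sum_const, Finset.card_univ, Fintype.card_fin, nsmul_eq_mul]; ring


lemma esq_add_le (a b : ℝ≥0∞) : (a + b) ^ (2:ℝ) ≤ 2 * (a ^ (2:ℝ) + b ^ (2:ℝ)) := by
  have := ENNReal.rpow_add_le_mul_rpow_add_rpow a b (p := 2) (by norm_num)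
  norm_num at this ⊢
  exact this

lemma cs_supp (H : ℝ → ℂ) (hH : Measurable H) (R : ℝ) (hR : 0 ≤ R) (hs : ∀ ρ, H ρ ≠ 0 → 0 ≤ ρ ∧ ρ ≤ R) :
    (∫⁻ ρ, ‖H ρ‖ₑ) ^ (2:ℝ) ≤ ENNReal.ofReal R * ∫⁻ ρ, ‖H ρ‖ₑ ^ (2:ℝ) := by
  have h1 : ∫⁻ ρ, ‖H ρ‖ₑ = ∫⁻ ρ, ((Icc 0 R).indicator (fun _ => (1:ℝ≥0∞)) * (fun ρ => ‖H ρ‖ₑ)) ρ := by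
    congr 1; funext ρ
    rw [Pi.mul_apply]
    by_cases h : H ρ = 0
    · simp [h]
    · rw [indicator_of_mem (show ρ ∈ Icc 0 R from hs ρ h), one_mul]
  rw [h1]
  have h2 := ENNReal.lintegral_mul_le_Lp_mul_Lq volume hold2
    (f := (Icc 0 R).indicator (fun _ => (1:ℝ≥0∞))) (g := fun ρ => ‖H ρ‖ₑ)
    (measurable_const.indicator measurableSet_Icc).aemeasurable hH.enorm.aemeasurable
  have h3 : ∫⁻ ρ, ((Icc 0 R).indicator (fun _ => (1:ℝ≥0∞))) ρ ^ (2:ℝ) = ENNReal.ofReal R := by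
    have : ∀ ρ, ((Icc 0 R).indicator (fun _ => (1:ℝ≥0∞))) ρ ^ (2:ℝ) = ((Icc 0 R).indicator (fun _ => (1:ℝ≥0∞))) ρ := by
      intro ρ; by_cases h : ρ ∈ Icc 0 R <;> simp [h]
    simp only [this]
    rw [lintegral_indicator measurableSet_Icc]; simp
  rw [h3] at h2
  refine (ENNReal.rpow_le_rpow h2 (by norm_num : (0:ℝ) ≤ 2)).trans (le_of_eq ?_)
  rw [ENNReal.mul_rpow_of_nonneg _ _ (by norm_num), ← ENNReal.rpow_mul, ← ENNReal.rpow_mul]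
  norm_num

lemma trig_L2 (A B : ℝ) : ∃ K : ℝ≥0∞, K ≠ ∞ ∧ ∀ h : ℝ → ℂ, Measurable h → Integrable h → MemLp h 2 volume →
    ∫⁻ t, ‖∫ ρ, ((A * Real.cos (2 * Real.pi * (t * ρ)) + B * Real.sin (2 * Real.pi * (t * ρ)) : ℝ) : ℂ) * h ρ‖ₑ ^ (2:ℝ)
      ≤ K * ∫⁻ ρ, ‖h ρ‖ₑ ^ (2:ℝ) := by
  set c1 : ℂ := (A + B * Complex.I) / 2
  set c2 : ℂ := (A - B * Complex.I) / 2
  refine ⟨2 * (‖c1‖ₑ ^ (2:ℝ) + ‖c2‖ₑ ^ (2:ℝ)), by finiteness, fun h hm hi h2 => ?_⟩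
  have hpl : ∫⁻ t, ‖𝓕 h t‖ₑ ^ (2:ℝ) = ∫⁻ ρ, ‖h ρ‖ₑ ^ (2:ℝ) := by
    have h := plancherel_eq h hi h2
    rw [eLpNorm_eq_lintegral_rpow_enorm_toReal (by simp) (by simp),
      eLpNorm_eq_lintegral_rpow_enorm_toReal (by simp) (by simp)] at h
    simp only [ENNReal.toReal_ofNat] at h
    exact ENNReal.rpow_left_injective (x := (1/2:ℝ)) (by norm_num) h
  have hF : ∀ t, 𝓕 h t = ∫ ρ, ee (-(t * ρ)) * h ρ := by
    intro t
    rw [Real.fourier_eq']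
    congr 1; funext ρ
    rw [smul_eq_mul, ee]
    congr 2; simp
  have hFc : Continuous (𝓕 h) := fourier_cont h hi
  have hei : ∀ s : ℝ, Integrable (fun ρ => ee (s * ρ) * h ρ) := by
    intro s
    refine hi.norm.mono' ?_ (Filter.Eventually.of_forall fun x => ?_)
    · have hec := ee_cont
      have : Continuous fun ρ => ee (s * ρ) := by fun_prop
      exact (this.measurable.mul hm).aestronglyMeasurable
    · rw [norm_mul, ee_norm, one_mul]
  have key : ∀ t, ∫ ρ, ((A * Real.cos (2 * Real.pi * (t * ρ)) + B * Real.sin (2 * Real.pi * (t * ρ)) : ℝ) : ℂ) * h ρ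
      = c1 * 𝓕 h t + c2 * 𝓕 h (-t) := by
    intro t
    rw [hF, hF, ← integral_const_mul, ← integral_const_mul, ← integral_add]
    · congr 1; funext ρ
      have e1 : - (-t * ρ) = t * ρ := by ring
      rw [e1, ee_cos_sin, ee_cos_sin]
      rw [show 2 * Real.pi * -(t * ρ) = -(2 * Real.pi * (t*ρ)) by ring, Real.cos_neg, Real.sin_neg]
      simp only [c1, c2]
      push_cast
      linear_combination (B * Complex.sin (2 * Real.pi * (t * ρ)) * h ρ) * Complex.I_sq
    · have := (hei (-t)).const_mul c1
      simpa using this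
    · have := (hei t).const_mul c2
      simpa using this
  simp only [key]
  calc _ ≤ ∫⁻ t, 2 * (‖c1‖ₑ ^ (2:ℝ) * ‖𝓕 h t‖ₑ ^ (2:ℝ) + ‖c2‖ₑ ^ (2:ℝ) * ‖𝓕 h (-t)‖ₑ ^ (2:ℝ)) := by
        refine lintegral_mono fun t => ?_
        refine (ENNReal.rpow_le_rpow (enorm_add_le _ _) (by norm_num)).trans ?_
        refine (esq_add_le _ _).trans (le_of_eq ?_)
        simp only [enorm_mul, ENNReal.mul_rpow_of_nonneg _ _ (show (0:ℝ) ≤ 2 by norm_num)]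
    _ = _ := by
        rw [lintegral_const_mul, lintegral_add_left, lintegral_const_mul, lintegral_const_mul,
          lintegral_neg_eq_self (fun t => ‖𝓕 h t‖ₑ ^ (2:ℝ)), hpl]
        · ring
        · exact (hFc.comp continuous_neg).measurable.enorm.pow_const _
        · exact hFc.measurable.enorm.pow_const _
        · exact (hFc.measurable.enorm.pow_const _).const_mul _
        · exact ((hFc.measurable.enorm.pow_const _).const_mul _).add (((hFc.comp continuous_neg).measurable.enorm.pow_const _).const_mul _)

lemma chi_bdd {χ : ℝ → ℝ} (hχ : IsCutoff χ) : ∃ K : ℝ, 0 ≤ K ∧ ∀ t, |χ t| ≤ K := by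
  obtain ⟨h1, -, h3⟩ := hχ
  obtain ⟨K, hK⟩ := isCompact_Icc.exists_bound_of_continuousOn (s := Icc (1/2:ℝ) 4) h1.continuous.continuousOn
  refine ⟨K, (norm_nonneg _).trans (hK 1 (by norm_num)), fun t => ?_⟩
  by_cases ht : t ∈ Icc (1/2:ℝ) 4
  · exact hK t ht
  · have : χ t = 0 := by by_contra h; exact ht (h3 h)
    rw [this, abs_zero]; exact (norm_nonneg _).trans (hK 1 (by norm_num))


lemma sM_cont {n : ℕ} (hn : 1 ≤ n) : Continuous (sM n) :=
  continuous_iff_continuousAt.2 fun r => (sM_deriv hn r).continuousAt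

lemma R_pow (n : ℕ) (R : ℝ) (hR : 1 ≤ R) :
    ((R/4) ^ (-(n/2:ℝ)))^2 ≤ 4^(n+2) * (R^n)⁻¹ ∧ ((R/4) ^ (-(n/2:ℝ) - 1))^2 * R ≤ 4^(n+2) * (R^n)⁻¹ := by
  have hR0 : 0 < R := by linarith
  have e1 : ((R/4) ^ (-(n/2:ℝ)))^2 = 4^n * (R^n)⁻¹ := by
    rw [← Real.rpow_natCast ((R/4) ^ (-(n/2:ℝ))) 2, ← Real.rpow_mul (by positivity)]
    rw [show -((n:ℝ)/2) * ((2:ℕ):ℝ) = -(n:ℝ) by push_cast; ring, Real.rpow_neg (by positivity), Real.rpow_natCast, div_pow]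
    field_simp
  have e2 : ((R/4) ^ (-(n/2:ℝ) - 1))^2 * R = 4^(n+2) * (R^n)⁻¹ * R⁻¹ := by
    rw [Real.rpow_sub_one (by positivity), div_pow, e1, pow_add]
    field_simp
  rw [e1, e2]
  constructor
  · gcongr <;> norm_num
  · refine mul_le_of_le_one_right (by positivity) (inv_le_one_of_one_le₀ hR)

lemma time_pt {n : ℕ} (hn : 1 ≤ n) (A B C : ℝ) (hC : 0 ≤ C)
    (hM : ∀ r, 1 ≤ r → |sM n r - r ^ (-(n/2:ℝ)) * (A * Real.cos r + B * Real.sin r)| ≤ C * r ^ (-(n/2:ℝ)) / r)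
    (R : ℝ) (hR : 2 ≤ R) (H : ℝ → ℂ) (hH : Measurable H) (hHi : Integrable H)
    (hs : ∀ ρ, H ρ ≠ 0 → R/4 ≤ ρ) (t : ℝ) (ht : 1/2 ≤ t) :
    ‖∫ ρ, ((sM n (2 * Real.pi * t * ρ) : ℝ) : ℂ) * H ρ‖ₑ ≤
      ‖∫ ρ, ((A * Real.cos (2 * Real.pi * (t * ρ)) + B * Real.sin (2 * Real.pi * (t * ρ)) : ℝ) : ℂ) * (((ρ ^ (-(n/2:ℝ)) : ℝ) : ℂ) * H ρ)‖ₑ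
       + ENNReal.ofReal (C * (R/4) ^ (-(n/2:ℝ) - 1)) * ∫⁻ ρ, ‖H ρ‖ₑ := by
  have hpi := Real.pi_gt_three
  have ht0 : 0 < t := by linarith
  have hn1 : (1:ℝ) ≤ n := by exact_mod_cast hn
  set M : ℝ → ℂ := fun ρ => ((A * Real.cos (2 * Real.pi * (t * ρ)) + B * Real.sin (2 * Real.pi * (t * ρ)) : ℝ) : ℂ) * (((ρ ^ (-(n/2:ℝ)) : ℝ) : ℂ) * H ρ) with hMd
  set τ : ℝ := (2 * Real.pi * t) ^ (-(n/2:ℝ)) with hτ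
  have hτ0 : 0 ≤ τ := by positivity
  have hτ1 : τ ≤ 1 := Real.rpow_le_one_of_one_le_of_nonpos (by nlinarith) (by linarith)
  have hg : Measurable (fun ρ : ℝ => ((ρ ^ (-(n/2:ℝ)) : ℝ) : ℂ)) := Complex.measurable_ofReal.comp (measurable_id.pow_const _)
  have hMm : Measurable M := by
    have : Continuous fun ρ : ℝ => ((A * Real.cos (2 * Real.pi * (t * ρ)) + B * Real.sin (2 * Real.pi * (t * ρ)) : ℝ) : ℂ) := by fun_prop
    exact this.measurable.mul (hg.mul hH)
  have hsm : Measurable fun ρ => ((sM n (2 * Real.pi * t * ρ) : ℝ) : ℂ) * H ρ := by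
    have hc := sM_cont hn
    have : Continuous fun ρ : ℝ => ((sM n (2 * Real.pi * t * ρ) : ℝ) : ℂ) := by fun_prop
    exact this.measurable.mul hH
  have hsi : Integrable fun ρ => ((sM n (2 * Real.pi * t * ρ) : ℝ) : ℂ) * H ρ := by
    refine hHi.norm.mono' hsm.aestronglyMeasurable (Filter.Eventually.of_forall fun ρ => ?_)
    rw [norm_mul, Complex.norm_real]
    exact mul_le_of_le_one_left (norm_nonneg _) (sM_le hn _)
  have hpt : ∀ ρ, ‖((sM n (2 * Real.pi * t * ρ) : ℝ) : ℂ) * H ρ - (τ : ℂ) * M ρ‖ ≤ C * (R/4) ^ (-(n/2:ℝ) - 1) * ‖H ρ‖ := by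
    intro ρ
    by_cases h0 : H ρ = 0
    · simp [hMd, h0]
    have hρ := hs ρ h0
    have hρ0 : 0 < ρ := by linarith
    have hr : R/4 ≤ 2 * Real.pi * t * ρ := by nlinarith [mul_pos ht0 hρ0]
    have hr1 : 1 ≤ 2 * Real.pi * t * ρ := by nlinarith [mul_pos ht0 hρ0]
    have e : ((sM n (2 * Real.pi * t * ρ) : ℝ) : ℂ) * H ρ - (τ : ℂ) * M ρ
        = ((sM n (2 * Real.pi * t * ρ) - (2 * Real.pi * t * ρ) ^ (-(n/2:ℝ)) * (A * Real.cos (2 * Real.pi * t * ρ) + B * Real.sin (2 * Real.pi * t * ρ)) : ℝ) : ℂ) * H ρ := by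
      rw [hMd, Real.mul_rpow (by positivity) hρ0.le, ← hτ]
      simp only [← mul_assoc (2 * Real.pi) t ρ]
      push_cast; ring
    rw [e, norm_mul, Complex.norm_real]
    gcongr
    refine (hM _ hr1).trans ?_
    rw [mul_div_assoc, ← Real.rpow_sub_one (by positivity)]
    gcongr C * ?_
    exact Real.rpow_le_rpow_of_nonpos (by linarith) hr (by linarith)
  have hdi : Integrable fun ρ => ((sM n (2 * Real.pi * t * ρ) : ℝ) : ℂ) * H ρ - (τ : ℂ) * M ρ := by
    refine (hHi.norm.const_mul (C * (R/4) ^ (-(n/2:ℝ) - 1))).mono' (hsm.sub (hMm.const_mul _)).aestronglyMeasurable (Filter.Eventually.of_forall hpt)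
  have hMi : Integrable fun ρ => (τ : ℂ) * M ρ := by
    have := hsi.sub hdi
    refine this.congr (Filter.Eventually.of_forall fun ρ => ?_)
    simp
  have hsplit : ∫ ρ, ((sM n (2 * Real.pi * t * ρ) : ℝ) : ℂ) * H ρ = (τ : ℂ) * (∫ ρ, M ρ) + ∫ ρ, (((sM n (2 * Real.pi * t * ρ) : ℝ) : ℂ) * H ρ - (τ : ℂ) * M ρ) := by
    rw [integral_sub hsi hMi, integral_const_mul]; ring
  rw [hsplit]
  refine (enorm_add_le _ _).trans ?_
  gcongr
  · rw [enorm_mul]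
    refine mul_le_of_le_one_left' ?_
    rw [← ofReal_norm, Complex.norm_real, Real.norm_of_nonneg hτ0]
    simpa using hτ1
  · refine (enorm_integral_le_lintegral_enorm _).trans ?_
    rw [← lintegral_const_mul _ hH.enorm]
    refine lintegral_mono fun ρ => ?_
    rw [← ofReal_norm, ← ofReal_norm (H ρ), ← ENNReal.ofReal_mul (by positivity)]
    exact ENNReal.ofReal_le_ofReal (hpt ρ)

lemma time_bound {n : ℕ} (hn : 1 ≤ n) {χ : ℝ → ℝ} (hχ : IsCutoff χ) : ∃ K : ℝ≥0∞, K ≠ ∞ ∧ ∀ (j : ℕ) (H : ℝ → ℂ),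
    Measurable H → Integrable H → MemLp H 2 volume →
    (∀ ρ, H ρ ≠ 0 → 0 ≤ ρ ∧ ρ ≤ 2^j ∧ (1 ≤ j → (2:ℝ)^j/4 ≤ ρ)) →
    ∫⁻ t, ‖(χ t : ℂ) * ∫ ρ, ((sM n (2 * Real.pi * t * ρ) : ℝ) : ℂ) * H ρ‖ₑ ^ (2:ℝ) ≤
      K * ENNReal.ofReal ((((2:ℝ)^j)^n)⁻¹) * ∫⁻ ρ, ‖H ρ‖ₑ ^ (2:ℝ) := by
  obtain ⟨A, B, C, hC, -, hM⟩ := sM_asymp hn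
  obtain ⟨K1, hK1, htr⟩ := trig_L2 A B
  obtain ⟨Kc, hKc0, hKc⟩ := chi_bdd hχ
  have hn1 : (1:ℝ) ≤ n := by exact_mod_cast hn
  set k := ENNReal.ofReal Kc ^ (2:ℝ) with hk
  have hkt : k ≠ ∞ := by rw [hk]; finiteness
  have hind : ∫⁻ t : ℝ, (Icc (1/2:ℝ) 4).indicator (fun _ => (1:ℝ≥0∞)) t = ENNReal.ofReal (7/2) := by
    rw [lintegral_indicator measurableSet_Icc]; simp; norm_num
  have hchi : ∀ t (z : ℂ), ‖(χ t : ℂ) * z‖ₑ ^ (2:ℝ) ≤ k * ((Icc (1/2:ℝ) 4).indicator (fun _ => (1:ℝ≥0∞)) t * ‖z‖ₑ ^ (2:ℝ)) := by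
    intro t z
    by_cases ht : t ∈ Icc (1/2:ℝ) 4
    · rw [indicator_of_mem ht, one_mul, enorm_mul, ENNReal.mul_rpow_of_nonneg _ _ (by norm_num), hk]
      gcongr
      rw [← ofReal_norm, Complex.norm_real]
      exact ENNReal.ofReal_le_ofReal (hKc t)
    · have : χ t = 0 := by by_contra h; exact ht (hχ.2.2 h)
      simp [this]
  refine ⟨k * ENNReal.ofReal (7/2) + k * (2 * (K1 * ENNReal.ofReal (4^(n+2)) + ENNReal.ofReal (7/2) * (ENNReal.ofReal (C^2) * ENNReal.ofReal (4^(n+2))))), by finiteness, ?_⟩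
  intro j H hH hHi hH2 hs
  set N := ∫⁻ ρ, ‖H ρ‖ₑ ^ (2:ℝ) with hN
  rw [mul_assoc]
  rcases Nat.eq_zero_or_pos j with hj | hj
  · subst hj
    rw [add_mul]
    refine le_trans ?_ le_self_add
    have h1 := cs_supp H hH 1 (by norm_num) (fun ρ h => ⟨(hs ρ h).1, by simpa using (hs ρ h).2.1⟩)
    calc _ ≤ ∫⁻ t, k * ((Icc (1/2:ℝ) 4).indicator (fun _ => (1:ℝ≥0∞)) t * N) := by
          refine lintegral_mono fun t => (hchi t _).trans ?_
          gcongr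
          refine le_trans (ENNReal.rpow_le_rpow ?_ (by norm_num)) (h1.trans (by simp [hN]))
          refine (enorm_integral_le_lintegral_enorm _).trans (lintegral_mono fun ρ => ?_)
          rw [enorm_mul]
          refine mul_le_of_le_one_left' ?_
          rw [← ofReal_norm, Complex.norm_real]
          simpa using sM_le hn _
      _ = _ := by
          rw [lintegral_const_mul' _ _ hkt, lintegral_mul_const _ (measurable_const.indicator measurableSet_Icc), hind]
          simp; ring
  · rw [add_mul]
    refine le_trans ?_ le_add_self
    set R : ℝ := 2^j with hRd
    have hR2 : 2 ≤ R := by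
      rw [hRd]; calc (2:ℝ) = 2^1 := by norm_num
        _ ≤ 2^j := pow_le_pow_right₀ (by norm_num) hj
    have hR0 : 0 < R := by linarith
    obtain ⟨r1, r2⟩ := R_pow n R (by linarith)
    set a := ((R/4) ^ (-(n/2:ℝ)))
    set b := ((R/4) ^ (-(n/2:ℝ) - 1))
    have ha0 : 0 ≤ a := by positivity
    have hb0 : 0 ≤ b := by positivity
    set h : ℝ → ℂ := fun ρ => (((ρ ^ (-(n/2:ℝ)) : ℝ) : ℂ) * H ρ) with hh
    have hhm : Measurable h := (Complex.measurable_ofReal.comp (measurable_id.pow_const _)).mul hH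
    have hle : ∀ ρ, ‖h ρ‖ ≤ a * ‖H ρ‖ := by
      intro ρ
      by_cases h0 : H ρ = 0
      · simp [hh, h0]
      have hρ := (hs ρ h0).2.2 hj
      rw [hh]; simp only [norm_mul, Complex.norm_real]
      gcongr
      rw [Real.norm_of_nonneg (Real.rpow_nonneg (by linarith) _)]
      exact Real.rpow_le_rpow_of_nonpos (by linarith) hρ (by linarith)
    have hhi : Integrable h := (hHi.norm.const_mul a).mono' hhm.aestronglyMeasurable (Filter.Eventually.of_forall hle)
    have hh2 : MemLp h 2 volume := MemLp.of_le_mul hH2 hhm.aestronglyMeasurable (Filter.Eventually.of_forall hle)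
    have hcs := cs_supp H hH R hR0.le (fun ρ h => ⟨(hs ρ h).1, (hs ρ h).2.1⟩)
    have hhN : ∫⁻ ρ, ‖h ρ‖ₑ ^ (2:ℝ) ≤ ENNReal.ofReal (a^2) * N := by
      rw [hN, ← lintegral_const_mul _ (hH.enorm.pow_const _)]
      refine lintegral_mono fun ρ => ?_
      rw [ENNReal.ofReal_pow ha0, ← ENNReal.rpow_two, ← ENNReal.mul_rpow_of_nonneg _ _ (by norm_num)]
      gcongr
      rw [← ofReal_norm, ← ofReal_norm, ← ENNReal.ofReal_mul ha0]
      exact ENNReal.ofReal_le_ofReal (hle ρ)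
    set Mn : ℝ → ℂ := fun t => ∫ ρ, ((A * Real.cos (2 * Real.pi * (t * ρ)) + B * Real.sin (2 * Real.pi * (t * ρ)) : ℝ) : ℂ) * h ρ with hMn
    calc _ ≤ ∫⁻ t, k * (2 * (‖Mn t‖ₑ ^ (2:ℝ) + (Icc (1/2:ℝ) 4).indicator (fun _ => (1:ℝ≥0∞)) t * (ENNReal.ofReal ((C * b)^2) * (ENNReal.ofReal R * N)))) := by
          refine lintegral_mono fun t => (hchi t _).trans ?_
          refine mul_le_mul_right ?_ _
          by_cases ht : t ∈ Icc (1/2:ℝ) 4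
          · rw [indicator_of_mem ht, one_mul, one_mul]
            refine (ENNReal.rpow_le_rpow (time_pt hn A B C hC hM R hR2 H hH hHi (fun ρ h => (hs ρ h).2.2 hj) t ht.1) (by norm_num)).trans ?_
            refine (esq_add_le _ _).trans ?_
            gcongr
            rw [ENNReal.mul_rpow_of_nonneg _ _ (by norm_num), ENNReal.ofReal_pow (by positivity), ← ENNReal.rpow_two]
            gcongr
          · rw [indicator_of_notMem ht, zero_mul]; exact zero_le
      _ = k * (2 * ((∫⁻ t, ‖Mn t‖ₑ ^ (2:ℝ)) + ENNReal.ofReal (7/2) * (ENNReal.ofReal ((C * b)^2) * (ENNReal.ofReal R * N)))) := by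
          rw [lintegral_const_mul' _ _ hkt, lintegral_const_mul' _ _ (by simp), lintegral_add_right,
            lintegral_mul_const _ (measurable_const.indicator measurableSet_Icc), hind]
          exact (measurable_const.indicator measurableSet_Icc).mul_const _
      _ ≤ k * (2 * (K1 * (ENNReal.ofReal (4^(n+2) * (R^n)⁻¹) * N) + ENNReal.ofReal (7/2) * (ENNReal.ofReal (C^2) * (ENNReal.ofReal (4^(n+2) * (R^n)⁻¹) * N)))) := by
          gcongr k * (2 * (?_ + _ * ?_))
          · refine (htr h hhm hhi hh2).trans ?_
            gcongr
            refine hhN.trans ?_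
            gcongr
          · rw [← mul_assoc, ← mul_assoc, ← ENNReal.ofReal_mul (sq_nonneg (C*b)), ← ENNReal.ofReal_mul (sq_nonneg C)]
            refine mul_le_mul_left (ENNReal.ofReal_le_ofReal ?_) _
            rw [mul_pow, mul_assoc]
            gcongr
      _ = _ := by
          rw [ENNReal.ofReal_mul (by positivity)]; ring


theorem mink_fin {α : Type*} [MeasurableSpace α] (μ : Measure α) [SFinite μ]
    (Φ : α → ℝ → ℝ≥0∞) (hΦ : Measurable (Function.uncurry Φ)) (r : ℝ) (hr : 1 < r)
    (hf : ∫⁻ x, (∫⁻ ρ, Φ x ρ) ^ r ∂μ ≠ ∞) :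
    (∫⁻ x, (∫⁻ ρ, Φ x ρ) ^ r ∂μ) ^ (1/r) ≤ ∫⁻ ρ, (∫⁻ x, Φ x ρ ^ r ∂μ) ^ (1/r) := by
  set G : α → ℝ≥0∞ := fun x => ∫⁻ ρ, Φ x ρ with hG
  have hGm : Measurable G := Measurable.lintegral_prod_right' (f := Function.uncurry Φ) hΦ
  set I := ∫⁻ x, (G x) ^ r ∂μ with hI
  have hr0 : 0 < r := by linarith
  by_cases hI0 : I = 0
  · rw [hI0, ENNReal.zero_rpow_of_pos (by positivity)]; exact zero_le
  have hc : r.HolderConjugate (Real.conjExponent r) := Real.HolderConjugate.conjExponent hr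
  set s := Real.conjExponent r
  have hs0 : 0 < s := hc.symm.pos
  have key : I ≤ (∫⁻ ρ, (∫⁻ x, Φ x ρ ^ r ∂μ) ^ (1/r)) * I ^ (1/s) := by
    have e1 : I = ∫⁻ x, ∫⁻ ρ, Φ x ρ * G x ^ (r-1) ∂volume ∂μ := by
      rw [hI]
      refine lintegral_congr fun x => ?_
      rw [lintegral_mul_const]
      · change _ = G x * _
        conv_rhs => rw [← ENNReal.rpow_one (G x)]
        rw [← ENNReal.rpow_mul, ← ENNReal.rpow_add_of_nonneg _ _ (by norm_num) (by linarith)]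
        congr 1; ring
      · exact hΦ.comp (measurable_const.prodMk measurable_id)
    rw [lintegral_lintegral_swap] at e1
    · conv_lhs => rw [e1]
      rw [← lintegral_mul_const']
      · refine lintegral_mono fun ρ => ?_
        have H := ENNReal.lintegral_mul_le_Lp_mul_Lq μ hc (f := fun x => Φ x ρ) (g := fun x => G x ^ (r-1))
          (hΦ.comp (measurable_id.prodMk measurable_const)).aemeasurable (hGm.pow_const _).aemeasurable
        refine H.trans (le_of_eq ?_)
        congr 2
        rw [hI]
        refine lintegral_congr fun x => ?_
        rw [← ENNReal.rpow_mul]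
        congr 1
        exact hc.sub_one_mul_conj
      · exact ENNReal.rpow_ne_top_of_nonneg (by positivity) hf
    · exact (hΦ.mul ((hGm.pow_const _).comp measurable_fst)).aemeasurable
  have hsp : I = I ^ (1/r) * I ^ (1/s) := by
    rw [← ENNReal.rpow_add _ _ hI0 hf]
    have := hc.inv_add_inv_eq_one
    rw [one_div, one_div, this, ENNReal.rpow_one]
  have h1 : I ^ (1/s) ≠ 0 := by
    simp [ENNReal.rpow_eq_zero_iff, hI0, hf]
  have h2 : I ^ (1/s) ≠ ∞ := ENNReal.rpow_ne_top_of_nonneg (by positivity) hf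
  conv at key => lhs; rw [hsp]
  exact (ENNReal.mul_le_mul_iff_left h1 h2).1 key

theorem mink {d : ℕ}
    (Φ : Euc d → ℝ → ℝ≥0∞) (hΦ : Measurable (Function.uncurry Φ)) (r : ℝ) (hr : 1 < r)
    (B : ℝ≥0∞) (hB : B ≠ ∞) (hf : ∀ x, ∫⁻ ρ, Φ x ρ ≤ B) :
    (∫⁻ x, (∫⁻ ρ, Φ x ρ) ^ r) ^ (1/r) ≤ ∫⁻ ρ, (∫⁻ x, Φ x ρ ^ r) ^ (1/r) := by
  have hr0 : 0 < r := by linarith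
  have hu : (⋃ k : ℕ, ball (0 : Euc d) k) = univ := iUnion_ball_nat 0
  have e : ∫⁻ x, (∫⁻ ρ, Φ x ρ) ^ r = ⨆ k : ℕ, ∫⁻ x in ball (0 : Euc d) k, (∫⁻ ρ, Φ x ρ) ^ r := by
    rw [← setLIntegral_univ, ← hu]
    refine setLIntegral_iUnion_of_directed _ ?_
    refine Monotone.directed_le ?_
    intro a b h
    exact ball_subset_ball (by exact_mod_cast h)
  rw [one_div, ENNReal.rpow_inv_le_iff hr0, e]
  refine iSup_le fun k => ?_
  rw [← ENNReal.rpow_inv_le_iff hr0, ← one_div]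
  have hfin : ∫⁻ x in ball (0 : Euc d) k, (∫⁻ ρ, Φ x ρ) ^ r ≠ ∞ := by
    refine ne_top_of_le_ne_top (b := ∫⁻ x in ball (0 : Euc d) k, B ^ r) ?_ (lintegral_mono fun x => ENNReal.rpow_le_rpow (hf x) hr0.le)
    rw [setLIntegral_const]
    exact ENNReal.mul_ne_top (ENNReal.rpow_ne_top_of_nonneg hr0.le hB) measure_ball_lt_top.ne
  refine (mink_fin _ Φ hΦ r hr hfin).trans (lintegral_mono fun ρ => ?_)
  exact ENNReal.rpow_le_rpow (setLIntegral_le_lintegral _ _) (by positivity)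


lemma fi_eq {m : ℕ} (h : Euc m → ℂ) (x : Euc m) : 𝓕⁻ h x = ∫ ξ, h ξ * ee (inner ℝ ξ x) := by
  rw [Real.fourierInv_eq']
  congr 1; funext ξ
  rw [smul_eq_mul, mul_comm, ee]

lemma sph_fi {n : ℕ} (hn : 1 ≤ n) (h : Euc (n+1) → ℂ) (hm : Measurable h) (hi : Integrable h)
    (t : ℝ) (ht : 0 ≤ t) (x : Euc (n+1)) :
    sphAvg (𝓕⁻ h) t x = ∫ ξ, h ξ * ee (inner ℝ ξ x) * ((sM n (2 * Real.pi * t * ‖ξ‖) : ℝ) : ℂ) := by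
  haveI := sphereMeasure_prob (n+1) (by omega)
  have hec := ee_cont
  unfold sphAvg
  simp_rw [fi_eq]
  rw [integral_integral_swap]
  · congr 1; funext ξ
    have e : ∀ y : Euc (n+1), h ξ * ee (inner ℝ ξ (x - t • y)) = h ξ * ee (inner ℝ ξ x) * ee (inner ℝ y (-(t • ξ))) := by
      intro y
      rw [mul_assoc, ← ee_add]
      congr 2
      rw [inner_sub_right, inner_smul_right, inner_neg_right, inner_smul_right, real_inner_comm y ξ]
      ring
    simp_rw [e]
    rw [integral_const_mul, sM_ee hn, norm_neg, norm_smul, Real.norm_of_nonneg ht, ← mul_assoc]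
  · have h1 : Integrable (fun p : Euc (n+1) × Euc (n+1) => h p.2) ((sphereMeasure (n+1)).prod volume) :=
      hi.comp_snd (sphereMeasure (n+1))
    refine h1.norm.mono' ?_ ?_
    · have h2 : Continuous fun p : Euc (n+1) × Euc (n+1) => ee (inner ℝ p.2 (x - t • p.1)) := by fun_prop
      exact ((hm.comp measurable_snd).mul h2.measurable).aestronglyMeasurable
    · refine Filter.Eventually.of_forall fun p => ?_
      simp [Function.uncurry, ee_norm]

/-- The radial profile. -/
def HH {n : ℕ} (h : Euc (n+1) → ℂ) (x : Euc (n+1)) (ρ : ℝ) : ℂ :=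
  (Ioi (0:ℝ)).indicator (fun ρ => (((sphC (n+1)).toReal * ρ ^ n : ℝ) : ℂ) * extn (fun ω => h (ρ • ω)) (ρ • x)) ρ

lemma HH_meas {n : ℕ} (hn : 1 ≤ n) (h : Euc (n+1) → ℂ) (hm : Measurable h) :
    Measurable (Function.uncurry (HH h)) := by
  haveI := sphereMeasure_prob (n+1) (by omega)
  have hec := ee_cont
  have h1 : Measurable fun p : Euc (n+1) × ℝ => extn (fun ω => h (p.2 • ω)) (p.2 • p.1) := by
    have h2 : Continuous fun p : (Euc (n+1) × ℝ) × Euc (n+1) => ee (inner ℝ p.2 (p.1.2 • p.1.1)) := by fun_prop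
    have h3 : Continuous fun p : (Euc (n+1) × ℝ) × Euc (n+1) => p.1.2 • p.2 := by fun_prop
    exact (StronglyMeasurable.integral_prod_right' (ν := sphereMeasure (n+1))
      ((hm.comp h3.measurable).mul h2.measurable).stronglyMeasurable).measurable
  have h4 : Measurable fun p : Euc (n+1) × ℝ => (((sphC (n+1)).toReal * p.2 ^ n : ℝ) : ℂ) := by
    have : Continuous fun p : Euc (n+1) × ℝ => (((sphC (n+1)).toReal * p.2 ^ n : ℝ) : ℂ) := by fun_prop
    exact this.measurable
  have e : Function.uncurry (HH h) = (Prod.snd ⁻¹' (Ioi (0:ℝ))).indicator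
      (fun p : Euc (n+1) × ℝ => (((sphC (n+1)).toReal * p.2 ^ n : ℝ) : ℂ) * extn (fun ω => h (p.2 • ω)) (p.2 • p.1)) := by
    funext p
    rfl
  rw [e]
  exact (h4.mul h1).indicator (measurable_snd measurableSet_Ioi)

lemma sph_HH {n : ℕ} (hn : 1 ≤ n) (h : Euc (n+1) → ℂ) (hm : Measurable h) (hi : Integrable h)
    (t : ℝ) (ht : 0 ≤ t) (x : Euc (n+1)) :
    sphAvg (𝓕⁻ h) t x = ∫ ρ, ((sM n (2 * Real.pi * t * ρ) : ℝ) : ℂ) * HH h x ρ := by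
  have hec := ee_cont
  have hsc := sM_cont hn
  rw [sph_fi hn h hm hi t ht x, polar_integral (n+1) (by omega)]
  · rw [← integral_indicator measurableSet_Ioi]
    congr 1; funext ρ
    unfold HH
    by_cases hρ : ρ ∈ Ioi (0:ℝ)
    · rw [indicator_of_mem hρ, indicator_of_mem hρ]
      rw [show n + 1 - 1 = n by omega]
      have : ∫ ω, h (ρ • ω) * ee (inner ℝ (ρ • ω) x) * ((sM n (2 * Real.pi * t * ‖ρ • ω‖) : ℝ) : ℂ) ∂sphereMeasure (n+1)
          = extn (fun ω => h (ρ • ω)) (ρ • x) * ((sM n (2 * Real.pi * t * ρ) : ℝ) : ℂ) := by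
        rw [extn, ← integral_mul_const]
        refine integral_congr_ae ?_
        filter_upwards [sphereMeasure_norm (n+1)] with ω hω
        rw [norm_smul, hω, mul_one, Real.norm_of_nonneg (le_of_lt hρ), real_inner_smul_left, real_inner_smul_right]
      rw [this]; ring
    · rw [indicator_of_notMem hρ, indicator_of_notMem hρ, mul_zero]
  · refine hi.norm.mono' ?_ ?_
    · have h2 : Continuous fun ξ : Euc (n+1) => ee (inner ℝ ξ x) := by fun_prop
      have h3 : Continuous fun ξ : Euc (n+1) => ((sM n (2 * Real.pi * t * ‖ξ‖) : ℝ) : ℂ) := by fun_prop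
      exact ((hm.mul h2.measurable).mul h3.measurable).aestronglyMeasurable
    · refine Filter.Eventually.of_forall fun ξ => ?_
      rw [norm_mul, norm_mul, ee_norm, mul_one, Complex.norm_real]
      exact mul_le_of_le_one_right (norm_nonneg _) (sM_le hn _)

/-- admissible frequency data -/
def Adm {n : ℕ} (j : ℕ) (h : Euc (n+1) → ℂ) : Prop :=
  Measurable h ∧ (∃ K, ∀ ξ, ‖h ξ‖ ≤ K) ∧ ∀ ξ, h ξ ≠ 0 → ‖ξ‖ ≤ 2^j ∧ (1 ≤ j → (2:ℝ)^j/4 ≤ ‖ξ‖)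

lemma adm_int {n : ℕ} {j : ℕ} {h : Euc (n+1) → ℂ} (ha : Adm j h) : Integrable h := by
  obtain ⟨hm, ⟨K, hK⟩, hs⟩ := ha
  have h1 : IntegrableOn (fun _ : Euc (n+1) => K) (closedBall 0 (2^j)) := integrableOn_const (measure_closedBall_lt_top.ne) (by simp)
  refine ((integrable_indicator_iff measurableSet_closedBall).2 h1).mono' hm.aestronglyMeasurable ?_
  refine Filter.Eventually.of_forall fun ξ => ?_
  by_cases h0 : h ξ = 0
  · rw [h0, norm_zero]
    refine indicator_nonneg (fun _ _ => (norm_nonneg _).trans (hK 0)) _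
  · rw [indicator_of_mem (by simpa using (hs ξ h0).1)]; exact hK ξ

lemma HH_zero {n : ℕ} (hn : 1 ≤ n) {j : ℕ} {h : Euc (n+1) → ℂ} (ha : Adm j h) (x : Euc (n+1)) (ρ : ℝ)
    (h0 : HH h x ρ ≠ 0) : 0 ≤ ρ ∧ ρ ≤ 2^j ∧ (1 ≤ j → (2:ℝ)^j/4 ≤ ρ) := by
  by_cases hρ : ρ ∈ Ioi (0:ℝ)
  · have hρ' : 0 < ρ := hρ
    by_contra hc
    apply h0
    rw [HH, indicator_of_mem hρ]
    have : extn (fun ω => h (ρ • ω)) (ρ • x) = 0 := by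
      rw [extn]
      rw [integral_eq_zero_of_ae]
      filter_upwards [sphereMeasure_norm (n+1)] with ω hω
      by_cases hh : h (ρ • ω) = 0
      · simp [hh]
      · exfalso
        have := ha.2.2 _ hh
        rw [norm_smul, hω, mul_one, Real.norm_of_nonneg hρ'.le] at this
        exact hc ⟨hρ'.le, this⟩
    rw [this, mul_zero]
  · exact absurd (by rw [HH, indicator_of_notMem hρ]) h0

lemma HH_bdd {n : ℕ} (hn : 1 ≤ n) {j : ℕ} {h : Euc (n+1) → ℂ} (ha : Adm j h) :
    ∃ M, 0 ≤ M ∧ ∀ x ρ, ‖HH h x ρ‖ ≤ (Icc (0:ℝ) (2^j)).indicator (fun _ => M) ρ := by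
  obtain ⟨K, hK⟩ := ha.2.1
  have hK0 : 0 ≤ K := (norm_nonneg _).trans (hK 0)
  refine ⟨(sphC (n+1)).toReal * (2^j)^n * K, by positivity, fun x ρ => ?_⟩
  by_cases h0 : HH h x ρ = 0
  · rw [h0, norm_zero]; exact indicator_nonneg (fun _ _ => by positivity) _
  have hz := HH_zero hn ha x ρ h0
  rw [indicator_of_mem (show ρ ∈ Icc (0:ℝ) (2^j) from ⟨hz.1, hz.2.1⟩)]
  have hz1 := hz.1
  have hz2 := hz.2.1
  have hρ : ρ ∈ Ioi (0:ℝ) := by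
    by_contra hc
    exact h0 (by rw [HH, indicator_of_notMem hc])
  rw [HH, indicator_of_mem hρ, norm_mul, Complex.norm_real, Real.norm_of_nonneg (by positivity)]
  refine mul_le_mul ?_ (extn_le hn _ K (Filter.Eventually.of_forall fun ω => hK _) _) (norm_nonneg _) (by positivity)
  gcongr

lemma red {n : ℕ} (hn : 1 ≤ n) {χ : ℝ → ℝ} (hχ : IsCutoff χ) : ∃ K : ℝ≥0∞, K ≠ ∞ ∧ ∀ (j : ℕ) (h : Euc (n+1) → ℂ),
    Adm j h → ∀ x, ∫⁻ t, ‖(χ t : ℂ) * sphAvg (𝓕⁻ h) t x‖ₑ ^ (2:ℝ) ≤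
      K * ENNReal.ofReal ((((2:ℝ)^j)^n)⁻¹) * ∫⁻ ρ, ‖HH h x ρ‖ₑ ^ (2:ℝ) := by
  obtain ⟨K, hK, H⟩ := time_bound hn hχ
  refine ⟨K, hK, fun j h ha x => ?_⟩
  obtain ⟨M, hM0, hM⟩ := HH_bdd hn ha
  have hmx : Measurable (HH h x) := (HH_meas hn h ha.1).comp (measurable_const.prodMk measurable_id)
  have hD : ∀ p : ℝ≥0∞, MemLp ((Icc (0:ℝ) (2^j)).indicator (fun _ => M)) p volume := fun p =>
    memLp_indicator_const p measurableSet_Icc _ (Or.inr (by simp))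
  have hL : ∀ p : ℝ≥0∞, MemLp (HH h x) p volume := fun p =>
    (hD p).mono' hmx.aestronglyMeasurable (Filter.Eventually.of_forall (hM x))
  refine le_trans (le_of_eq ?_) (H j (HH h x) hmx (memLp_one_iff_integrable.1 (hL 1)) (hL 2) (HH_zero hn ha x))
  refine lintegral_congr fun t => ?_
  by_cases ht : χ t = 0
  · simp [ht]
  · rw [sph_HH hn h ha.1 (adm_int ha) t]
    have := (hχ.2.2 ht).1
    linarith


lemma HH_enorm {n : ℕ} (h : Euc (n+1) → ℂ) (x : Euc (n+1)) (ρ : ℝ) (hρ : 0 < ρ) :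
    ‖HH h x ρ‖ₑ = sphC (n+1) * ENNReal.ofReal (ρ ^ n) * ‖extn (fun ω => h (ρ • ω)) (ρ • x)‖ₑ := by
  rw [HH, indicator_of_mem (show ρ ∈ Ioi (0:ℝ) from hρ), enorm_mul]
  congr 1
  rw [← ofReal_norm, Complex.norm_real, Real.norm_of_nonneg (by positivity), ENNReal.ofReal_mul ENNReal.toReal_nonneg,
    ENNReal.ofReal_toReal (sphC_ne_top _)]

lemma Nh_eq {n : ℕ} (hn : 1 ≤ n) (h : Euc (n+1) → ℂ) (hm : Measurable h) :
    ∫⁻ ρ in Ioi (0:ℝ), sphC (n+1) * (ENNReal.ofReal (ρ ^ n) * ∫⁻ ω, ‖h (ρ • ω)‖ₑ ^ (2:ℝ) ∂sphereMeasure (n+1))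
      = ∫⁻ ξ, ‖h ξ‖ₑ ^ (2:ℝ) := by
  rw [lintegral_const_mul' _ _ (sphC_ne_top _), polar_lintegral (n+1) (by omega) _ (hm.enorm.pow_const _)]
  rfl

lemma HH_sup {n : ℕ} (hn : 1 ≤ n) {j : ℕ} {h : Euc (n+1) → ℂ} (ha : Adm j h) (x : Euc (n+1)) :
    ∫⁻ ρ, ‖HH h x ρ‖ₑ ^ (2:ℝ) ≤ sphC (n+1) * ENNReal.ofReal (((2:ℝ)^j)^n) * ∫⁻ ξ, ‖h ξ‖ₑ ^ (2:ℝ) := by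
  rw [← Nh_eq hn h ha.1, ← lintegral_const_mul' _ _ (ENNReal.mul_ne_top (sphC_ne_top _) ENNReal.ofReal_ne_top),
    ← lintegral_indicator measurableSet_Ioi]
  refine lintegral_mono fun ρ => ?_
  by_cases h0 : HH h x ρ = 0
  · rw [h0, enorm_zero, ENNReal.zero_rpow_of_pos (by norm_num)]; exact zero_le
  have hρ : ρ ∈ Ioi (0:ℝ) := by
    by_contra hc
    exact h0 (by rw [HH, indicator_of_notMem hc])
  have hρ' : 0 < ρ := hρ
  have hz := (HH_zero hn ha x ρ h0).2.1
  rw [indicator_of_mem hρ, HH_enorm h x ρ hρ, ENNReal.mul_rpow_of_nonneg _ _ (by norm_num), ENNReal.mul_rpow_of_nonneg _ _ (by norm_num)]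
  have e1 : ‖extn (fun ω => h (ρ • ω)) (ρ • x)‖ₑ ^ (2:ℝ) ≤ ∫⁻ ω, ‖h (ρ • ω)‖ₑ ^ (2:ℝ) ∂sphereMeasure (n+1) := by
    have := extn_L2 hn (fun ω => h (ρ • ω)) (ha.1.comp (measurable_const_smul ρ)) (ρ • x)
    refine (ENNReal.rpow_le_rpow this (by norm_num : (0:ℝ) ≤ 2)).trans (le_of_eq ?_)
    rw [← ENNReal.rpow_mul]; norm_num
  have e2 : ENNReal.ofReal (ρ ^ n) ≤ ENNReal.ofReal (((2:ℝ)^j)^n) := ENNReal.ofReal_le_ofReal (by gcongr)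
  rw [ENNReal.rpow_two, ENNReal.rpow_two]
  calc _ ≤ (sphC (n+1) ^ 2 * (ENNReal.ofReal (((2:ℝ)^j)^n) * ENNReal.ofReal (ρ ^ n))) * ∫⁻ ω, ‖h (ρ • ω)‖ₑ ^ (2:ℝ) ∂sphereMeasure (n+1) := by
        rw [sq (ENNReal.ofReal (ρ^n))]
        refine mul_le_mul' (mul_le_mul' le_rfl (mul_le_mul' e2 le_rfl)) e1
    _ = _ := by ring

lemma pow_id {n : ℕ} (hn : 1 ≤ n) (ρ R : ℝ) (hρ : 0 < ρ) (hR : ρ ≤ R) :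
    ENNReal.ofReal (ρ ^ n) * ENNReal.ofReal (ρ⁻¹ ^ (n+1)) ^ (2 / q0 n) ≤ ENNReal.ofReal (R ^ ((n:ℝ)/(n+2))) := by
  have hn0 : (0:ℝ) < n := by exact_mod_cast hn
  rw [ENNReal.ofReal_rpow_of_nonneg (by positivity) (by unfold q0; positivity), ← ENNReal.ofReal_mul (by positivity)]
  refine ENNReal.ofReal_le_ofReal ?_
  have : ρ ^ n * (ρ⁻¹ ^ (n+1)) ^ (2 / q0 n) = ρ ^ ((n:ℝ)/(n+2)) := by
    rw [← Real.rpow_natCast, ← Real.rpow_natCast, ← Real.rpow_neg_one, ← Real.rpow_mul hρ.le, ← Real.rpow_mul hρ.le,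
      ← Real.rpow_add hρ]
    congr 1
    unfold q0
    push_cast
    field_simp
    ring
  rw [this]
  exact Real.rpow_le_rpow hρ.le hR (by positivity)

lemma HH_q {n : ℕ} (hn : 1 ≤ n) : ∃ C : ℝ≥0∞, C ≠ ∞ ∧ ∀ (j : ℕ) (h : Euc (n+1) → ℂ), Adm j h →
    (∫⁻ x, (∫⁻ ρ, ‖HH h x ρ‖ₑ ^ (2:ℝ)) ^ (q0 n / 2)) ^ (2 / q0 n) ≤
      C * ENNReal.ofReal (((2:ℝ)^j) ^ ((n:ℝ)/(n+2))) * ∫⁻ ξ, ‖h ξ‖ₑ ^ (2:ℝ) := by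
  obtain ⟨C, hC, HC⟩ := extn_q hn
  have hq := q0_gt hn
  have hq0 : 0 < q0 n := by linarith
  have hCC : C ^ (2 / q0 n) * sphC (n+1) ≠ ∞ := ENNReal.mul_ne_top (ENNReal.rpow_ne_top_of_nonneg (by positivity) hC) (sphC_ne_top _)
  refine ⟨C ^ (2 / q0 n) * sphC (n+1), hCC, fun j h ha => ?_⟩
  have hfin : ∫⁻ ξ, ‖h ξ‖ₑ ^ (2:ℝ) ≠ ∞ := by
    obtain ⟨K, hK⟩ := ha.2.1
    have hK0 : 0 ≤ K := (norm_nonneg _).trans (hK 0)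
    have hi := (adm_int ha).2
    refine ne_top_of_le_ne_top (b := ∫⁻ ξ, ENNReal.ofReal K * ‖h ξ‖ₑ) ?_ (lintegral_mono fun ξ => ?_)
    · rw [lintegral_const_mul' _ _ ENNReal.ofReal_ne_top]
      exact ENNReal.mul_ne_top ENNReal.ofReal_ne_top hi.ne
    · rw [ENNReal.rpow_two, sq]
      refine mul_le_mul_left ?_ _
      rw [← ofReal_norm]
      exact ENNReal.ofReal_le_ofReal (hK ξ)
  have hHm := HH_meas hn h ha.1
  have M := mink (fun x ρ => ‖HH h x ρ‖ₑ ^ (2:ℝ)) (hHm.enorm.pow_const _) (q0 n / 2) (by linarith)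
    (sphC (n+1) * ENNReal.ofReal (((2:ℝ)^j)^n) * ∫⁻ ξ, ‖h ξ‖ₑ ^ (2:ℝ))
    (ENNReal.mul_ne_top (ENNReal.mul_ne_top (sphC_ne_top _) ENNReal.ofReal_ne_top) hfin) (HH_sup hn ha)
  rw [show 1 / (q0 n / 2) = 2 / q0 n by field_simp] at M
  refine M.trans ?_
  rw [← Nh_eq hn h ha.1, ← lintegral_const_mul' _ _ (ENNReal.mul_ne_top hCC ENNReal.ofReal_ne_top),
    ← lintegral_indicator measurableSet_Ioi]
  refine lintegral_mono fun ρ => ?_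
  have e0 : ∀ x, (‖HH h x ρ‖ₑ ^ (2:ℝ)) ^ (q0 n / 2) = ‖HH h x ρ‖ₑ ^ (q0 n) := by
    intro x; rw [← ENNReal.rpow_mul]; congr 1; ring
  simp_rw [e0]
  by_cases h0 : ∀ x, HH h x ρ = 0
  · simp only [h0, enorm_zero, ENNReal.zero_rpow_of_pos hq0, lintegral_zero]
    rw [ENNReal.zero_rpow_of_pos (by positivity)]; exact zero_le
  push Not at h0
  obtain ⟨x0, h0⟩ := h0
  have hρ : ρ ∈ Ioi (0:ℝ) := by
    by_contra hc
    exact h0 (by rw [HH, indicator_of_notMem hc])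
  have hρ' : 0 < ρ := hρ
  have hz := (HH_zero hn ha x0 ρ h0).2.1
  rw [indicator_of_mem hρ]
  set g : Euc (n+1) → ℂ := fun ω => h (ρ • ω) with hg
  have hgm : Measurable g := ha.1.comp (measurable_const_smul ρ)
  set m := ∫⁻ ω, ‖g ω‖ₑ ^ (2:ℝ) ∂sphereMeasure (n+1)
  set a := sphC (n+1) * ENNReal.ofReal (ρ ^ n) with hadef
  have hat : a ≠ ∞ := ENNReal.mul_ne_top (sphC_ne_top _) ENNReal.ofReal_ne_top
  have e1 : ∫⁻ x, ‖HH h x ρ‖ₑ ^ (q0 n) ≤ a ^ (q0 n) * (ENNReal.ofReal (ρ⁻¹ ^ (n+1)) * (C * m ^ (q0 n / 2))) := by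
    have hs := lintegral_scale (fun x => ‖extn g x‖ₑ ^ q0 n) ((extn_meas hn g hgm).enorm.pow_const _) ρ⁻¹ (by positivity)
    rw [inv_inv] at hs
    have hb := HC g hgm (by obtain ⟨K, hK⟩ := ha.2.1; exact ⟨K, fun ω => hK _⟩)
    calc _ = ∫⁻ x, a ^ (q0 n) * ‖extn g (ρ • x)‖ₑ ^ (q0 n) := by
          refine lintegral_congr fun x => ?_
          rw [HH_enorm h x ρ hρ', ENNReal.mul_rpow_of_nonneg _ _ hq0.le]
      _ = a ^ (q0 n) * (ENNReal.ofReal (ρ⁻¹ ^ (n+1)) * ∫⁻ x, ‖extn g x‖ₑ ^ (q0 n)) := by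
          rw [lintegral_const_mul' _ _ (ENNReal.rpow_ne_top_of_nonneg hq0.le hat), hs]
      _ ≤ _ := mul_le_mul' le_rfl (mul_le_mul' le_rfl hb)
  refine (ENNReal.rpow_le_rpow e1 (by positivity)).trans ?_
  clear_value a
  rw [ENNReal.mul_rpow_of_nonneg _ _ (by positivity), ENNReal.mul_rpow_of_nonneg _ _ (by positivity), ENNReal.mul_rpow_of_nonneg _ _ (by positivity),
    ← ENNReal.rpow_mul, ← ENNReal.rpow_mul, show q0 n * (2 / q0 n) = 2 by field_simp, show q0 n / 2 * (2 / q0 n) = 1 by field_simp,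
    ENNReal.rpow_one, ENNReal.rpow_two]
  calc _ = C ^ (2 / q0 n) * sphC (n+1) * (ENNReal.ofReal (ρ ^ n) * ENNReal.ofReal (ρ⁻¹ ^ (n+1)) ^ (2 / q0 n)) * (sphC (n+1) * (ENNReal.ofReal (ρ^n) * m)) := by
        rw [hadef]; ring
    _ ≤ _ := mul_le_mul' (mul_le_mul' le_rfl (pow_id hn ρ _ hρ' hz)) le_rfl

lemma main_h {n : ℕ} (hn : 1 ≤ n) {χ : ℝ → ℝ} (hχ : IsCutoff χ) : ∃ K : ℝ≥0∞, K ≠ ∞ ∧ ∀ (j : ℕ) (h : Euc (n+1) → ℂ),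
    Adm j h → (∀ x, ∫⁻ t, ‖(χ t : ℂ) * sphAvg (𝓕⁻ h) t x‖ₑ ^ (2:ℝ) ≤ K * ∫⁻ ξ, ‖h ξ‖ₑ ^ (2:ℝ)) ∧
      ∫⁻ x, (∫⁻ t, ‖(χ t : ℂ) * sphAvg (𝓕⁻ h) t x‖ₑ ^ (2:ℝ)) ^ (q0 n / 2) ≤
        (2:ℝ≥0∞) ^ (-((j:ℝ) * ((n+1:ℕ):ℝ))) * (K * ∫⁻ ξ, ‖h ξ‖ₑ ^ (2:ℝ)) ^ (q0 n / 2) := by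
  obtain ⟨K, hK, H⟩ := red hn hχ
  obtain ⟨C, hC, HC⟩ := HH_q hn
  have hq := q0_gt hn
  have hq0 : 0 < q0 n := by linarith
  have hn0 : (0:ℝ) < n := by exact_mod_cast hn
  refine ⟨K * (sphC (n+1) + C), ENNReal.mul_ne_top hK (by simp [sphC_ne_top, hC]), fun j h ha => ⟨fun x => ?_, ?_⟩⟩
  · refine (H j h ha x).trans ?_
    refine (mul_le_mul' le_rfl (HH_sup hn ha x)).trans ?_
    set N := ∫⁻ ξ, ‖h ξ‖ₑ ^ (2:ℝ)
    calc _ = K * sphC (n+1) * (ENNReal.ofReal ((((2:ℝ)^j)^n)⁻¹) * ENNReal.ofReal (((2:ℝ)^j)^n)) * N := by ring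
      _ = K * sphC (n+1) * N := by
        rw [← ENNReal.ofReal_mul (by positivity), inv_mul_cancel₀ (by positivity), ENNReal.ofReal_one, mul_one]
      _ ≤ _ := mul_le_mul' (mul_le_mul' le_rfl le_self_add) le_rfl
  · set N := ∫⁻ ξ, ‖h ξ‖ₑ ^ (2:ℝ)
    have hKt : K * ENNReal.ofReal ((((2:ℝ)^j)^n)⁻¹) ≠ ∞ := ENNReal.mul_ne_top hK ENNReal.ofReal_ne_top
    have hb := HC j h ha
    have hb2 : ∫⁻ x, (∫⁻ ρ, ‖HH h x ρ‖ₑ ^ (2:ℝ)) ^ (q0 n / 2) ≤ (C * ENNReal.ofReal (((2:ℝ)^j) ^ ((n:ℝ)/(n+2))) * N) ^ (q0 n / 2) := by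
      refine le_trans (le_of_eq ?_) (ENNReal.rpow_le_rpow hb (by positivity : 0 ≤ q0 n / 2))
      rw [← ENNReal.rpow_mul, show 2 / q0 n * (q0 n / 2) = 1 by field_simp, ENNReal.rpow_one]
    calc _ ≤ ∫⁻ x, (K * ENNReal.ofReal ((((2:ℝ)^j)^n)⁻¹)) ^ (q0 n / 2) * (∫⁻ ρ, ‖HH h x ρ‖ₑ ^ (2:ℝ)) ^ (q0 n / 2) := by
          refine lintegral_mono fun x => ?_
          rw [← ENNReal.mul_rpow_of_nonneg _ _ (by positivity)]
          exact ENNReal.rpow_le_rpow (H j h ha x) (by positivity)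
      _ ≤ (K * ENNReal.ofReal ((((2:ℝ)^j)^n)⁻¹)) ^ (q0 n / 2) * (C * ENNReal.ofReal (((2:ℝ)^j) ^ ((n:ℝ)/(n+2))) * N) ^ (q0 n / 2) := by
          rw [lintegral_const_mul' _ _ (ENNReal.rpow_ne_top_of_nonneg (by positivity) hKt)]
          exact mul_le_mul' le_rfl hb2
      _ = (ENNReal.ofReal ((((2:ℝ)^j)^n)⁻¹) * ENNReal.ofReal (((2:ℝ)^j) ^ ((n:ℝ)/(n+2)))) ^ (q0 n / 2) * (K * C * N) ^ (q0 n / 2) := by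
          rw [← ENNReal.mul_rpow_of_nonneg _ _ (by positivity), ← ENNReal.mul_rpow_of_nonneg _ _ (by positivity)]
          congr 1; ring
      _ = (2:ℝ≥0∞) ^ (-((j:ℝ) * ((n+1:ℕ):ℝ))) * (K * C * N) ^ (q0 n / 2) := by
          congr 1
          rw [← ENNReal.ofReal_mul (by positivity), ENNReal.ofReal_rpow_of_nonneg (by positivity) (by positivity)]
          rw [show (2:ℝ≥0∞) = ENNReal.ofReal 2 by simp, ENNReal.ofReal_rpow_of_pos (by norm_num)]
          congr 1
          have h2 : (0:ℝ) < 2 := by norm_num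
          rw [← Real.rpow_natCast, ← Real.rpow_natCast, ← Real.rpow_neg_one, ← Real.rpow_mul h2.le, ← Real.rpow_mul h2.le, ← Real.rpow_mul h2.le,
            ← Real.rpow_add h2, ← Real.rpow_mul h2.le]
          congr 1
          unfold q0
          push_cast
          field_simp
          ring
      _ ≤ _ := by
          refine mul_le_mul' le_rfl (ENNReal.rpow_le_rpow ?_ (by positivity))
          exact mul_le_mul' (mul_le_mul' le_rfl le_add_self) le_rfl


lemma beta_bdd {β₀ : ℝ → ℝ} (hβ : IsBump β₀) : ∃ B, 0 ≤ B ∧ ∀ s, |β₀ s| ≤ B := by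
  obtain ⟨B, hB⟩ := (isCompact_Icc (a := (-1:ℝ)) (b := 1)).exists_bound_of_continuousOn hβ.1.continuous.continuousOn
  refine ⟨max B 0, le_max_right _ _, fun s => ?_⟩
  by_cases hs : 1 < |s|
  · rw [hβ.2.2 s hs, abs_zero]; exact le_max_right _ _
  · exact (hB s (abs_le.1 (not_lt.1 hs))).trans (le_max_left _ _)

lemma betaJ_bdd {β₀ : ℝ → ℝ} (hβ : IsBump β₀) : ∃ B, 0 ≤ B ∧ ∀ j s, |betaJ β₀ j s| ≤ B := by
  obtain ⟨B, h0, hB⟩ := beta_bdd hβ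
  refine ⟨B + B, by positivity, fun j s => ?_⟩
  cases j with
  | zero => exact (hB s).trans (by linarith)
  | succ j =>
    simp only [betaJ]
    exact (abs_sub _ _).trans (add_le_add (hB _) (hB _))

lemma betaJ_cont {β₀ : ℝ → ℝ} (hβ : IsBump β₀) (j : ℕ) : Continuous (betaJ β₀ j) := by
  have := hβ.1.continuous
  cases j with
  | zero => exact this
  | succ j =>
    simp only [betaJ]
    fun_prop

lemma betaJ_supp {β₀ : ℝ → ℝ} (hβ : IsBump β₀) (j : ℕ) (s : ℝ) (hs : 0 ≤ s) (h : betaJ β₀ j s ≠ 0) :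
    s ≤ 2^j ∧ (1 ≤ j → (2:ℝ)^j/4 ≤ s) := by
  cases j with
  | zero =>
    refine ⟨?_, fun h => by omega⟩
    by_contra hc
    exact h (hβ.2.2 s (by rw [abs_of_nonneg hs]; simpa using hc))
  | succ j =>
    have e1 : (2:ℝ) ^ (-(j + 1 : ℤ)) = ((2:ℝ)^(j+1))⁻¹ := by
      rw [zpow_neg]; congr 1
    have e2 : (2:ℝ) ^ (-(j : ℤ)) = ((2:ℝ)^j)⁻¹ := by
      rw [zpow_neg, zpow_natCast]
    simp only [betaJ] at h
    rw [e1, e2] at h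
    have hp : (0:ℝ) < 2^j := by positivity
    constructor
    · by_contra hc
      push Not at hc
      apply h
      rw [hβ.2.2, hβ.2.2, sub_zero]
      · rw [abs_of_nonneg (by positivity), ← div_eq_inv_mul, lt_div_iff₀ hp]
        rw [pow_succ] at hc; linarith
      · rw [abs_of_nonneg (by positivity), ← div_eq_inv_mul, lt_div_iff₀ (by positivity)]
        linarith
    · intro _
      by_contra hc
      push Not at hc
      rw [pow_succ] at hc
      apply h
      rw [hβ.2.1, hβ.2.1, sub_self]
      · rw [abs_of_nonneg (by positivity), ← div_eq_inv_mul, div_lt_iff₀ hp]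
        linarith
      · rw [abs_of_nonneg (by positivity), ← div_eq_inv_mul, div_lt_iff₀ (by positivity), pow_succ]
        linarith

lemma lq_two (g : ℝ → ℂ) : lqNorm 2 (fun t => (‖g t‖₊ : ℝ≥0∞)) volume = (∫⁻ t, ‖g t‖ₑ ^ (2:ℝ)) ^ (1/2:ℝ) := by
  unfold lqNorm
  rw [if_neg (by simp)]
  simp only [ENNReal.toReal_ofNat]
  rfl

lemma lq_final {n : ℕ} (hn : 1 ≤ n) (q : ℝ≥0∞) (hq : ENNReal.ofReal (q0 n) ≤ q) (F : Euc (n+1) → ℝ≥0∞) (A : ℝ≥0∞) (j : ℕ)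
    (hA : A ≠ ∞)
    (h1 : ∀ x, F x ≤ A) (h2 : ∫⁻ x, F x ^ (q0 n / 2) ≤ (2:ℝ≥0∞) ^ (-((j:ℝ) * ((n+1:ℕ):ℝ))) * A ^ (q0 n / 2)) :
    lqNorm q (fun x => F x ^ (1/2:ℝ)) volume ≤ (2:ℝ≥0∞) ^ (-((j:ℝ) * ((n+1:ℕ):ℝ) / q.toReal)) * A ^ (1/2:ℝ) := by
  have hq2 := q0_gt hn
  unfold lqNorm
  by_cases hi : q = ∞
  · rw [if_pos hi, hi]
    simp only [ENNReal.toReal_top, div_zero, neg_zero, ENNReal.rpow_zero, one_mul]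
    refine essSup_le_of_ae_le _ (Filter.Eventually.of_forall fun x => ENNReal.rpow_le_rpow (h1 x) (by norm_num))
  · rw [if_neg hi]
    set p := q.toReal with hp
    have hpq : q0 n ≤ p := (ENNReal.ofReal_le_iff_le_toReal hi).1 hq
    have hp0 : 0 < p := by linarith
    rw [one_div p, ENNReal.rpow_inv_le_iff hp0]
    rw [ENNReal.mul_rpow_of_nonneg _ _ hp0.le, ← ENNReal.rpow_mul, ← ENNReal.rpow_mul,
      show -((j:ℝ) * ((n+1:ℕ):ℝ) / p) * p = -((j:ℝ) * ((n+1:ℕ):ℝ)) by field_simp]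
    calc _ ≤ ∫⁻ x, A ^ ((p - q0 n)/2) * F x ^ (q0 n / 2) := by
          refine lintegral_mono fun x => ?_
          rw [← ENNReal.rpow_mul, show 1/2 * p = (p - q0 n)/2 + q0 n / 2 by ring,
            ENNReal.rpow_add_of_nonneg _ _ (by linarith) (by linarith)]
          exact mul_le_mul' (ENNReal.rpow_le_rpow (h1 x) (by linarith)) le_rfl
      _ ≤ A ^ ((p - q0 n)/2) * ((2:ℝ≥0∞) ^ (-((j:ℝ) * ((n+1:ℕ):ℝ))) * A ^ (q0 n / 2)) := by
          rw [lintegral_const_mul' _ _ (ENNReal.rpow_ne_top_of_nonneg (by linarith) hA)]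
          exact mul_le_mul' le_rfl h2
      _ = _ := by
          rw [show 1/2 * p = (p - q0 n)/2 + q0 n / 2 by ring,
            ENNReal.rpow_add_of_nonneg _ _ (by linarith) (by linarith)]
          ring

lemma Aj_bound {n : ℕ} (hn : 1 ≤ n) (χ β₀ : ℝ → ℝ)
    (hχ : IsCutoff χ) (hβ : IsBump β₀) (q : ℝ≥0∞) (hq : ENNReal.ofReal (q0 n) ≤ q) :
    ∃ C : ℝ≥0∞, C ≠ ∞ ∧ ∀ (j : ℕ) (f : Euc (n+1) → ℂ), Integrable f → MemLp f 2 volume →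
      mixedNorm (n+1) q 2 (Aj (n+1) χ β₀ j f) ≤
        C * (2 : ℝ≥0∞) ^ (-(((j : ℝ) * ((n+1:ℕ):ℝ)) / q.toReal)) * eLpNorm f 2 volume := by
  obtain ⟨K, hK, H⟩ := main_h hn hχ
  obtain ⟨B, hB0, hB⟩ := betaJ_bdd hβ
  set k := ENNReal.ofReal B with hk
  refine ⟨(K * k ^ (2:ℝ)) ^ (1/2:ℝ), ENNReal.rpow_ne_top_of_nonneg (by norm_num) (ENNReal.mul_ne_top hK (ENNReal.rpow_ne_top_of_nonneg (by norm_num) ENNReal.ofReal_ne_top)), fun j f hf hf2 => ?_⟩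
  set h : Euc (n+1) → ℂ := fun ξ => (betaJ β₀ j ‖ξ‖ : ℂ) * 𝓕 f ξ with hh
  have hFc : Continuous (𝓕 f) := fourier_cont f hf
  have hbc := betaJ_cont hβ j
  have hcont : Continuous h := by
    have : Continuous fun ξ : Euc (n+1) => (betaJ β₀ j ‖ξ‖ : ℂ) := by fun_prop
    exact this.mul hFc
  have hpt : ∀ ξ, ‖h ξ‖ ≤ B * ‖𝓕 f ξ‖ := by
    intro ξ
    rw [hh]; simp only [norm_mul, Complex.norm_real]
    exact mul_le_mul_of_nonneg_right (hB j _) (norm_nonneg _)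
  have ha : Adm j h := by
    refine ⟨hcont.measurable, ⟨B * ∫ x, ‖f x‖, fun ξ => (hpt ξ).trans ?_⟩, fun ξ h0 => ?_⟩
    · refine mul_le_mul_of_nonneg_left ?_ hB0
      rw [ft_eq]; exact ft_le f ξ
    · refine betaJ_supp hβ j ‖ξ‖ (norm_nonneg _) ?_
      intro hz
      exact h0 (by rw [hh]; simp [hz])
  obtain ⟨H1, H2⟩ := H j h ha
  set E := eLpNorm f 2 volume with hE
  have hEt : E ≠ ∞ := hf2.2.ne
  have hN : ∫⁻ ξ, ‖h ξ‖ₑ ^ (2:ℝ) ≤ k ^ (2:ℝ) * E ^ (2:ℝ) := by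
    have e : ∫⁻ ξ, ‖𝓕 f ξ‖ₑ ^ (2:ℝ) = E ^ (2:ℝ) := by
      rw [hE, ← plancherel_eq f hf hf2, eLpNorm_eq_lintegral_rpow_enorm_toReal (by norm_num) (by norm_num)]
      simp only [ENNReal.toReal_ofNat]
      rw [← ENNReal.rpow_mul]; norm_num
    rw [← e, ← lintegral_const_mul' _ _ (ENNReal.rpow_ne_top_of_nonneg (by norm_num) ENNReal.ofReal_ne_top)]
    refine lintegral_mono fun ξ => ?_
    rw [← ENNReal.mul_rpow_of_nonneg _ _ (by norm_num)]
    refine ENNReal.rpow_le_rpow ?_ (by norm_num)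
    rw [← ofReal_norm, ← ofReal_norm, ← ENNReal.ofReal_mul hB0]
    exact ENNReal.ofReal_le_ofReal (hpt ξ)
  set A := K * (k ^ (2:ℝ) * E ^ (2:ℝ)) with hA
  have hAt : A ≠ ∞ := ENNReal.mul_ne_top hK (ENNReal.mul_ne_top (ENNReal.rpow_ne_top_of_nonneg (by norm_num) ENNReal.ofReal_ne_top) (ENNReal.rpow_ne_top_of_nonneg (by norm_num) hEt))
  have hq2 := q0_gt hn
  have L := lq_final hn q hq (fun x => ∫⁻ t, ‖(χ t : ℂ) * sphAvg (𝓕⁻ h) t x‖ₑ ^ (2:ℝ)) A j hAt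
    (fun x => (H1 x).trans (mul_le_mul' le_rfl hN))
    (H2.trans (mul_le_mul' le_rfl (ENNReal.rpow_le_rpow (mul_le_mul' le_rfl hN) (by linarith))))
  unfold mixedNorm
  simp_rw [lq_two]
  refine L.trans (le_of_eq ?_)
  rw [hA, ← mul_assoc, ENNReal.mul_rpow_of_nonneg _ _ (by norm_num), ← ENNReal.rpow_mul E]
  norm_num
  ring

lemma Aj_zero {d : ℕ} (χ β₀ : ℝ → ℝ) (j : ℕ) (f : Euc d → ℂ) (hf : ¬ Integrable f) (q : ℝ≥0∞) (hq : q ≠ 0) :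
    mixedNorm d q 2 (Aj d χ β₀ j f) = 0 := by
  have h0 : ∀ ξ, 𝓕 f ξ = 0 := by
    intro ξ
    rw [ft_eq, ft]
    refine integral_undef fun hc => hf ?_
    have hec := ee_cont
    have h2 : Continuous fun x : Euc d => ee (inner ℝ x ξ) := by fun_prop
    have h3 := hc.bdd_mul (c := 1) h2.aestronglyMeasurable (Filter.Eventually.of_forall fun x => (ee_norm _).le)
    refine h3.congr (Filter.Eventually.of_forall fun x => ?_)
    simp only
    rw [mul_left_comm, ← ee_add]
    simp [ee]
  have h1 : freqLoc d β₀ j f = fun _ => 0 := by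
    funext x
    rw [freqLoc, fi_eq]
    simp [h0]
  have h2 : ∀ x t, Aj d χ β₀ j f x t = 0 := by
    intro x t; rw [Aj, h1, sphAvg]; simp
  unfold mixedNorm
  simp_rw [lq_two, h2]
  unfold lqNorm
  by_cases hi : q = ∞
  · rw [if_pos hi]; simp
  · rw [if_neg hi]
    have : 0 < q.toReal := ENNReal.toReal_pos hq hi
    simp [this]

/-- Lemma 2.4 (Stein–Tomas estimate): for `d ≥ 2` and `2(d+1)/(d-1) ≤ q ≤ ∞`,
`‖𝒜_j f‖_{L^q(L^2)} ≲ 2^{-jd/q} ‖f‖_{L^2}` uniformly in `j ≥ 0`. -/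
theorem stein_tomas_mixed_norm (d : ℕ) (hd : 2 ≤ d) (χ β₀ : ℝ → ℝ)
    (hχ : IsCutoff χ) (hβ : IsBump β₀) (q : ℝ≥0∞)
    (hq : ENNReal.ofReal (2 * ((d : ℝ) + 1) / ((d : ℝ) - 1)) ≤ q) :
    ∃ C : ℝ≥0, ∀ (j : ℕ) (f : Euc d → ℂ),
      mixedNorm d q 2 (Aj d χ β₀ j f) ≤
        C * (2 : ℝ≥0∞) ^ (-(((j : ℝ) * d) / q.toReal)) * eLpNorm f 2 volume := by
  obtain ⟨n, rfl⟩ : ∃ n, d = n + 1 := ⟨d - 1, by omega⟩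
  have hn : 1 ≤ n := by omega
  have hq0 : ENNReal.ofReal (q0 n) ≤ q := by
    refine le_trans (le_of_eq ?_) hq
    congr 1
    unfold q0; push_cast; congr 1 <;> ring
  have hqz : q ≠ 0 := by
    intro h
    rw [h] at hq0
    have := q0_gt hn
    have h3 := ENNReal.ofReal_eq_zero.1 (le_antisymm hq0 zero_le)
    linarith
  obtain ⟨C, hC, H⟩ := Aj_bound hn χ β₀ hχ hβ q hq0
  refine ⟨C.toNNReal + 1, fun j f => ?_⟩
  have hc : ((C.toNNReal + 1 : ℝ≥0) : ℝ≥0∞) = C + 1 := by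
    push_cast; rw [ENNReal.coe_toNNReal hC]
  rw [hc]
  by_cases hf : Integrable f
  · by_cases hf2 : MemLp f 2 volume
    · refine (H j f hf hf2).trans ?_
      exact mul_le_mul' (mul_le_mul' le_self_add le_rfl) le_rfl
    · have ht : eLpNorm f 2 volume = ∞ := by
        by_contra hne
        exact hf2 ⟨hf.1, lt_top_iff_ne_top.2 hne⟩
      rw [ht, ENNReal.mul_top]
      · exact le_top
      · refine mul_ne_zero (by simp) ?_
        exact (ENNReal.rpow_pos (by norm_num) (by norm_num)).ne'
  · rw [Aj_zero χ β₀ j f hf q hqz]; exact zero_le
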